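/- There exist constants ε > 0 and K < ∞ depending only on p such that for every t > 0 and every natural number L₀: ‖ μ̃ − ν^{μ̃}_{t,L₀} ‖_TV ≤ K·e^{−ε·L₀}, where ν^{μ̃}_{t,L₀} is the law of θ_{L₀} η when the initial configuration is distributed according to μ̃ and η according to the time-t distribution, i.e. ν^{μ̃}_{t,L₀} is the pushforward under θ_{L₀} of the measure ∫ P_t(ω, ·) dμ̃(ω). (Starting from μ̃, the configuration at distance L₀ behind the front at any time t is exponentially close in total variation to μ̃ itself.) -/

import Mathlib

open MeasureTheory ProbabilityTheory Filter Topology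

noncomputable section

/-- The configuration space of the East model on `ℤ`: `0` ↔ `false` (empty), `1` ↔ `true`. -/
abbrev Config : Type := ℤ → Bool

/-- The configuration `ω` flipped at site `x`. -/
def flipAt (ω : Config) (x : ℤ) : Config := fun y => if y = x then !ω x else ω y

/-- `f` depends only on the coordinates in `S`. -/
def DependsOnF (f : Config → ℝ) (S : Set ℤ) : Prop :=
  ∀ ω ω' : Config, (∀ x ∈ S, ω x = ω' x) → f ω = f ω'

/-- The set `A` depends only on the coordinates in `S`. -/
def DependsOnSet (A : Set Config) (S : Set ℤ) : Prop :=
  ∀ ω ω' : Config, (∀ x ∈ S, ω x = ω' x) → (ω ∈ A ↔ ω' ∈ A)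

/-- A cylinder (local) function: depends on finitely many coordinates. -/
def IsCylinder (f : Config → ℝ) : Prop := ∃ S : Finset ℤ, DependsOnF f ↑S

/-- The East generator at density `p` of ones. -/
def eastGen (p : ℝ) (f : Config → ℝ) (ω : Config) : ℝ :=
  ∑' x : ℤ, (if ω (x + 1) = false then (1 : ℝ) else 0) *
    (if ω x = false then p else 1 - p) * (f (flipAt ω x) - f ω)

/-- Spatial translation: `(shift y ω) x = ω (x + y)`. -/
def shift (y : ℤ) (ω : Config) : Config := fun x => ω (x + y)

/-- Left-occupied configurations: identically `1` on a left half-line, with an empty site. -/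
def LO : Set Config := {ω | (∃ y : ℤ, ∀ x < y, ω x = true) ∧ ∃ x, ω x = false}

/-- The front: position of the left-most zero. -/
def front (ω : Config) : ℤ := sInf {x : ℤ | ω x = false}

/-- Left-occupied configurations with front at the origin. -/
def LO₀ : Set Config := {ω ∈ LO | front ω = 0}

/-- The configuration seen at distance `L` behind the front. -/
def θL (L : ℤ) (ω : Config) : Config := fun x =>
  if x < 0 then true else if x = 0 then false else ω (front ω + L + x)

/-- `f` averaged over the coordinate at site `1` w.r.t. Bernoulli(p). -/
def avg1 (p : ℝ) (f : Config → ℝ) (ω : Config) : ℝ :=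
  p * f (Function.update ω 1 true) + (1 - p) * f (Function.update ω 1 false)

/-- The East process on `ℤ` at density `p`, together with its equilibrium measure. -/
structure EastProcess where
  /-- equilibrium density of ones -/
  p : ℝ
  hp0 : 0 < p
  hp1 : p < 1
  /-- the Markov semigroup -/
  P : ℝ → Kernel Config Config
  markov : ∀ t : ℝ, IsMarkovKernel (P t)
  P0 : P 0 = Kernel.id
  semigroup : ∀ s t : ℝ, 0 ≤ s → 0 ≤ t → P (t + s) = (P s).comp (P t)
  feller : ∀ t : ℝ, 0 ≤ t → ∀ f : Config → ℝ, Continuous f →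
    Continuous fun ω : Config => ∫ η, f η ∂(P t ω)
  timeCont : ∀ f : Config → ℝ, Continuous f → ∀ ω : Config,
    Continuous fun t : ℝ => ∫ η, f η ∂(P t ω)
  shiftComm : ∀ t : ℝ, 0 ≤ t → ∀ y : ℤ, ∀ ω : Config,
    P t (shift y ω) = Measure.map (shift y) (P t ω)
  generator : ∀ f : Config → ℝ, IsCylinder f → ∀ ω : Config,
    HasDerivWithinAt (fun u : ℝ => ∫ η, f η ∂(P u ω)) (eastGen p f ω) (Set.Ici 0) 0
  /-- the product Bernoulli(p) measure -/
  μ : Measure Config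
  μprob : IsProbabilityMeasure μ
  μprod : ∀ (S : Finset ℤ) (σ : ℤ → Bool),
    μ {ω : Config | ∀ x ∈ S, ω x = σ x} = ∏ x ∈ S, ENNReal.ofReal (if σ x then p else 1 - p)
  /-- LO is stable for the dynamics -/
  loStable : ∀ t : ℝ, 0 ≤ t → ∀ ω ∈ LO, P t ω LO = 1

/-- The set of Rayleigh quotients defining the spectral gap. -/
def gapSet (E : EastProcess) : Set ℝ :=
  {r | ∃ f : Config → ℝ, IsCylinder f ∧ 0 < variance f E.μ ∧
    r = (-∫ ω, f ω * eastGen E.p f ω ∂E.μ) / variance f E.μ}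

/-- The spectral gap of the East process. -/
def gap (E : EastProcess) : ℝ := sInf (gapSet E)

/-- The product measure `μ̃`: all ones on the negative half-line, a zero at the origin,
Bernoulli(p) on the positive half-line. -/
def IsMuTilde (p : ℝ) (μt : Measure Config) : Prop :=
  IsProbabilityMeasure μt ∧
  ∀ (S : Finset ℤ) (σ : ℤ → Bool),
    μt {ω : Config | ∀ x ∈ S, ω x = σ x} =
      ∏ x ∈ S, ENNReal.ofReal
        (if x < 0 then (if σ x then 1 else 0)
         else if x = 0 then (if σ x then 0 else 1)
         else (if σ x then p else 1 - p))

/-- The law at time `t` of the process seen from the front started from `π`. -/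
def Qt (E : EastProcess) (t : ℝ) (π : Measure Config) : Measure Config :=
  Measure.map (θL 0) (π.bind fun ω => E.P t ω)


open MeasureTheory ProbabilityTheory Filter Topology
noncomputable section
namespace EP

/-- Maximum principle for finite systems of differential inequalities. -/
lemma maxP {ι : Type*} (I : Finset ι) (u u' : ℝ → ι → ℝ) (B B' : ℝ → ℝ)
    (hu : ∀ s, 0 ≤ s → ∀ i ∈ I, HasDerivAt (fun r => u r i) (u' s i) s)
    (hB : ∀ s, 0 ≤ s → HasDerivAt B (B' s) s)
    (h0 : ∀ i ∈ I, u 0 i ≤ B 0)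
    (hm : ∀ s, 0 ≤ s → ∀ i ∈ I, (∀ j ∈ I, u s j ≤ u s i) → B s ≤ u s i → u' s i ≤ B' s) :
    ∀ s, 0 ≤ s → ∀ i ∈ I, u s i ≤ B s := by
  intro s hs i hi
  by_contra! hcon
  obtain ⟨ε, hε, hεs⟩ : ∃ ε > 0, B s + ε * (1 + s) < u s i := by
    refine ⟨(u s i - B s) / (2 * (1 + s)), by apply div_pos <;> linarith, ?_⟩
    have : (u s i - B s) / (2 * (1 + s)) * (1 + s) = (u s i - B s) / 2 := by
      field_simp
    rw [this]; linarith
  set v : ℝ → ι → ℝ := fun r j => u r j - B r - ε * (1 + r) with hv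
  have hvd : ∀ r, 0 ≤ r → ∀ j ∈ I, HasDerivAt (fun r => v r j) (u' r j - B' r - ε) r := by
    intro r hr j hj
    have h1 : HasDerivAt (fun r : ℝ => ε * (1 + r)) ε r := by
      simpa using ((hasDerivAt_id r).const_add 1).const_mul ε
    exact ((hu r hr j hj).sub (hB r hr)).sub h1
  have hvc : ∀ j ∈ I, ContinuousOn (fun r => v r j) (Set.Icc 0 s) := fun j hj r hr =>
    (hvd r hr.1 j hj).continuousAt.continuousWithinAt
  set K : Set ℝ := ⋃ j ∈ I, {r ∈ Set.Icc 0 s | v r j ∈ Set.Ici (0:ℝ)} with hK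
  have hKcl : IsClosed K := by
    refine Set.Finite.isClosed_biUnion (I.finite_toSet) fun j hj => ?_
    exact (hvc j hj).preimage_isClosed_of_isClosed isClosed_Icc isClosed_Ici
  have hKne : K.Nonempty := by
    refine ⟨s, ?_⟩
    simp only [hK, Set.mem_iUnion]
    exact ⟨i, hi, ⟨hs, le_rfl⟩, by simp only [hv, Set.mem_Ici]; linarith⟩
  have hKbb : BddBelow K := ⟨0, by
    rintro r hr
    simp only [hK, Set.mem_iUnion] at hr
    obtain ⟨j, hj, hr, _⟩ := hr
    exact hr.1⟩
  have hmem := hKcl.csInf_mem hKne hKbb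
  set r := sInf K with hr
  have hmem' := hmem
  simp only [hK, Set.mem_iUnion] at hmem'
  obtain ⟨j, hj, hr0, hvj⟩ := hmem'
  replace hvj : 0 ≤ v r j := hvj
  have hrpos : 0 < r := by
    rcases hr0.1.lt_or_eq with h | h
    · exact h
    · exfalso
      rw [← h] at hvj
      have := h0 j hj
      simp only [hv] at hvj
      linarith
  have hlt : ∀ r', 0 ≤ r' → r' < r → ∀ j' ∈ I, v r' j' < 0 := by
    intro r' h1 h2 j' hj'
    by_contra! h3
    have : r' ∈ K := by
      simp only [hK, Set.mem_iUnion]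
      exact ⟨j', hj', ⟨h1, h2.le.trans hr0.2⟩, h3⟩
    exact absurd (csInf_le hKbb this) (not_le.mpr h2)
  have hev : ∀ᶠ r' in 𝓝[<] r, 0 ≤ r' ∧ r' < r := by
    have : Set.Ioo 0 r ∈ 𝓝[<] r := Ioo_mem_nhdsLT hrpos
    filter_upwards [this] with x hx using ⟨hx.1.le, hx.2⟩
  have hle : ∀ j' ∈ I, v r j' ≤ 0 := by
    intro j' hj'
    have hc : Tendsto (fun r => v r j') (𝓝[<] r) (𝓝 (v r j')) :=
      (hvd r hr0.1 j' hj').continuousAt.tendsto.mono_left nhdsWithin_le_nhds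
    refine le_of_tendsto hc ?_
    filter_upwards [hev] with x hx using (hlt x hx.1 hx.2 j' hj').le
  have hd := hm r hr0.1 j hj (fun j' hj' => by
    have := hle j' hj'
    simp only [hv] at this hvj
    linarith) (by
      simp only [hv] at hvj
      have : 0 ≤ ε * (1 + r) := by positivity
      linarith)
  have hs' := (hasDerivWithinAt_iff_tendsto_slope'
    (by simp)).1 ((hvd r hr0.1 j hj).hasDerivWithinAt (s := Set.Iio r))
  have : 0 ≤ u' r j - B' r - ε := by
    refine ge_of_tendsto hs' ?_
    filter_upwards [hev] with x hx
    rw [slope_def_field]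
    have h1 := hlt x hx.1 hx.2 j hj
    exact div_nonneg_of_nonpos (by linarith) (by linarith [hx.2])
  linarith

section sg
variable {S : Type*} [Fintype S]

/-- The semigroup generated by a linear operator on functions on a finite set. -/
def sg (A : (S → ℝ) →ₗ[ℝ] (S → ℝ)) (t : ℝ) : (S → ℝ) →L[ℝ] (S → ℝ) :=
  NormedSpace.exp (t • LinearMap.toContinuousLinearMap A)

lemma sg_zero (A : (S → ℝ) →ₗ[ℝ] (S → ℝ)) (f : S → ℝ) : sg A 0 f = f := by
  simp [sg]

lemma sg_add (A : (S → ℝ) →ₗ[ℝ] (S → ℝ)) (s t : ℝ) (f : S → ℝ) :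
    sg A (s + t) f = sg A s (sg A t f) := by
  unfold sg
  letI : NormedAlgebra ℚ ((S → ℝ) →L[ℝ] (S → ℝ)) := NormedAlgebra.restrictScalars ℚ ℝ _
  rw [add_smul, NormedSpace.exp_add_of_commute]
  · rfl
  · exact ((Commute.refl _).smul_left s).smul_right t

lemma sg_hasDerivAt' (A : (S → ℝ) →ₗ[ℝ] (S → ℝ)) (t : ℝ) (f : S → ℝ) :
    HasDerivAt (fun r => sg A r f) (A (sg A t f)) t := by
  have h := hasDerivAt_exp_smul_const' (𝕂 := ℝ) (LinearMap.toContinuousLinearMap A) t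
  exact h.clm_apply (hasDerivAt_const t f) |>.congr_deriv (by simp [sg])

lemma sg_hasDerivAt (A : (S → ℝ) →ₗ[ℝ] (S → ℝ)) (t : ℝ) (f : S → ℝ) (i : S) :
    HasDerivAt (fun r => sg A r f i) (A (sg A t f) i) t :=
  (hasDerivAt_pi.1 (sg_hasDerivAt' A t f)) i
end sg

/-- Exponentially small sequences. -/
def ExpSmall (f : ℕ → ℝ) : Prop := ∃ ε > 0, ∃ K : ℝ, 0 ≤ K ∧ ∀ d : ℕ, f d ≤ K * Real.exp (-ε * d)

lemma ExpSmall.mono {f g : ℕ → ℝ} (hg : ExpSmall g) (h : ∀ d, f d ≤ g d) : ExpSmall f := by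
  obtain ⟨ε, hε, K, hK, h1⟩ := hg
  exact ⟨ε, hε, K, hK, fun d => (h d).trans (h1 d)⟩

lemma ExpSmall.add {f g : ℕ → ℝ} (hf : ExpSmall f) (hg : ExpSmall g) :
    ExpSmall (fun d => f d + g d) := by
  obtain ⟨ε, hε, K, hK, h1⟩ := hf
  obtain ⟨ε', hε', K', hK', h2⟩ := hg
  refine ⟨min ε ε', lt_min hε hε', K + K', by positivity, fun d => ?_⟩
  have e1 : Real.exp (-ε * d) ≤ Real.exp (-(min ε ε') * d) := by
    apply Real.exp_le_exp.2
    have := min_le_left ε ε'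
    have hd : (0:ℝ) ≤ d := Nat.cast_nonneg d
    nlinarith
  have e2 : Real.exp (-ε' * d) ≤ Real.exp (-(min ε ε') * d) := by
    apply Real.exp_le_exp.2
    have := min_le_right ε ε'
    have hd : (0:ℝ) ≤ d := Nat.cast_nonneg d
    nlinarith
  calc f d + g d ≤ K * Real.exp (-ε * d) + K' * Real.exp (-ε' * d) := add_le_add (h1 d) (h2 d)
    _ ≤ K * Real.exp (-(min ε ε') * d) + K' * Real.exp (-(min ε ε') * d) := by gcongr
    _ = _ := by ring

lemma ExpSmall.const_mul {f : ℕ → ℝ} (c : ℝ) (hc : 0 ≤ c) (hf : ExpSmall f) :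
    ExpSmall (fun d => c * f d) := by
  obtain ⟨ε, hε, K, hK, h1⟩ := hf
  refine ⟨ε, hε, c * K, by positivity, fun d => ?_⟩
  rw [mul_assoc]
  exact mul_le_mul_of_nonneg_left (h1 d) hc

lemma ExpSmall.nat_mul {f : ℕ → ℝ} (hf : ExpSmall f) :
    ExpSmall (fun d => (d : ℝ) * f d) := by
  obtain ⟨ε, hε, K, hK, h1⟩ := hf
  refine ⟨ε / 2, by positivity, K * (2 / ε), by positivity, fun d => ?_⟩
  have hd : (0:ℝ) ≤ d := Nat.cast_nonneg d
  have h2 : (d : ℝ) ≤ 2 / ε * Real.exp (ε / 2 * d) := by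
    have := Real.add_one_le_exp (ε / 2 * d)
    rw [div_mul_eq_mul_div, le_div_iff₀ hε]
    nlinarith
  calc (d : ℝ) * f d ≤ d * (K * Real.exp (-ε * d)) := mul_le_mul_of_nonneg_left (h1 d) hd
    _ ≤ (2 / ε * Real.exp (ε / 2 * d)) * (K * Real.exp (-ε * d)) := by gcongr
    _ = K * (2 / ε) * (Real.exp (ε / 2 * d) * Real.exp (-ε * d)) := by ring
    _ = _ := by rw [← Real.exp_add]; congr 2; ring

lemma ExpSmall.exp {ε c : ℝ} (hε : 0 < ε) : ExpSmall (fun d => Real.exp (c - ε * d)) :=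
  ⟨ε, hε, Real.exp c, (Real.exp_pos _).le, fun d => by
    rw [← Real.exp_add]
    apply le_of_eq
    show Real.exp (c - ε * d) = _
    congr 1
    ring⟩

end EP
end

open MeasureTheory ProbabilityTheory Filter Topology
noncomputable section
namespace EP

/-- Finite-volume configurations on `[a,b]`. -/
abbrev St (a b : ℤ) : Type := {x : ℤ // x ∈ Finset.Icc a b} → Bool

/-- Extension of a finite-volume configuration: ones to the left, zeros to the right. -/
def rd {a b : ℤ} (ω : St a b) : Config := fun x =>
  if h : x ∈ Finset.Icc a b then ω ⟨x, h⟩ else decide (x < a)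

/-- Set the value at site `x` to `c`. -/
def upd {a b : ℤ} (x : ℤ) (c : Bool) (ω : St a b) : St a b := fun i => if i.1 = x then c else ω i

variable {a b : ℤ}

lemma rd_upd (x : ℤ) (c : Bool) (ω : St a b) (y : ℤ) :
    rd (upd x c ω) y = if y = x ∧ x ∈ Finset.Icc a b then c else rd ω y := by
  unfold rd upd
  by_cases h : y ∈ Finset.Icc a b
  · by_cases hxy : y = x
    · subst hxy; simp [h]
    · simp [h, hxy]
  · by_cases hxy : y = x
    · subst hxy; simp [h]
    · simp [h, hxy]

lemma rd_upd_ne {x y : ℤ} (h : y ≠ x) (c : Bool) (ω : St a b) :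
    rd (upd x c ω) y = rd ω y := by rw [rd_upd]; simp [h]

lemma rd_upd_same {x : ℤ} (h : x ∈ Finset.Icc a b) (c : Bool) (ω : St a b) :
    rd (upd x c ω) x = c := by rw [rd_upd]; simp [h]

lemma rd_left {x : ℤ} (h : x < a) (ω : St a b) : rd ω x = true := by
  unfold rd; rw [dif_neg (by simp; omega)]; simp [h]

lemma rd_right (hab : a ≤ b + 1) {x : ℤ} (h : b < x) (ω : St a b) : rd ω x = false := by
  unfold rd; rw [dif_neg (by simp; omega)]; simp; omega

lemma st_ext {ω ω' : St a b} (h : ∀ x, rd ω x = rd ω' x) : ω = ω' := by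
  funext i
  have := h i.1
  unfold rd at this
  simpa [i.2] using this

lemma upd_upd (x : ℤ) (c c' : Bool) (ω : St a b) : upd x c (upd x c' ω) = upd x c ω := by
  funext i; simp only [upd]; split_ifs <;> rfl

lemma upd_comm {x y : ℤ} (h : x ≠ y) (c c' : Bool) (ω : St a b) :
    upd x c (upd y c' ω) = upd y c' (upd x c ω) := by
  funext i; simp only [upd]; split_ifs with h1 h2 <;> first | rfl | omega

lemma upd_out {x : ℤ} (h : x ∉ Finset.Icc a b) (c : Bool) (ω : St a b) : upd x c ω = ω := by
  funext i; simp only [upd]; split_ifs with h1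
  · exact absurd (h1 ▸ i.2) h
  · rfl

lemma upd_self (x : ℤ) (ω : St a b) : upd x (rd ω x) ω = ω := by
  apply st_ext; intro y; rw [rd_upd]; split_ifs with h
  · rw [h.1]
  · rfl

/-- Resampling of the site `x`. -/
def Ex (p : ℝ) (x : ℤ) (f : St a b → ℝ) (ω : St a b) : ℝ :=
  p * f (upd x true ω) + (1 - p) * f (upd x false ω)

/-- `f` does not depend on the site `x`. -/
def Ind (x : ℤ) (f : St a b → ℝ) : Prop := ∀ ω c, f (upd x c ω) = f ω

/-- The constraint at `x`. -/
def cc (x : ℤ) (ω : St a b) : ℝ := if rd ω (x + 1) = false then 1 else 0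

lemma cc_nonneg (x : ℤ) (ω : St a b) : 0 ≤ cc x ω := by unfold cc; split_ifs <;> norm_num
lemma cc_le_one (x : ℤ) (ω : St a b) : cc x ω ≤ 1 := by unfold cc; split_ifs <;> norm_num

lemma cc_ind {x z : ℤ} (h : z ≠ x + 1) : Ind z (cc x : St a b → ℝ) := by
  intro ω c; unfold cc; rw [rd_upd_ne (Ne.symm h)]

lemma ind_out {x : ℤ} (h : x ∉ Finset.Icc a b) (f : St a b → ℝ) : Ind x f := fun ω c => by
  rw [upd_out h]

lemma Ex_ind (p : ℝ) (x : ℤ) (f : St a b → ℝ) : Ind x (Ex p x f) := fun ω c => by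
  simp only [Ex, upd_upd]

lemma Ind.ex {p : ℝ} {x : ℤ} {f : St a b → ℝ} (h : Ind x f) : Ex p x f = f := by
  funext ω; simp only [Ex, h ω]; ring

lemma ind_of_ex {p : ℝ} {x : ℤ} {f : St a b → ℝ} (h : Ex p x f = f) : Ind x f := by
  rw [← h]; exact Ex_ind p x f

lemma Ex_comm (p : ℝ) (x y : ℤ) (f : St a b → ℝ) : Ex p x (Ex p y f) = Ex p y (Ex p x f) := by
  by_cases h : x = y
  · rw [h]
  · funext ω; simp only [Ex, upd_comm h]; ring

lemma Ind.exn {p : ℝ} {x : ℤ} {f : St a b → ℝ} (h : Ind x f) (y : ℤ) : Ind x (Ex p y f) := by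
  by_cases hxy : x = y
  · subst hxy; exact Ex_ind _ _ _
  · intro ω c; simp only [Ex, upd_comm (Ne.symm hxy), h _ c]

lemma Ex_mul_left {p : ℝ} {x : ℤ} {f : St a b → ℝ} (h : Ind x f) (g : St a b → ℝ) (ω : St a b) :
    Ex p x (fun ω => f ω * g ω) ω = f ω * Ex p x g ω := by
  simp only [Ex, h ω]; ring

lemma Ex_le {p : ℝ} (hp0 : 0 ≤ p) (hp1 : p ≤ 1) {x : ℤ} {f : St a b → ℝ} {ω : St a b} {c : ℝ}
    (h : ∀ e, f (upd x e ω) ≤ c) : Ex p x f ω ≤ c := by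
  have h1 := mul_le_mul_of_nonneg_left (h true) hp0
  have h2 := mul_le_mul_of_nonneg_left (h false) (sub_nonneg.2 hp1)
  unfold Ex; linarith

lemma Ex_mono {p : ℝ} (hp0 : 0 ≤ p) (hp1 : p ≤ 1) {x : ℤ} {f g : St a b → ℝ} {ω : St a b}
    (h : ∀ e, f (upd x e ω) ≤ g (upd x e ω)) : Ex p x f ω ≤ Ex p x g ω := by
  have h1 := mul_le_mul_of_nonneg_left (h true) hp0
  have h2 := mul_le_mul_of_nonneg_left (h false) (sub_nonneg.2 hp1)
  unfold Ex; linarith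

lemma Ex_abs_le {p : ℝ} (hp0 : 0 ≤ p) (hp1 : p ≤ 1) {x : ℤ} {f : St a b → ℝ} {ω : St a b} {c : ℝ}
    (h : ∀ e, |f (upd x e ω)| ≤ c) : |Ex p x f ω| ≤ c := by
  have h3 := abs_le.1 (h true)
  have h4 := abs_le.1 (h false)
  unfold Ex
  rw [abs_le]
  constructor <;> nlinarith

/-- Finite-volume East generator with killing `V`. -/
def gen (p : ℝ) (V : St a b → ℝ) : (St a b → ℝ) →ₗ[ℝ] (St a b → ℝ) where
  toFun f := fun ω => (∑ x ∈ Finset.Icc a b, cc x ω * (Ex p x f ω - f ω)) - V ω * f ω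
  map_add' f g := by
    funext ω
    simp only [Pi.add_apply]
    have : ∀ x, cc x ω * (Ex p x (f + g) ω - (f ω + g ω)) =
      cc x ω * (Ex p x f ω - f ω) + cc x ω * (Ex p x g ω - g ω) := by
      intro x; simp only [Ex, Pi.add_apply]; ring
    simp only [this, Finset.sum_add_distrib]; ring
  map_smul' r f := by
    funext ω
    simp only [Pi.smul_apply, smul_eq_mul, RingHom.id_apply]
    have : ∀ x, cc x ω * (Ex p x (r • f) ω - (r * f ω)) =
      r * (cc x ω * (Ex p x f ω - f ω)) := by
      intro x; simp only [Ex, Pi.smul_apply, smul_eq_mul]; ring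
    simp only [this, ← Finset.mul_sum]; ring

lemma gen_apply (p : ℝ) (V : St a b → ℝ) (f : St a b → ℝ) (ω : St a b) : gen p V f ω =
    (∑ x ∈ Finset.Icc a b, cc x ω * (Ex p x f ω - f ω)) - V ω * f ω := rfl

/-- Finite-volume killed semigroup. -/
abbrev PV (p : ℝ) (V : St a b → ℝ) (t : ℝ) : (St a b → ℝ) →L[ℝ] (St a b → ℝ) := sg (gen p V) t

section
variable {p : ℝ} (hp0 : 0 ≤ p) (hp1 : p ≤ 1) {V : St a b → ℝ} (hV : ∀ ω, 0 ≤ V ω)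
include hp0 hp1

lemma sum_max_nonpos {u : St a b → ℝ} {ω : St a b} (h : ∀ ω', u ω' ≤ u ω) :
    (∑ x ∈ Finset.Icc a b, cc x ω * (Ex p x u ω - u ω)) ≤ 0 :=
  Finset.sum_nonpos fun x _ => mul_nonpos_of_nonneg_of_nonpos (cc_nonneg x ω)
    (sub_nonpos.2 (Ex_le hp0 hp1 fun e => h _))

/-- Comparison: time dependent subsolutions. -/
lemma comp_le {u F : ℝ → St a b → ℝ} {B B' : ℝ → ℝ}
    (hV : ∀ ω, 0 ≤ V ω)
    (hu : ∀ s, 0 ≤ s → ∀ ω, HasDerivAt (fun r => u r ω) (gen p V (u s) ω + F s ω) s)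
    (hF : ∀ s, 0 ≤ s → ∀ ω, F s ω ≤ B' s)
    (hB : ∀ s, 0 ≤ s → HasDerivAt B (B' s) s) (hB0 : ∀ s, 0 ≤ s → 0 ≤ B s)
    (h0 : ∀ ω, u 0 ω ≤ B 0) : ∀ s, 0 ≤ s → ∀ ω, u s ω ≤ B s := by
  intro s hs ω
  refine maxP Finset.univ u _ B B' (fun s hs ω _ => hu s hs ω) hB (fun ω _ => h0 ω) ?_ s hs ω
    (Finset.mem_univ _)
  intro s hs ω _ hmax hBu
  have h1 := sum_max_nonpos hp0 hp1 (u := u s) (ω := ω) fun ω' => hmax ω' (Finset.mem_univ _)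
  have h2 := hF s hs ω
  have h3 := mul_nonneg (hV ω) ((hB0 s hs).trans hBu)
  rw [gen_apply]; linarith

include hV in
lemma PV_le {f : St a b → ℝ} {c : ℝ} (hc : 0 ≤ c) (hf : ∀ ω, f ω ≤ c) {t : ℝ} (ht : 0 ≤ t)
    (ω : St a b) : PV p V t f ω ≤ c := by
  refine comp_le hp0 hp1 (u := fun s => PV p V s f) (F := fun _ _ => 0) (B := fun _ => c)
    (B' := fun _ => 0) hV ?_ ?_ ?_ ?_ ?_ t ht ω
  · intro s _ ω; simpa using sg_hasDerivAt (gen p V) s f ω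
  · intros; exact le_rfl
  · intro s _; exact hasDerivAt_const s c
  · intros; exact hc
  · intro ω; simpa [sg_zero] using hf ω

include hV in
lemma PV_nonneg {f : St a b → ℝ} (hf : ∀ ω, 0 ≤ f ω) {t : ℝ} (ht : 0 ≤ t)
    (ω : St a b) : 0 ≤ PV p V t f ω := by
  have := PV_le hp0 hp1 hV (f := -f) le_rfl (fun ω => by simpa using hf ω) ht ω
  simpa using this

include hV in
lemma PV_mono {f g : St a b → ℝ} (hf : ∀ ω, f ω ≤ g ω) {t : ℝ} (ht : 0 ≤ t)
    (ω : St a b) : PV p V t f ω ≤ PV p V t g ω := by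
  have := PV_nonneg hp0 hp1 hV (f := g - f) (fun ω => by simpa using hf ω) ht ω
  simpa using this

include hV in
lemma PV_abs {f : St a b → ℝ} {c : ℝ} (hf : ∀ ω, |f ω| ≤ c) {t : ℝ} (ht : 0 ≤ t)
    (ω : St a b) : |PV p V t f ω| ≤ c := by
  have hc : 0 ≤ c := (abs_nonneg _).trans (hf ω)
  rw [abs_le]
  have h1 := PV_le hp0 hp1 hV (f := f) hc (fun ω => (abs_le.1 (hf ω)).2) ht ω
  have h2 := PV_le hp0 hp1 hV (f := -f) hc (fun ω => by
    have := (abs_le.1 (hf ω)).1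
    simp only [Pi.neg_apply]; linarith) ht ω
  simp only [map_neg, Pi.neg_apply] at h2
  constructor <;> linarith

lemma P_const (c : ℝ) {t : ℝ} (ht : 0 ≤ t) (ω : St a b) :
    PV p (fun _ => (0:ℝ)) t (fun _ => c) ω = c := by
  have key : ∀ ω, PV p (fun _ => (0:ℝ)) t (fun _ : St a b => (1:ℝ)) ω = 1 := by
    intro ω
    have h : ∀ s : ℝ, ∀ ω : St a b, HasDerivAt
        (fun r => PV p (fun _ => (0:ℝ)) r (fun _ : St a b => (1:ℝ)) ω - 1)
        (gen p (fun _ => (0:ℝ)) (fun ω => PV p (fun _ => (0:ℝ)) s (fun _ : St a b => (1:ℝ)) ω - 1) ω)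
        s := by
      intro s ω
      have := (sg_hasDerivAt (gen p (fun _ => (0:ℝ))) s (fun _ : St a b => (1:ℝ)) ω).sub_const 1
      refine this.congr_deriv ?_
      simp only [gen_apply, Ex]
      congr 1
      · refine Finset.sum_congr rfl fun x _ => ?_
        ring
      · ring
    have h1 := comp_le hp0 hp1 (V := fun _ => (0:ℝ))
      (u := fun s ω => PV p (fun _ => (0:ℝ)) s (fun _ : St a b => (1:ℝ)) ω - 1) (F := fun _ _ => 0)
      (B := fun _ => 0) (B' := fun _ => 0) (fun _ => le_rfl)
      (fun s _ ω => by simpa using h s ω) (fun _ _ _ => le_rfl) (fun s _ => hasDerivAt_const s _)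
      (fun _ _ => le_rfl) (fun ω => by simp [sg_zero]) t ht ω
    have h2 := comp_le hp0 hp1 (V := fun _ => (0:ℝ))
      (u := fun s ω => -(PV p (fun _ => (0:ℝ)) s (fun _ : St a b => (1:ℝ)) ω - 1))
      (F := fun _ _ => 0)
      (B := fun _ => 0) (B' := fun _ => 0) (fun _ => le_rfl)
      (fun s _ ω => by
        have := (h s ω).neg
        refine this.congr_deriv ?_
        have e := congrFun (map_neg (gen p (fun _ => (0:ℝ)))
          (fun ω => PV p (fun _ => (0:ℝ)) s (fun _ : St a b => (1:ℝ)) ω - 1)) ω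
        simp only [Pi.neg_apply] at e
        rw [add_zero, ← e]; rfl) (fun _ _ _ => le_rfl)
      (fun s _ => hasDerivAt_const s _)
      (fun _ _ => le_rfl) (fun ω => by simp [sg_zero]) t ht ω
    linarith
  have : (fun _ : St a b => c) = c • (fun _ : St a b => (1:ℝ)) := by funext; simp
  rw [this, map_smul, Pi.smul_apply, key]; simp

/-- Gradient estimate (one sided). -/
lemma grad_aux {x : ℤ} (hVi : Ind x V) (hV : ∀ ω, 0 ≤ V ω) {f : St a b → ℝ} {β B : ℝ → ℝ}
    (hβ : ∀ s, 0 ≤ s → ∀ ω, |PV p V s f ω - Ex p (x - 1) (PV p V s f) ω| ≤ β s)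
    (hB : ∀ s, 0 ≤ s → HasDerivAt B (2 * β s) s) (hB0 : ∀ s, 0 ≤ s → 0 ≤ B s)
    (h0 : ∀ ω, f ω - Ex p x f ω ≤ B 0) :
    ∀ s, 0 ≤ s → ∀ ω, PV p V s f ω - Ex p x (PV p V s f) ω ≤ B s := by
  by_cases hx : x ∈ Finset.Icc a b
  swap
  · intro s hs ω
    rw [(ind_out hx _).ex]; simpa using hB0 s hs
  intro s hs ω
  refine maxP Finset.univ (fun s ω => PV p V s f ω - Ex p x (PV p V s f) ω)
    (fun s ω => gen p V (PV p V s f) ω - Ex p x (gen p V (PV p V s f)) ω) B (fun s => 2 * β s)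
    ?_ hB ?_ ?_ s hs ω (Finset.mem_univ _)
  · intro s hs ω _
    have h := fun ω => sg_hasDerivAt (gen p V) s f ω
    exact (h ω).sub (((h _).const_mul p).add ((h _).const_mul (1 - p)))
  · intro ω _; simpa [sg_zero] using h0 ω
  intro s hs ω _ hmax hBu
  set F := PV p V s f with hF
  set D : St a b → ℝ := fun ω => F ω - Ex p x F ω with hD
  have hDpos : 0 ≤ D ω := (hB0 s hs).trans hBu
  have hβ0 : 0 ≤ β s := (abs_nonneg _).trans (hβ s hs ω)
  have hsplit : gen p V F ω - Ex p x (gen p V F) ω =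
      (∑ z ∈ Finset.Icc a b, (cc z ω * (Ex p z F ω - F ω) -
        Ex p x (fun ω => cc z ω * (Ex p z F ω - F ω)) ω)) - V ω * D ω := by
    rw [Finset.sum_sub_distrib]
    have : Ex p x (gen p V F) ω =
      (∑ z ∈ Finset.Icc a b, Ex p x (fun ω => cc z ω * (Ex p z F ω - F ω)) ω)
        - V ω * Ex p x F ω := by
      rw [← Ex_mul_left hVi]
      simp only [Ex, gen_apply, Finset.mul_sum, mul_sub, Finset.sum_sub_distrib,
        Finset.sum_add_distrib]
      ring
    rw [this, gen_apply]; simp only [hD]; ring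
  rw [hsplit]
  have hterm : ∀ z ∈ Finset.Icc a b, (cc z ω * (Ex p z F ω - F ω) -
        Ex p x (fun ω => cc z ω * (Ex p z F ω - F ω)) ω) ≤ if z = x - 1 then 2 * β s else 0 := by
    intro z _
    by_cases hz1 : z = x - 1
    · rw [if_pos hz1]
      have hb : ∀ ω, |cc z ω * (Ex p z F ω - F ω)| ≤ β s := by
        intro ω
        rw [abs_mul, abs_of_nonneg (cc_nonneg z ω), abs_sub_comm, hz1]
        calc _ ≤ 1 * |F ω - Ex p (x - 1) F ω| :=
              mul_le_mul_of_nonneg_right (cc_le_one _ _) (abs_nonneg _)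
          _ ≤ _ := by rw [one_mul]; exact hβ s hs ω
      have h1 := (abs_le.1 (hb ω)).2
      have h2 := (abs_le.1 (Ex_abs_le hp0 hp1 (f := fun ω => cc z ω * (Ex p z F ω - F ω)) (x := x) (ω := ω)
        fun e => hb (upd x e ω))).1
      linarith
    · rw [if_neg hz1]
      by_cases hzx : z = x
      · subst hzx
        rw [Ex_mul_left (cc_ind (by omega))]
        have : Ex p z (fun ω => Ex p z F ω - F ω) ω = 0 := by
          simp only [Ex, upd_upd]; ring
        rw [this]
        have h3 := mul_nonneg (cc_nonneg z ω) hDpos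
        simp only [hD] at h3
        nlinarith
      · rw [Ex_mul_left (cc_ind (by omega)), ← mul_sub]
        refine mul_nonpos_of_nonneg_of_nonpos (cc_nonneg _ _) ?_
        have h4 : Ex p z D ω ≤ D ω := Ex_le hp0 hp1 fun e => hmax _ (Finset.mem_univ _)
        have h5 : Ex p z F ω - F ω - Ex p x (fun ω => Ex p z F ω - F ω) ω = Ex p z D ω - D ω := by
          simp only [hD, Ex, upd_comm hzx]; ring
        rw [h5]; linarith
  have hsum := Finset.sum_le_sum hterm
  have h6 : (∑ z ∈ Finset.Icc a b, if z = x - 1 then 2 * β s else 0) ≤ 2 * β s := by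
    rw [Finset.sum_ite_eq']; split_ifs
    · exact le_rfl
    · positivity
  have h7 := mul_nonneg (hV ω) hDpos
  linarith

lemma grad {x : ℤ} (hVi : Ind x V) (hV : ∀ ω, 0 ≤ V ω) {f : St a b → ℝ} {β B : ℝ → ℝ}
    (hβ : ∀ s, 0 ≤ s → ∀ ω, |PV p V s f ω - Ex p (x - 1) (PV p V s f) ω| ≤ β s)
    (hB : ∀ s, 0 ≤ s → HasDerivAt B (2 * β s) s) (hB0 : ∀ s, 0 ≤ s → 0 ≤ B s)
    (h0 : ∀ ω, |f ω - Ex p x f ω| ≤ B 0) :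
    ∀ s, 0 ≤ s → ∀ ω, |PV p V s f ω - Ex p x (PV p V s f) ω| ≤ B s := by
  intro s hs ω
  have hneg : ∀ (x : ℤ) (g : St a b → ℝ) ω, (-g) ω - Ex p x (-g) ω = -(g ω - Ex p x g ω) := by
    intro x g ω; simp only [Ex, Pi.neg_apply]; ring
  have h1 := grad_aux hp0 hp1 hVi hV hβ hB hB0 (fun ω => (abs_le.1 (h0 ω)).2) s hs ω
  have h2 := grad_aux hp0 hp1 hVi hV (f := -f) (β := β) (B := B) (fun s hs ω => by
    rw [map_neg, hneg, abs_neg]; exact hβ s hs ω) hB hB0 (fun ω => by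
    rw [hneg]; linarith [(abs_le.1 (h0 ω)).1]) s hs ω
  rw [map_neg, hneg] at h2
  rw [abs_le]; constructor <;> linarith

/-- Functions not depending on sites `< y` keep this property. -/
lemma ind_left {y : ℤ} (hV : ∀ ω, 0 ≤ V ω) (hVi : ∀ x < y, Ind x V) {f : St a b → ℝ}
    (hf : ∀ x < y, Ind x f)
    {s : ℝ} (hs : 0 ≤ s) : ∀ x < y, Ind x (PV p V s f) := by
  have key : ∀ n : ℕ, ∀ x : ℤ, x < y → x ≤ a - 1 + n → ∀ s, 0 ≤ s → Ind x (PV p V s f) := by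
    intro n
    induction n with
    | zero => intro x _ hx s _; exact ind_out (by simp; omega) _
    | succ n ih =>
      intro x hxy hx s hs
      have hm := ih (x - 1) (by omega) (by push_cast at hx; omega)
      have := grad hp0 hp1 (hVi x hxy) hV (f := f) (β := fun _ => 0) (B := fun _ => 0)
        (fun s hs ω => by rw [(hm s hs).ex]; simp) (fun s _ => by simpa using hasDerivAt_const s _)
        (fun _ _ => le_rfl) (fun ω => by rw [(hf x hxy).ex]; simp) s hs
      refine ind_of_ex (p := p) ?_
      funext ω
      have := abs_nonpos_iff.1 (this ω)
      linarith
  intro x hx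
  exact key (x - (a - 1)).toNat x hx (by omega) s hs

/-- Finite speed of propagation. -/
lemma finite_speed {z : ℤ} {f : St a b → ℝ} (hf : ∀ x, z < x → Ind x f) {c : ℝ}
    (hc : ∀ ω, |f ω| ≤ c) (j : ℕ) : ∀ s, 0 ≤ s → ∀ ω,
    |PV p (fun _ => (0:ℝ)) s f ω - Ex p (z + j) (PV p (fun _ => (0:ℝ)) s f) ω| ≤
      2 * c * ((2 * s) ^ j / j.factorial) := by
  induction j with
  | zero =>
    intro s hs ω
    have h1 := PV_abs hp0 hp1 (V := fun _ => (0:ℝ)) (fun _ => le_rfl) hc hs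
    have h2 := Ex_abs_le hp0 hp1 (x := z + (0:ℕ)) (ω := ω) fun e => h1 (upd _ e ω)
    have h3 := h1 ω
    rw [abs_le] at *
    simp only [pow_zero, Nat.factorial_zero, Nat.cast_one, div_one, mul_one]
    constructor <;> linarith [h2.1, h2.2, h3.1, h3.2]
  | succ j ih =>
    refine grad hp0 hp1 (fun _ _ => rfl) (fun _ => le_rfl)
      (β := fun s => 2 * c * ((2 * s) ^ j / j.factorial)) (fun s hs ω => ?_) (fun s _ => ?_)
      (fun s hs => ?_) (fun ω => ?_)
    · have : z + ((j + 1 : ℕ) : ℤ) - 1 = z + j := by push_cast; ring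
      rw [this]; exact ih s hs ω
    · have h1 : HasDerivAt (fun s : ℝ => (2 * s)) 2 s := by
        simpa using (hasDerivAt_id s).const_mul 2
      have h2 := ((h1.pow (j + 1)).div_const ((j + 1).factorial : ℝ)).const_mul (2 * c)
      refine h2.congr_deriv ?_
      rw [Nat.factorial_succ]
      have : (j.factorial : ℝ) ≠ 0 := by positivity
      push_cast
      field_simp
    · have hc0 : 0 ≤ c := by
        have := hc (fun _ => true); exact (abs_nonneg _).trans this
      positivity
    · rw [(hf _ (by push_cast; omega)).ex]; simp
end

end EP
end

open MeasureTheory ProbabilityTheory Filter Topology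
noncomputable section
namespace EP

/-- Cylinder events. -/
def cyl (S : Finset ℤ) (σ : ℤ → Bool) : Set Config := {ω | ∀ x ∈ S, ω x = σ x}

lemma cyl_meas (S : Finset ℤ) (σ : ℤ → Bool) : MeasurableSet (cyl S σ) := by
  have : cyl S σ = ⋂ x ∈ S, (fun ω : Config => ω x) ⁻¹' {σ x} := by
    ext ω; simp [cyl]
  rw [this]
  exact Finset.measurableSet_biInter _ fun x _ => measurable_pi_apply x (measurableSet_singleton _)

lemma cyl_ext {m m' : Measure Config} [IsFiniteMeasure m]
    (h : ∀ S σ, m (cyl S σ) = m' (cyl S σ)) : m = m' := by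
  let C : Set (Set Config) := {A | A = ∅ ∨ ∃ S σ, A = cyl S σ}
  refine ext_of_generate_finite C ?_ ?_ ?_ ?_
  · refine le_antisymm ?_ ?_
    · refine iSup_le fun x => ?_
      rw [← measurable_iff_comap_le]
      have key : ∀ c : Bool, MeasurableSet[MeasurableSpace.generateFrom C]
          ((fun ω : Config => ω x) ⁻¹' {c}) := fun c =>
        MeasurableSpace.measurableSet_generateFrom (Or.inr ⟨{x}, fun _ => c, by ext ω; simp [cyl]⟩)
      exact @measurable_to_countable' Bool Config _ _ (MeasurableSpace.generateFrom C) _ key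
    · refine MeasurableSpace.generateFrom_le ?_
      rintro A (rfl | ⟨S, σ, rfl⟩)
      · exact MeasurableSet.empty
      · exact cyl_meas S σ
  · rintro A hA B hB hne
    rcases hA with rfl | ⟨S, σ, rfl⟩
    · simp at hne
    rcases hB with rfl | ⟨S', σ', rfl⟩
    · simp at hne
    obtain ⟨ω, h1, h2⟩ := hne
    refine Or.inr ⟨S ∪ S', ω, ?_⟩
    ext η
    simp only [cyl, Set.mem_inter_iff, Set.mem_ofPred_eq, Finset.mem_union] at *
    constructor
    · rintro ⟨h3, h4⟩ x (hx | hx)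
      · rw [h3 x hx, h1 x hx]
      · rw [h4 x hx, h2 x hx]
    · intro h3
      exact ⟨fun x hx => by rw [h3 x (Or.inl hx), h1 x hx],
        fun x hx => by rw [h3 x (Or.inr hx), h2 x hx]⟩
  · rintro A (rfl | ⟨S, σ, rfl⟩)
    · simp
    · exact h S σ
  · have := h ∅ (fun _ => true)
    simpa [cyl] using this

lemma upd_measurable (x : ℤ) (c : Bool) :
    Measurable (fun η : Config => Function.update η x c) := by
  rw [measurable_pi_iff]
  intro z
  by_cases hz : z = x
  · subst hz; simp
  · simpa [Function.update_of_ne hz] using measurable_pi_apply z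

/-- Resampling invariance of product measures. -/
lemma resample {m : Measure Config} [IsProbabilityMeasure m] {w : ℤ → Bool → ℝ}
    (hm : ∀ (S : Finset ℤ) (σ : ℤ → Bool), m {ω : Config | ∀ x ∈ S, ω x = σ x} =
      ∏ x ∈ S, ENNReal.ofReal (w x (σ x))) {p : ℝ} (hp0 : 0 ≤ p) (hp1 : p ≤ 1) {x : ℤ}
    (ht : w x true = p) (hf : w x false = 1 - p) {f : Config → ℝ} (hfm : Measurable f)
    {c : ℝ} (hc : ∀ ω, |f ω| ≤ c) :
    ∫ η, f η ∂m = p * ∫ η, f (Function.update η x true) ∂m +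
      (1 - p) * ∫ η, f (Function.update η x false) ∂m := by
  have hm' : m = ENNReal.ofReal p • m.map (fun η : Config => Function.update η x true) +
      ENNReal.ofReal (1 - p) • m.map (fun η : Config => Function.update η x false) := by
    refine cyl_ext fun S σ => ?_
    rw [Measure.add_apply, Measure.smul_apply, Measure.smul_apply,
      Measure.map_apply (upd_measurable _ _) (cyl_meas _ _),
      Measure.map_apply (upd_measurable _ _) (cyl_meas _ _)]
    by_cases hx : x ∈ S
    · have h1 : ∀ d, σ x = d →
          (fun η : Config => Function.update η x d) ⁻¹' cyl S σ = cyl (S.erase x) σ := by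
        intro d hd
        ext η
        simp only [cyl, Set.mem_preimage, Set.mem_ofPred_eq, Finset.mem_erase]
        constructor
        · rintro h z ⟨hz1, hz2⟩
          have := h z hz2
          rwa [Function.update_of_ne hz1] at this
        · intro h z hz
          by_cases hzx : z = x
          · subst hzx; simp [hd]
          · rw [Function.update_of_ne hzx]; exact h z ⟨hzx, hz⟩
      have h2 : ∀ d, σ x ≠ d →
          (fun η : Config => Function.update η x d) ⁻¹' cyl S σ = ∅ := by
        intro d hd
        ext η
        simp only [cyl, Set.mem_preimage, Set.mem_ofPred_eq, Set.mem_empty_iff_false, iff_false]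
        intro h
        have := h x hx
        simp at this
        exact hd this.symm
      have h3 := hm S σ
      rw [← Finset.mul_prod_erase S _ hx] at h3
      have h4 := hm (S.erase x) σ
      change m (cyl S σ) = _ at h3
      change m (cyl (S.erase x) σ) = _ at h4
      cases hσ : σ x with
      | true =>
        rw [h1 true hσ, h2 false (by simp [hσ]), h3, h4, hσ, ht]
        simp
      | false =>
        rw [h1 false hσ, h2 true (by simp [hσ]), h3, h4, hσ, hf]
        simp
    · have h1 : ∀ d, (fun η : Config => Function.update η x d) ⁻¹' cyl S σ = cyl S σ := by
        intro d
        ext η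
        simp only [cyl, Set.mem_preimage, Set.mem_ofPred_eq]
        refine forall₂_congr fun z hz => ?_
        rw [Function.update_of_ne (show z ≠ x from fun h => hx (h ▸ hz))]
      rw [h1, h1, smul_eq_mul, smul_eq_mul, ← add_mul, ← ENNReal.ofReal_add hp0 (by linarith)]
      simp
  have hIntg : ∀ d, Integrable f (m.map (fun η : Config => Function.update η x d)) := by
    intro d
    have : IsProbabilityMeasure (m.map (fun η : Config => Function.update η x d)) :=
      Measure.isProbabilityMeasure_map (upd_measurable _ _).aemeasurable
    exact Integrable.of_bound hfm.aestronglyMeasurable c (ae_of_all _ fun ω => by simpa using hc ω)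
  conv_lhs => rw [hm']
  rw [integral_add_measure ((hIntg _).smul_measure ENNReal.ofReal_ne_top)
    ((hIntg _).smul_measure ENNReal.ofReal_ne_top), integral_smul_measure, integral_smul_measure,
    integral_map (upd_measurable _ _).aemeasurable hfm.aestronglyMeasurable,
    integral_map (upd_measurable _ _).aemeasurable hfm.aestronglyMeasurable,
    ENNReal.toReal_ofReal hp0, ENNReal.toReal_ofReal (by linarith)]
  simp

variable {a b : ℤ}

lemma Ex_add (p : ℝ) (x : ℤ) (f g : St a b → ℝ) (ω : St a b) :
    Ex p x (fun ω => f ω + g ω) ω = Ex p x f ω + Ex p x g ω := by simp only [Ex]; ring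
lemma Ex_sub (p : ℝ) (x : ℤ) (f g : St a b → ℝ) (ω : St a b) :
    Ex p x (fun ω => f ω - g ω) ω = Ex p x f ω - Ex p x g ω := by simp only [Ex]; ring
lemma Ex_const (p : ℝ) (x : ℤ) (c : ℝ) (ω : St a b) :
    Ex p x (fun _ => c) ω = c := by simp only [Ex]; ring
lemma Ex_smul (p : ℝ) (x : ℤ) (c : ℝ) (f : St a b → ℝ) (ω : St a b) :
    Ex p x (fun ω => c * f ω) ω = c * Ex p x f ω := by simp only [Ex]; ring

/-- Average over the sites `y+1,…,y+n`. -/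
def Av (p : ℝ) (y : ℤ) : ℕ → (St a b → ℝ) → St a b → ℝ
  | 0, f => f
  | n + 1, f => Ex p (y + n + 1) (Av p y n f)

lemma Av_zero (p : ℝ) (y : ℤ) (f : St a b → ℝ) : Av p y 0 f = f := rfl
lemma Av_succ (p : ℝ) (y : ℤ) (n : ℕ) (f : St a b → ℝ) :
    Av p y (n + 1) f = Ex p (y + n + 1) (Av p y n f) := rfl

lemma Av_add_index (p : ℝ) (y : ℤ) (n m : ℕ) (f : St a b → ℝ) :
    Av p y (n + m) f = Av p (y + n) m (Av p y n f) := by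
  induction m with
  | zero => rfl
  | succ m ih => 
    rw [← add_assoc, Av_succ, Av_succ, ih]
    congr 1
    push_cast; ring

lemma Av_add (p : ℝ) (y : ℤ) (n : ℕ) (f g : St a b → ℝ) (ω : St a b) :
    Av p y n (fun ω => f ω + g ω) ω = Av p y n f ω + Av p y n g ω := by
  induction n generalizing ω with
  | zero => rfl
  | succ n ih => simp only [Av_succ, Ex, ih]; ring

lemma Av_sub (p : ℝ) (y : ℤ) (n : ℕ) (f g : St a b → ℝ) (ω : St a b) :
    Av p y n (fun ω => f ω - g ω) ω = Av p y n f ω - Av p y n g ω := by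
  induction n generalizing ω with
  | zero => rfl
  | succ n ih => simp only [Av_succ, Ex, ih]; ring

lemma Av_smul (p : ℝ) (y : ℤ) (n : ℕ) (c : ℝ) (f : St a b → ℝ) (ω : St a b) :
    Av p y n (fun ω => c * f ω) ω = c * Av p y n f ω := by
  induction n generalizing ω with
  | zero => rfl
  | succ n ih => simp only [Av_succ, Ex, ih]; ring

lemma Av_sum {ι : Type*} (I : Finset ι) (p : ℝ) (y : ℤ) (n : ℕ) (f : ι → St a b → ℝ) (ω : St a b) :
    Av p y n (fun ω => ∑ i ∈ I, f i ω) ω = ∑ i ∈ I, Av p y n (f i) ω := by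
  induction n generalizing ω with
  | zero => rfl
  | succ n ih => simp only [Av_succ, Ex, ih, Finset.mul_sum, Finset.sum_add_distrib]

lemma Av_const (p : ℝ) (y : ℤ) (n : ℕ) (c : ℝ) (ω : St a b) : Av p y n (fun _ => c) ω = c := by
  induction n generalizing ω with
  | zero => rfl
  | succ n ih => simp only [Av_succ, Ex, ih]; ring

lemma Av_ex_comm (p : ℝ) (y : ℤ) (n : ℕ) (x : ℤ) (f : St a b → ℝ) :
    Av p y n (Ex p x f) = Ex p x (Av p y n f) := by
  induction n with
  | zero => rfl
  | succ n ih => rw [Av_succ, Av_succ, ih, Ex_comm]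

lemma Ind.av {p : ℝ} {x : ℤ} {f : St a b → ℝ} (h : Ind x f) (y : ℤ) (n : ℕ) :
    Ind x (Av p y n f) := by
  induction n with
  | zero => exact h
  | succ n ih => exact ih.exn _

lemma Av_ind {p : ℝ} {y : ℤ} {n : ℕ} {x : ℤ} (h1 : y < x) (h2 : x ≤ y + n) (f : St a b → ℝ) :
    Ind x (Av p y n f) := by
  induction n with
  | zero => simp at h2; omega
  | succ n ih =>
    rw [Av_succ]
    by_cases hx : x = y + n + 1
    · rw [hx]; exact Ex_ind _ _ _
    · exact (ih (by push_cast at h2; omega)).exn _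

lemma Av_absorb {p : ℝ} {y : ℤ} {n : ℕ} {x : ℤ} (h1 : y < x) (h2 : x ≤ y + n) (f : St a b → ℝ) :
    Av p y n (Ex p x f) = Av p y n f := by
  rw [Av_ex_comm, (Av_ind h1 h2 f).ex]

lemma Av_of_ind {p : ℝ} {y : ℤ} {n : ℕ} {f : St a b → ℝ}
    (h : ∀ x, y < x → x ≤ y + n → Ind x f) : Av p y n f = f := by
  induction n with
  | zero => rfl
  | succ n ih =>
    rw [Av_succ, ih fun x h1 h2 => h x h1 (by push_cast; omega), (h _ (by omega) (by push_cast; omega)).ex]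

lemma Av_mul_left {p : ℝ} {y : ℤ} {n : ℕ} {f : St a b → ℝ}
    (h : ∀ x, y < x → x ≤ y + n → Ind x f) (g : St a b → ℝ) (ω : St a b) :
    Av p y n (fun ω => f ω * g ω) ω = f ω * Av p y n g ω := by
  induction n generalizing ω with
  | zero => rfl
  | succ n ih =>
    have h1 : Av p y n (fun ω => f ω * g ω) = fun ω => f ω * Av p y n g ω :=
      funext fun ω => ih (fun x h1 h2 => h x h1 (by push_cast; omega)) ω
    rw [Av_succ, Av_succ, h1, Ex_mul_left (h _ (by omega) (by push_cast; omega))]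

section
variable {p : ℝ} (hp0 : 0 ≤ p) (hp1 : p ≤ 1)
include hp0 hp1

lemma Av_mono_at {y : ℤ} {n : ℕ} {f g : St a b → ℝ} {ω : St a b}
    (h : ∀ ω', (∀ x, (x ≤ y ∨ y + n < x) → rd ω' x = rd ω x) → f ω' ≤ g ω') :
    Av p y n f ω ≤ Av p y n g ω := by
  induction n generalizing ω with
  | zero => exact h ω fun _ _ => rfl
  | succ n ih =>
    refine Ex_mono hp0 hp1 fun e => ih fun ω' hω' => h ω' fun x hx => ?_
    rw [hω' x (by push_cast at hx; omega), rd_upd_ne (by push_cast at hx; omega)]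

lemma Av_mono {y : ℤ} {n : ℕ} {f g : St a b → ℝ} {ω : St a b}
    (h : ∀ ω', f ω' ≤ g ω') : Av p y n f ω ≤ Av p y n g ω :=
  Av_mono_at hp0 hp1 fun ω' _ => h ω'

lemma Av_le {y : ℤ} {n : ℕ} {f : St a b → ℝ} {ω : St a b} {c : ℝ}
    (h : ∀ ω', (∀ x, (x ≤ y ∨ y + n < x) → rd ω' x = rd ω x) → f ω' ≤ c) :
    Av p y n f ω ≤ c := by
  have := Av_mono_at hp0 hp1 (g := fun _ => c) h
  rwa [Av_const] at this

lemma Av_nonneg {y : ℤ} {n : ℕ} {f : St a b → ℝ} {ω : St a b}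
    (h : ∀ ω', 0 ≤ f ω') : 0 ≤ Av p y n f ω := by
  have := Av_mono hp0 hp1 (y := y) (n := n) (ω := ω) (f := fun _ => 0) h
  rwa [Av_const] at this

lemma Av_abs {y : ℤ} {n : ℕ} {f : St a b → ℝ} {ω : St a b} {c : ℝ}
    (h : ∀ ω', |f ω'| ≤ c) : |Av p y n f ω| ≤ c := by
  rw [abs_le]
  constructor
  · have := Av_mono hp0 hp1 (y := y) (n := n) (ω := ω) (f := fun _ => -c) (g := f)
      fun ω' => (abs_le.1 (h ω')).1
    rwa [Av_const] at this
  · exact Av_le hp0 hp1 fun ω' _ => (abs_le.1 (h ω')).2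

lemma Av_abs_le {y : ℤ} {n : ℕ} {f : St a b → ℝ} {ω : St a b} :
    |Av p y n f ω| ≤ Av p y n (fun ω => |f ω|) ω := by
  rw [abs_le]
  constructor
  · have := Av_mono hp0 hp1 (y := y) (n := n) (ω := ω) (f := fun ω => (-1) * |f ω|) (g := f)
      fun ω' => by have := neg_abs_le (f ω'); linarith
    rw [Av_smul] at this; linarith
  · exact Av_mono hp0 hp1 fun ω' => le_abs_self _

lemma Ex_sq_le {x : ℤ} (f : St a b → ℝ) (ω : St a b) :
    (Ex p x f ω) ^ 2 ≤ Ex p x (fun ω => f ω ^ 2) ω := by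
  simp only [Ex]
  nlinarith [mul_nonneg (mul_nonneg hp0 (sub_nonneg.2 hp1))
    (sq_nonneg (f (upd x true ω) - f (upd x false ω)))]

lemma Av_sq_le {y : ℤ} {n : ℕ} (f : St a b → ℝ) (ω : St a b) :
    (Av p y n f ω) ^ 2 ≤ Av p y n (fun ω => f ω ^ 2) ω := by
  induction n generalizing ω with
  | zero => exact le_rfl
  | succ n ih =>
    refine (Ex_sq_le hp0 hp1 _ _).trans (Ex_mono hp0 hp1 fun e => ih _)

lemma Av_ge {y : ℤ} {n : ℕ} {f : St a b → ℝ} (hf : ∀ ω, 0 ≤ f ω) (ω : St a b) :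
    (min p (1 - p)) ^ n * f ω ≤ Av p y n f ω := by
  induction n generalizing ω with
  | zero => simp [Av_zero]
  | succ n ih =>
    have hθ : 0 ≤ min p (1 - p) := le_min hp0 (by linarith)
    have h1 : min p (1 - p) * Av p y n f ω ≤ Ex p (y + n + 1) (Av p y n f) ω := by
      have hA : ∀ ω, 0 ≤ Av p y n f ω := fun ω => Av_nonneg hp0 hp1 hf
      have h2 := upd_self (y + n + 1) ω
      unfold Ex
      have hT := mul_nonneg hp0 (hA (upd (y + n + 1) true ω))
      have hF := mul_nonneg (sub_nonneg.2 hp1) (hA (upd (y + n + 1) false ω))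
      cases hc : rd ω (y + n + 1) with
      | true =>
        rw [hc] at h2; rw [h2] at hT ⊢
        have := mul_le_mul_of_nonneg_right (min_le_left p (1 - p)) (hA ω)
        linarith
      | false =>
        rw [hc] at h2; rw [h2] at hF ⊢
        have := mul_le_mul_of_nonneg_right (min_le_right p (1 - p)) (hA ω)
        linarith
    rw [Av_succ, pow_succ']
    have := mul_le_mul_of_nonneg_left (ih ω) hθ
    linarith [mul_assoc (min p (1-p)) (min p (1-p) ^ n) (f ω)]

end

/-- Dirichlet form identity inside an average. -/
lemma Av_dir {p : ℝ} {y : ℤ} {n : ℕ} {z : ℤ} (h1 : y < z) (h2 : z ≤ y + n) (G : St a b → ℝ) (ω : St a b) :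
    Av p y n (fun ω => G ω * (cc z ω * (Ex p z G ω - G ω))) ω =
      - Av p y n (fun ω => cc z ω * (G ω - Ex p z G ω) ^ 2) ω := by
  have hc : Ind z (cc z : St a b → ℝ) := cc_ind (by omega)
  have e1 : Ex p z (fun ω => G ω * (cc z ω * (Ex p z G ω - G ω))) =
      fun ω => (-1) * Ex p z (fun ω => cc z ω * (G ω - Ex p z G ω) ^ 2) ω := by
    funext ω
    simp only [Ex, upd_upd, hc ω]
    ring
  rw [← Av_absorb h1 h2, e1, Av_smul, Av_absorb h1 h2]; ring

end EP
end

open MeasureTheory ProbabilityTheory Filter Topology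
noncomputable section
namespace EP
variable {a b : ℤ}

/-- Overwrite `ω` by `η` on `(y, y+n]`. -/
def ov (y : ℤ) (n : ℕ) (ω : St a b) (η : Config) : St a b :=
  fun i => if y < i.1 ∧ i.1 ≤ y + n then η i.1 else ω i

lemma ov_meas (y : ℤ) (n : ℕ) (ω : St a b) (H : St a b → ℝ) :
    Measurable fun η => H (ov y n ω η) := by
  have h1 : Measurable fun η : Config => ov y n ω η := by
    rw [measurable_pi_iff]
    intro i
    unfold ov
    split_ifs
    · exact measurable_pi_apply _
    · exact measurable_const
  exact (measurable_of_finite H).comp h1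

lemma ov_update {y : ℤ} {n : ℕ} {x : ℤ} (h1 : y < x) (h2 : x ≤ y + n) (c : Bool) (ω : St a b)
    (η : Config) : ov y n ω (Function.update η x c) = upd x c (ov y n ω η) := by
  funext i
  simp only [ov, upd]
  by_cases hi : i.1 = x
  · simp [hi, h1, h2]
  · simp [hi]

lemma ov_succ (y : ℤ) (n : ℕ) (c : Bool) (ω : St a b) (η : Config) :
    ov y (n + 1) ω (Function.update η (y + n + 1) c) = ov y n (upd (y + n + 1) c ω) η := by
  funext i
  simp only [ov, upd]
  by_cases hi : i.1 = y + n + 1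
  · simp [hi]
  · rw [Function.update_of_ne hi, if_neg hi]
    congr 1
    push_cast
    apply propext
    omega

lemma finBound (H : St a b → ℝ) : ∃ c : ℝ, ∀ ω, |H ω| ≤ c := by
  obtain ⟨c, hc⟩ := (Set.finite_range fun ω => |H ω|).bddAbove
  exact ⟨c, fun ω => hc ⟨ω, rfl⟩⟩

lemma int_ov {m : Measure Config} [IsProbabilityMeasure m] {w : ℤ → Bool → ℝ}
    (hm : ∀ (S : Finset ℤ) (σ : ℤ → Bool), m {ω : Config | ∀ x ∈ S, ω x = σ x} =
      ∏ x ∈ S, ENNReal.ofReal (w x (σ x))) {p : ℝ} (hp0 : 0 ≤ p) (hp1 : p ≤ 1) {y : ℤ}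
    (hw : ∀ x, y < x → w x true = p ∧ w x false = 1 - p) (n : ℕ) (H : St a b → ℝ) (ω : St a b) :
    ∫ η, H (ov y n ω η) ∂m = Av p y n H ω := by
  induction n generalizing ω with
  | zero =>
    have : ∀ η, ov y 0 ω η = ω := by
      intro η; funext i; unfold ov; rw [if_neg]; simp
    simp [this, Av_zero]
  | succ n ih =>
    obtain ⟨c, hc⟩ := finBound H
    have hx := hw (y + n + 1) (by omega)
    rw [resample hm hp0 hp1 hx.1 hx.2 (ov_meas y (n + 1) ω H) (fun η => hc _)]
    simp only [ov_succ, ih]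
    rfl

/-- `cc` on the infinite lattice. -/
def ci (x : ℤ) (η : Config) : ℝ := if η (x + 1) = false then 1 else 0

lemma ci_meas (x : ℤ) : Measurable (ci x) := by
  unfold ci
  refine Measurable.ite ?_ measurable_const measurable_const
  exact measurableSet_eq_fun (measurable_pi_apply (x + 1)) measurable_const

/-- Resampling on the infinite lattice. -/
def Ec (p : ℝ) (x : ℤ) (f : Config → ℝ) (η : Config) : ℝ :=
  p * f (Function.update η x true) + (1 - p) * f (Function.update η x false)

lemma flip_eq (p : ℝ) (x : ℤ) (f : Config → ℝ) (η : Config) :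
    (if η x = false then p else 1 - p) * (f (flipAt η x) - f η) = Ec p x f η - f η := by
  have h0 : flipAt η x = Function.update η x (!η x) := by
    funext z; unfold flipAt
    by_cases hz : z = x
    · subst hz; simp
    · simp [hz]
  have h1 : Function.update η x (η x) = η := Function.update_eq_self x η
  rw [h0]; unfold Ec
  cases hc : η x with
  | true => rw [hc] at h1; rw [h1]; simp; ring
  | false => rw [hc] at h1; rw [h1]; simp; ring

lemma eastGen_eq {p : ℝ} {f : Config → ℝ} {S : Finset ℤ} (hf : DependsOnF f S) (η : Config) :
    eastGen p f η = ∑ x ∈ S, ci x η * (Ec p x f η - f η) := by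
  unfold eastGen
  rw [tsum_eq_sum (s := S)]
  · refine Finset.sum_congr rfl fun x _ => ?_
    rw [mul_assoc, flip_eq]; rfl
  · intro x hx
    have : f (flipAt η x) = f η := by
      refine hf _ _ fun z hz => ?_
      unfold flipAt; rw [if_neg]; rintro rfl; exact hx hz
    rw [this]; simp

lemma gap_le (E : EastProcess) (hgap : 0 < gap E) {f : Config → ℝ} (hf : IsCylinder f)
    (hv : 0 < variance f E.μ) :
    gap E * variance f E.μ ≤ -∫ ω, f ω * eastGen E.p f ω ∂E.μ := by
  have hb : BddBelow (gapSet E) := by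
    by_contra h
    unfold gap at hgap
    rw [Real.sInf_of_not_bddBelow h] at hgap
    exact lt_irrefl _ hgap
  have : gap E ≤ _ := csInf_le hb ⟨f, hf, hv, rfl⟩
  rwa [le_div_iff₀ hv] at this

/-- Poincaré inequality in finite volume. -/
lemma poincare (E : EastProcess) (hgap : 0 < gap E) {y : ℤ} {n : ℕ} (hy : a - 1 ≤ y)
    (hn : y + n ≤ b) (G : St a b → ℝ) (ω : St a b) (hω : rd ω (y + n + 1) = false) :
    gap E * (Av E.p y n (fun ω => G ω ^ 2) ω - (Av E.p y n G ω) ^ 2) ≤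
      ∑ z ∈ Finset.Icc (y + 1) (y + n),
        Av E.p y n (fun ω => cc z ω * (G ω - Ex E.p z G ω) ^ 2) ω := by
  have hp0 := E.hp0.le
  have hp1 := E.hp1.le
  have := E.μprob
  set p := E.p with hp
  have hI : ∀ H : St a b → ℝ, ∫ η, H (ov y n ω η) ∂E.μ = Av p y n H ω := fun H =>
    int_ov (w := fun _ c => if c then p else 1 - p) E.μprod hp0 hp1 (fun x _ => by simp) n H ω
  have hIntg : ∀ H : St a b → ℝ, Integrable (fun η => H (ov y n ω η)) E.μ := fun H => by
    obtain ⟨c, hc⟩ := finBound H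
    exact Integrable.of_bound (ov_meas y n ω H).aestronglyMeasurable c
      (ae_of_all _ fun η => by simpa using hc _)
  set F : Config → ℝ := fun η => G (ov y n ω η) with hF
  set S := Finset.Icc (y + 1) (y + n) with hS
  have hdep : DependsOnF F S := by
    intro η η' h
    simp only [hF]; congr 1; funext i; unfold ov; split_ifs with hi
    · exact h _ (by simp [hS]; omega)
    · rfl
  have hvar : variance F E.μ = Av p y n (fun ω => G ω ^ 2) ω - (Av p y n G ω) ^ 2 := by
    obtain ⟨c, hc⟩ := finBound G
    rw [variance_eq_sub (MemLp.of_bound (ov_meas y n ω G).aestronglyMeasurable c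
      (ae_of_all _ fun η => by simpa using hc _)), ← hI, ← hI]
    rfl
  have hrhs : ∀ z, 0 ≤ Av p y n (fun ω => cc z ω * (G ω - Ex p z G ω) ^ 2) ω := fun z =>
    Av_nonneg hp0 hp1 fun ω => mul_nonneg (cc_nonneg _ _) (sq_nonneg _)
  rw [← hvar]
  rcases (variance_nonneg F E.μ).eq_or_lt with h0 | h0
  · rw [← h0, mul_zero]; exact Finset.sum_nonneg fun z _ => hrhs z
  refine (gap_le E hgap ⟨S, hdep⟩ h0).trans ?_
  have hEc : ∀ z ∈ S, ∀ η, Ec p z F η = Ex p z G (ov y n ω η) := by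
    intro z hz η
    simp only [hS, Finset.mem_Icc] at hz
    simp only [Ec, Ex, hF, ov_update (show y < z by omega) hz.2]
  have hbd : ∀ z, ∀ H : St a b → ℝ, Measurable (fun η => ci z η * H (ov y n ω η)) ∧
      ∃ c : ℝ, ∀ η, |ci z η * H (ov y n ω η)| ≤ c := by
    intro z H
    obtain ⟨c, hc⟩ := finBound H
    refine ⟨(ci_meas z).mul (ov_meas y n ω H), c, fun η => ?_⟩
    unfold ci; split_ifs
    · simpa using hc _
    · simpa using (abs_nonneg _).trans (hc ω)
  have hint2 : ∀ z, ∀ H : St a b → ℝ, Integrable (fun η => ci z η * H (ov y n ω η)) E.μ := by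
    intro z H
    obtain ⟨h1, c, h2⟩ := hbd z H
    exact Integrable.of_bound h1.aestronglyMeasurable c (ae_of_all _ fun η => by simpa using h2 _)
  have hres : ∀ z ∈ S, ∀ H : St a b → ℝ, ∫ η, ci z η * H (ov y n ω η) ∂E.μ =
      ∫ η, ci z η * Ex p z H (ov y n ω η) ∂E.μ := by
    intro z hz H
    simp only [hS, Finset.mem_Icc] at hz
    obtain ⟨h1, c, h2⟩ := hbd z H
    rw [resample (w := fun _ c => if c then p else 1 - p) E.μprod hp0 hp1 (x := z) (by simp)
      (by simp) h1 h2]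
    have hci : ∀ e η, ci z (Function.update η z e) = ci z η := by
      intro e η; unfold ci; rw [Function.update_of_ne (by omega)]
    simp only [hci, ov_update (show y < z by omega) hz.2]
    rw [← integral_const_mul, ← integral_const_mul, ← integral_add]
    · refine integral_congr_ae (ae_of_all _ fun η => ?_)
      simp only [Ex]; ring
    · exact (hint2 z (fun ω' => H (upd z true ω'))).const_mul _
    · exact (hint2 z (fun ω' => H (upd z false ω'))).const_mul _
  have e1 : ∀ η, F η * eastGen p F η = ∑ z ∈ S, ci z η * (fun ω' => G ω' * (Ex p z G ω' - G ω'))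
      (ov y n ω η) := by
    intro η
    rw [eastGen_eq hdep, Finset.mul_sum]
    refine Finset.sum_congr rfl fun z hz => ?_
    rw [hEc z hz]; simp only [hF]; ring
  change (-∫ η, F η * eastGen p F η ∂E.μ) ≤ _
  simp_rw [e1]
  rw [integral_finsetSum _ fun z _ => hint2 z (fun ω' => G ω' * (Ex p z G ω' - G ω')),
    ← Finset.sum_neg_distrib]
  refine Finset.sum_le_sum fun z hz => ?_
  have e2 : ∀ ω', Ex p z (fun ω' => G ω' * (Ex p z G ω' - G ω')) ω' =
      - Ex p z (fun ω' => (G ω' - Ex p z G ω') ^ 2) ω' := by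
    intro ω'; simp only [Ex, upd_upd]; ring
  have e3 := hres z hz (fun ω' => G ω' * (Ex p z G ω' - G ω'))
  simp_rw [e2, mul_neg] at e3
  rw [integral_neg, ← hres z hz (fun ω' => (G ω' - Ex p z G ω') ^ 2)] at e3
  rw [e3, neg_neg, ← hI]
  refine integral_mono (hint2 z fun ω' => (G ω' - Ex p z G ω') ^ 2)
    (hIntg fun ω' => cc z ω' * (G ω' - Ex p z G ω') ^ 2) fun η => ?_
  refine mul_le_mul_of_nonneg_right ?_ (sq_nonneg _)
  simp only [hS, Finset.mem_Icc] at hz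
  unfold ci cc
  by_cases hzn : z = y + n
  · have : rd (ov y n ω η) (z + 1) = false := by
      rw [hzn, ← hω]
      unfold rd
      split_ifs with h
      · simp [ov]
      · rfl
    rw [if_pos this]; split_ifs <;> norm_num
  · have : rd (ov y n ω η) (z + 1) = η (z + 1) := by
      unfold rd
      rw [dif_pos (by simp; omega)]
      simp only [ov]; rw [if_pos (by omega)]
    rw [this]

end EP
end

open MeasureTheory ProbabilityTheory Filter Topology
noncomputable section
namespace EP
set_option linter.unusedVariables false
variable {a b : ℤ}

lemma Av_hasDerivAt (p : ℝ) (y : ℤ) (n : ℕ) {u : ℝ → St a b → ℝ} {u' : St a b → ℝ} {s : ℝ}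
    (h : ∀ ω, HasDerivAt (fun r => u r ω) (u' ω) s) (ω : St a b) :
    HasDerivAt (fun r => Av p y n (u r) ω) (Av p y n u' ω) s := by
  induction n generalizing ω with
  | zero => exact h ω
  | succ n ih =>
    exact ((ih _).const_mul p).add ((ih _).const_mul (1 - p))

/-- Index set for the n-lemma. -/
def NI (a b y : ℤ) (n0 : ℕ) : Finset (ℕ × St a b) :=
  ((Finset.range ((b - y).toNat + 1)) ×ˢ Finset.univ).filter
    fun i => n0 ≤ i.1 ∧ y + i.1 ≤ b ∧ rd i.2 (y + i.1 + 1) = false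

lemma mem_NI {y : ℤ} {n0 : ℕ} {i : ℕ × St a b} :
    i ∈ NI a b y n0 ↔ n0 ≤ i.1 ∧ y + i.1 ≤ b ∧ rd i.2 (y + i.1 + 1) = false := by
  simp only [NI, Finset.mem_filter, Finset.mem_product, Finset.mem_range, Finset.mem_univ,
    and_true]
  constructor
  · exact fun h => h.2
  · exact fun h => ⟨by omega, h⟩

section
variable {p : ℝ} (hp0 : 0 ≤ p) (hp1 : p ≤ 1)
include hp0 hp1

/-- The contribution of the sites to the right of the averaged block, at a maximum. -/
lemma right_term {y : ℤ} {n0 n : ℕ} {ω : St a b} (hi : (n, ω) ∈ NI a b y n0)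
    {H : St a b → ℝ}
    (hmax : ∀ j ∈ NI a b y n0, Av p y j.1 H j.2 ≤ Av p y n H ω) {z : ℤ} (hz : y + n < z)
    (hzb : z ≤ b) : cc z ω * (Ex p z (Av p y n H) ω - Av p y n H ω) ≤ 0 := by
  rw [mem_NI] at hi
  by_cases hc : rd ω (z + 1) = false
  · refine mul_nonpos_of_nonneg_of_nonpos (cc_nonneg _ _) (sub_nonpos.2 ?_)
    by_cases hz1 : z = y + n + 1
    · have := hmax (n + 1, ω) (mem_NI.2 ⟨by simp only; omega, by push_cast; omega, by
        push_cast; rw [← add_assoc, ← hz1]; exact hc⟩)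
      rw [hz1]; exact this
    · refine Ex_le hp0 hp1 fun e => hmax (n, upd z e ω) (mem_NI.2 ⟨hi.1, hi.2.1, ?_⟩)
      rw [rd_upd_ne (by simp only; omega)]; exact hi.2.2
  · unfold cc; rw [if_neg hc, zero_mul]

lemma mlem {y : ℤ} (hy : a - 1 ≤ y) {g : St a b → ℝ} (hg : ∀ x < y + 1, Ind x g) {n0 : ℕ}
    (h0 : ∀ i ∈ NI a b y n0, Av p y i.1 g i.2 ≤ 0) :
    ∀ s, 0 ≤ s → ∀ i ∈ NI a b y n0, Av p y i.1 (PV p (fun _ => (0:ℝ)) s g) i.2 ≤ 0 := by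
  refine maxP (NI a b y n0) (fun s i => Av p y i.1 (PV p (fun _ => (0:ℝ)) s g) i.2)
    (fun s i => Av p y i.1 (gen p (fun _ => (0:ℝ)) (PV p (fun _ => (0:ℝ)) s g)) i.2)
    (fun _ => 0) (fun _ => 0) ?_ (fun s _ => hasDerivAt_const s _) ?_ ?_
  · intro s _ i _
    exact Av_hasDerivAt p y i.1 (fun ω => sg_hasDerivAt _ s g ω) i.2
  · intro i hi; simpa [sg_zero] using h0 i hi
  rintro s hs ⟨n, ω⟩ hi hmax _
  have hG := ind_left hp0 hp1 (V := fun _ => (0:ℝ)) (fun _ => le_rfl) (fun _ _ _ _ => rfl) hg hs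
  set G := PV p (fun _ => (0:ℝ)) s g with hGd
  have e : Av p y n (gen p (fun _ => (0:ℝ)) G) ω =
      ∑ z ∈ Finset.Icc a b, Av p y n (fun ω => cc z ω * (Ex p z G ω - G ω)) ω := by
    rw [← Av_sum]; congr 1; funext ω; rw [gen_apply]; ring
  simp only at hmax ⊢
  rw [e]
  refine Finset.sum_nonpos fun z hz => ?_
  rw [Finset.mem_Icc] at hz
  by_cases h1 : z ≤ y
  · rw [(hG z (by omega)).ex]; simp [Av_const]
  by_cases h2 : z ≤ y + n
  · rw [← Av_absorb (by omega) h2]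
    have : Ex p z (fun ω => cc z ω * (Ex p z G ω - G ω)) = fun _ => 0 := by
      funext ω
      rw [Ex_mul_left (cc_ind (by omega)), Ex_sub, (Ex_ind p z G).ex]; ring
    rw [this, Av_const]
  · rw [Av_mul_left (fun x _ _ => cc_ind (by omega)), Av_sub, Av_ex_comm]
    exact right_term hp0 hp1 hi hmax (by omega) hz.2

lemma nlem {y : ℤ} (hy : a - 1 ≤ y) {V : St a b → ℝ} (hV : ∀ ω, 0 ≤ V ω)
    (hVi : ∀ x < y + 1, Ind x V) {g : St a b → ℝ} (hg : ∀ x < y + 1, Ind x g) {n0 : ℕ}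
    {lam M : ℝ} (hlam : 0 ≤ lam)
    (hco : ∀ s, 0 ≤ s → ∀ i ∈ NI a b y n0, lam * Av p y i.1 (fun ω => PV p V s g ω ^ 2) i.2 ≤
      (∑ z ∈ Finset.Icc (y + 1) (y + i.1), Av p y i.1
        (fun ω => cc z ω * (PV p V s g ω - Ex p z (PV p V s g) ω) ^ 2) i.2) +
      Av p y i.1 (fun ω => V ω * PV p V s g ω ^ 2) i.2)
    (h0 : ∀ i ∈ NI a b y n0, Av p y i.1 (fun ω => g ω ^ 2) i.2 ≤ M) :
    ∀ s, 0 ≤ s → ∀ i ∈ NI a b y n0, Av p y i.1 (fun ω => PV p V s g ω ^ 2) i.2 ≤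
      M * Real.exp (-2 * lam * s) := by
  refine maxP (NI a b y n0) (fun s i => Av p y i.1 (fun ω => PV p V s g ω ^ 2) i.2)
    (fun s i => Av p y i.1 (fun ω => 2 * (PV p V s g ω * gen p V (PV p V s g) ω)) i.2)
    (fun s => M * Real.exp (-2 * lam * s)) (fun s => (-2 * lam) * (M * Real.exp (-2 * lam * s)))
    ?_ ?_ ?_ ?_
  · intro s _ i _
    refine Av_hasDerivAt p y i.1 (fun ω => ?_) i.2
    have := (sg_hasDerivAt (gen p V) s g ω).pow 2
    refine this.congr_deriv ?_
    simp; ring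
  · intro s _
    have : HasDerivAt (fun s : ℝ => -2 * lam * s) (-2 * lam) s := by
      simpa using (hasDerivAt_id s).const_mul (-2 * lam)
    refine (this.exp.const_mul M).congr_deriv ?_
    ring
  · intro i hi; simpa [sg_zero] using h0 i hi
  rintro s hs ⟨n, ω⟩ hi hmax hBu
  have hG := ind_left hp0 hp1 hV hVi hg hs
  have hco' := hco s hs (n, ω) hi
  set G := PV p V s g with hGd
  simp only at hmax hco' hBu ⊢
  have e : Av p y n (fun ω => 2 * (G ω * gen p V G ω)) ω =
      2 * (∑ z ∈ Finset.Icc a b, Av p y n (fun ω => G ω * (cc z ω * (Ex p z G ω - G ω))) ω) -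
      2 * Av p y n (fun ω => V ω * G ω ^ 2) ω := by
    rw [Av_smul, ← Av_sum, ← mul_sub, ← Av_sub]; congr 2; funext ω
    rw [gen_apply, mul_sub, Finset.mul_sum]; ring
  rw [e]
  have hterm : ∀ z ∈ Finset.Icc a b,
      Av p y n (fun ω => G ω * (cc z ω * (Ex p z G ω - G ω))) ω ≤
      if z ∈ Finset.Icc (y + 1) (y + n) then
        -Av p y n (fun ω => cc z ω * (G ω - Ex p z G ω) ^ 2) ω else 0 := by
    intro z hz
    rw [Finset.mem_Icc] at hz
    by_cases h1 : z ≤ y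
    · rw [if_neg (by simp; omega), (hG z (by omega)).ex]; simp [Av_const]
    by_cases h2 : z ≤ y + n
    · rw [if_pos (by simp; omega), Av_dir (by omega) h2]
    · rw [if_neg (by simp; omega)]
      have h3 : Av p y n (fun ω => G ω * (cc z ω * (Ex p z G ω - G ω))) ω =
          cc z ω * Av p y n (fun ω => G ω * (Ex p z G ω - G ω)) ω := by
        rw [← Av_mul_left (fun x _ _ => cc_ind (by omega))]; congr 1; funext ω; ring
      have h4 : Av p y n (fun ω => G ω * (Ex p z G ω - G ω)) ω ≤
          (1/2) * (Ex p z (Av p y n (fun ω => G ω ^ 2)) ω - Av p y n (fun ω => G ω ^ 2) ω) := by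
        rw [← Av_ex_comm, ← Av_sub, ← Av_smul]
        refine Av_mono hp0 hp1 fun ω => ?_
        have := Ex_sq_le hp0 hp1 (x := z) G ω
        nlinarith [sq_nonneg (Ex p z G ω - G ω)]
      have h5 := right_term hp0 hp1 hi (H := fun ω => G ω ^ 2) hmax (z := z) (by omega) hz.2
      have h6 := mul_le_mul_of_nonneg_left h4 (cc_nonneg z ω)
      rw [h3]; linarith
  have hsum := Finset.sum_le_sum hterm
  rw [← Finset.sum_filter, Finset.sum_neg_distrib] at hsum
  have hfil : (Finset.Icc a b).filter (fun z => z ∈ Finset.Icc (y + 1) (y + n)) =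
      Finset.Icc (y + 1) (y + n) := by
    rw [mem_NI] at hi
    ext z; simp only [Finset.mem_filter, Finset.mem_Icc]
    have := hi.2.1
    simp only at this
    omega
  rw [hfil] at hsum
  have h7 := mul_le_mul_of_nonneg_left hBu hlam
  linarith
end

/-- `exp(-κ) = min p q`. -/
def kap (p : ℝ) : ℝ := - Real.log (min p (1 - p))

lemma kap_exp {p : ℝ} (hp0 : 0 < p) (hp1 : p < 1) (n : ℕ) :
    (min p (1 - p)) ^ n = Real.exp (-(kap p * n)) := by
  have : 0 < min p (1 - p) := lt_min hp0 (by linarith)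
  rw [kap, neg_mul, neg_neg, mul_comm, Real.exp_nat_mul, Real.exp_log this]

lemma kap_nonneg {p : ℝ} (hp0 : 0 < p) (hp1 : p < 1) : 0 ≤ kap p := by
  unfold kap
  have : Real.log (min p (1 - p)) ≤ 0 := Real.log_nonpos (le_min hp0.le (by linarith))
    ((min_le_left _ _).trans hp1.le)
  linarith

lemma pt_of_av {p : ℝ} (hp0 : 0 < p) (hp1 : p < 1) {y : ℤ} {n : ℕ} {F : St a b → ℝ} {ω : St a b}
    {c : ℝ} (h : Av p y n (fun ω => F ω ^ 2) ω ≤ Real.exp (-2 * c)) :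
    |F ω| ≤ Real.exp (kap p * n / 2 - c) := by
  have h1 := (Av_ge hp0.le hp1.le (y := y) (n := n) (f := fun ω => F ω ^ 2)
    (fun ω => sq_nonneg _) ω).trans h
  rw [kap_exp hp0 hp1] at h1
  have h2 : F ω ^ 2 ≤ Real.exp (kap p * n / 2 - c) ^ 2 := by
    have h3 := mul_le_mul_of_nonneg_left h1 (Real.exp_nonneg (kap p * n))
    rw [← mul_assoc, ← Real.exp_add, ← Real.exp_add] at h3
    rw [← Real.exp_nat_mul]
    simp only [add_neg_cancel, Real.exp_zero, one_mul] at h3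
    refine h3.trans (le_of_eq ?_)
    congr 1; push_cast; ring
  exact abs_le_of_sq_le_sq h2 (Real.exp_nonneg _)

/-- Relaxation rate of the killed process. -/
def lam0 (E : EastProcess) : ℝ := min (gap E / 2) (min 1 (gap E / 2) * (1 - E.p) / 2)

lemma lam0_pos (E : EastProcess) (hgap : 0 < gap E) : 0 < lam0 E := by
  have := E.hp1
  refine lt_min (by linarith) ?_
  have : 0 < min 1 (gap E / 2) := lt_min one_pos (by linarith)
  have : 0 < 1 - E.p := by linarith
  positivity

/-- The killed semigroup applied to one. -/
def RR (p : ℝ) (a b : ℤ) (y : ℤ) (T : ℝ) : St a b → ℝ := PV p (cc y) T (fun _ => 1)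

section
variable (E : EastProcess) (hgap : 0 < gap E)

lemma RR_ind {y : ℤ} {T : ℝ} (hT : 0 ≤ T) : ∀ x < y + 1, Ind x (RR E.p a b y T) :=
  ind_left E.hp0.le E.hp1.le (fun ω => cc_nonneg _ _) (fun x hx => cc_ind (by omega))
    (fun _ _ _ _ => rfl) hT

lemma RR_nonneg {y : ℤ} {T : ℝ} (hT : 0 ≤ T) (ω : St a b) : 0 ≤ RR E.p a b y T ω :=
  PV_nonneg E.hp0.le E.hp1.le (fun ω => cc_nonneg _ _) (fun _ => zero_le_one) hT ω

lemma RR_le_one {y : ℤ} {T : ℝ} (hT : 0 ≤ T) (ω : St a b) : RR E.p a b y T ω ≤ 1 :=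
  PV_le E.hp0.le E.hp1.le (fun ω => cc_nonneg _ _) zero_le_one (fun _ => le_rfl) hT ω

include hgap

lemma coer {y : ℤ} (hy : a - 1 ≤ y) (G : St a b → ℝ) {i : ℕ × St a b} (hi : i ∈ NI a b y 0) :
    lam0 E * Av E.p y i.1 (fun ω => G ω ^ 2) i.2 ≤
      (∑ z ∈ Finset.Icc (y + 1) (y + i.1), Av E.p y i.1
        (fun ω => cc z ω * (G ω - Ex E.p z G ω) ^ 2) i.2) +
      Av E.p y i.1 (fun ω => cc y ω * G ω ^ 2) i.2 := by
  obtain ⟨n, ω⟩ := i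
  rw [mem_NI] at hi
  obtain ⟨_, hnb, hω⟩ := hi
  simp only at hnb hω ⊢
  have hp0 := E.hp0
  have hp1 := E.hp1
  have hP := poincare E hgap hy hnb G ω hω
  set p := E.p with hp
  set γ := gap E with hγ
  set D := ∑ z ∈ Finset.Icc (y + 1) (y + n), Av p y n
        (fun ω => cc z ω * (G ω - Ex p z G ω) ^ 2) ω with hD
  set A := Av p y n (fun ω => G ω ^ 2) ω with hA
  set m := Av p y n G ω with hm
  have hvar : m ^ 2 ≤ A := Av_sq_le hp0.le hp1.le G ω
  have hq : (1 - p) ≤ Av p y n (cc y) ω := by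
    rcases n with _ | n
    · rw [Av_zero]; unfold cc
      rw [if_pos (by simpa using hω)]; linarith
    · have h1 : Ex p (y + 1) (cc y : St a b → ℝ) = fun _ => 1 - p := by
        funext ω
        have hmem : y + 1 ∈ Finset.Icc a b := by
          rw [Finset.mem_Icc]; push_cast at hnb; omega
        simp [Ex, cc, rd_upd_same hmem]
      rw [← Av_absorb (x := y + 1) (by omega) (by push_cast; omega), h1, Av_const]
  have hW : (1 - p) * (m ^ 2 / 2) - (A - m ^ 2) ≤ Av p y n (fun ω => cc y ω * G ω ^ 2) ω := by
    have h1 : Av p y n (fun ω => (m ^ 2 / 2) * cc y ω - ((G ω ^ 2 - (2 * m) * G ω) + m ^ 2)) ω ≤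
        Av p y n (fun ω => cc y ω * G ω ^ 2) ω := by
      refine Av_mono hp0.le hp1.le fun ω => ?_
      have hc0 := cc_nonneg y ω
      have hc1 := cc_le_one y ω
      nlinarith [mul_nonneg hc0 (sq_nonneg (2 * G ω - m)),
        mul_nonneg (sub_nonneg.2 hc1) (sq_nonneg (G ω - m))]
    rw [Av_sub, Av_add, Av_sub, Av_smul, Av_smul, Av_const] at h1
    have h2 := mul_le_mul_of_nonneg_left hq (show 0 ≤ m ^ 2 / 2 by positivity)
    nlinarith
  have hW0 : 0 ≤ Av p y n (fun ω => cc y ω * G ω ^ 2) ω :=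
    Av_nonneg hp0.le hp1.le fun ω => mul_nonneg (cc_nonneg _ _) (sq_nonneg _)
  set W := Av p y n (fun ω => cc y ω * G ω ^ 2) ω with hWd
  set α := min 1 (γ / 2) with hα
  have hα0 : 0 < α := lt_min one_pos (by linarith)
  have hα1 : α ≤ 1 := min_le_left _ _
  have hα2 : α ≤ γ / 2 := min_le_right _ _
  have hl1 : lam0 E ≤ γ / 2 := min_le_left _ _
  have hl2 : lam0 E ≤ α * (1 - p) / 2 := min_le_right _ _
  have h3 : α * W ≤ W := by nlinarith
  have h4 := mul_le_mul_of_nonneg_left hW hα0.le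
  have h5 : 0 ≤ A - m ^ 2 := by linarith
  have h6 := mul_le_mul_of_nonneg_right hl1 h5
  have h7 := mul_le_mul_of_nonneg_right hl2 (sq_nonneg m)
  have h8 := mul_le_mul_of_nonneg_right hα2 h5
  nlinarith

lemma RR_av {y : ℤ} (hy : a - 1 ≤ y) {T : ℝ} (hT : 0 ≤ T) {u : ℝ} (hu : 0 ≤ u) :
    ∀ i ∈ NI a b y 0, Av E.p y i.1
      (fun ω => PV E.p (fun _ => (0:ℝ)) u (RR E.p a b y T) ω ^ 2) i.2 ≤
      Real.exp (-2 * (lam0 E * T)) := by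
  have hp0 := E.hp0.le
  have hp1 := E.hp1.le
  have h1 := nlem hp0 hp1 hy (V := cc y) (fun ω => cc_nonneg _ _) (fun x hx => cc_ind (by omega))
    (g := fun _ : St a b => (1:ℝ)) (fun _ _ _ _ => rfl) (n0 := 0) (M := 1)
    (lam0_pos E hgap).le (fun s hs i hi => coer E hgap hy _ hi) (fun i _ => by simp [Av_const]) T hT
  have h2 := nlem hp0 hp1 hy (V := fun _ => (0:ℝ)) (fun ω => le_rfl) (fun _ _ _ _ => rfl)
    (g := RR E.p a b y T) (RR_ind E hT) (n0 := 0) (M := Real.exp (-2 * (lam0 E * T))) (lam := 0)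
    le_rfl (fun s hs i hi => by
      have h3 : ∀ z, 0 ≤ Av E.p y i.1 (fun ω => cc z ω *
        (PV E.p (fun _ => (0:ℝ)) s (RR E.p a b y T) ω -
          Ex E.p z (PV E.p (fun _ => (0:ℝ)) s (RR E.p a b y T)) ω) ^ 2) i.2 := fun z =>
        Av_nonneg hp0 hp1 fun ω => mul_nonneg (cc_nonneg _ _) (sq_nonneg _)
      rw [zero_mul]
      refine add_nonneg (Finset.sum_nonneg fun z _ => h3 z) ?_
      simp [Av_const]) (fun i hi => by
      have := h1 i hi
      rw [one_mul] at this
      refine this.trans (le_of_eq ?_)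
      congr 1; ring) u hu
  intro i hi
  simpa using h2 i hi

lemma RR_pt {y : ℤ} (hy : a - 1 ≤ y) {T : ℝ} (hT : 0 ≤ T) {u : ℝ} (hu : 0 ≤ u) {n : ℕ}
    (hn : y + n ≤ b) {ω : St a b} (hω : rd ω (y + n + 1) = false) :
    PV E.p (fun _ => (0:ℝ)) u (RR E.p a b y T) ω ≤
      Real.exp (kap E.p * n / 2 - lam0 E * T) :=
  (le_abs_self _).trans (pt_of_av E.hp0 E.hp1
    (RR_av E hgap hy hT hu (n, ω) (mem_NI.2 ⟨Nat.zero_le _, hn, hω⟩)))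

lemma RR_int (hab : a ≤ b + 1) {y : ℤ} (hy : a - 1 ≤ y) {T : ℝ} (hT : 0 ≤ T) {u : ℝ} (hu : 0 ≤ u)
    {n : ℕ} (hn : y + n = b) (ω : St a b) :
    Av E.p y n (PV E.p (fun _ => (0:ℝ)) u (RR E.p a b y T)) ω ≤
      Real.exp (- (lam0 E * T)) := by
  have h1 := RR_av E hgap hy hT hu (n, ω) (mem_NI.2 ⟨Nat.zero_le _, hn.le, by
    apply rd_right hab; simp only; omega⟩)
  have h2 := (Av_sq_le E.hp0.le E.hp1.le (y := y) (n := n)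
    (PV E.p (fun _ => (0:ℝ)) u (RR E.p a b y T)) ω).trans h1
  have h3 : Real.exp (-2 * (lam0 E * T)) = Real.exp (- (lam0 E * T)) ^ 2 := by
    rw [← Real.exp_nat_mul]; congr 1; push_cast; ring
  rw [h3] at h2
  exact (abs_le_of_sq_le_sq' h2 (Real.exp_nonneg _)).2

/-- Indicator of ones on `(y, y+d]`. -/
def ones (y : ℤ) (d : ℕ) (ω : St a b) : ℝ :=
  if ∀ x, y < x → x ≤ y + d → rd ω x = true then 1 else 0

omit hgap in
lemma ones_av {y : ℤ} {d : ℕ} (hy : a - 1 ≤ y) (hd : y + d ≤ b) (ω : St a b) :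
    Av E.p y d (ones y d) ω = E.p ^ d := by
  induction d generalizing ω with
  | zero =>
    rw [Av_zero, ones, if_pos (by intro x h1 h2; simp at h2; omega)]; simp
  | succ d ih =>
    have h1 : (ones y (d + 1) : St a b → ℝ) = fun ω =>
        (if rd ω (y + d + 1) = true then 1 else 0) * ones y d ω := by
      funext ω
      unfold ones
      have : (∀ x, y < x → x ≤ y + ((d + 1 : ℕ) : ℤ) → rd ω x = true) ↔
          (rd ω (y + d + 1) = true ∧ ∀ x, y < x → x ≤ y + d → rd ω x = true) := by
        constructor
        · intro h
          exact ⟨h _ (by omega) (by push_cast; omega), fun x h1 h2 => h x h1 (by push_cast; omega)⟩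
        · rintro ⟨h1, h2⟩ x hx1 hx2
          by_cases hx : x = y + d + 1
          · rw [hx]; exact h1
          · exact h2 x hx1 (by push_cast at hx2; omega)
      by_cases hA : rd ω (y + d + 1) = true
      · by_cases hB : ∀ x, y < x → x ≤ y + d → rd ω x = true
        · rw [if_pos (this.2 ⟨hA, hB⟩), if_pos hA, if_pos hB]; ring
        · rw [if_neg (fun h => hB (this.1 h).2), if_neg hB]; ring
      · rw [if_neg (fun h => hA (this.1 h).1), if_neg hA]; ring
    have hmem : y + d + 1 ∈ Finset.Icc a b := by
      rw [Finset.mem_Icc]; push_cast at hd; omega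
    have h2 : Av E.p y d (ones y (d + 1) : St a b → ℝ) =
        fun ω => (if rd ω (y + d + 1) = true then 1 else 0) * E.p ^ d := by
      funext ω
      rw [h1, Av_mul_left, ih (by push_cast at hd; omega)]
      intro x h3 h4 ω c
      simp only [rd_upd_ne (show y + (d:ℤ) + 1 ≠ x by omega)]
    rw [Av_succ, h2]
    simp only [Ex, rd_upd_same hmem]
    simp [pow_succ']

omit hgap in
lemma ones_bd (y : ℤ) (d : ℕ) (ω : St a b) : 0 ≤ ones y d ω ∧ ones y d ω ≤ 1 := by
  unfold ones; split_ifs <;> norm_num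

lemma speed {y : ℤ} (hy : a - 1 ≤ y) {s : ℝ} (hs : 0 ≤ s) {d n : ℕ} (hdn : d ≤ n)
    (hn : y + n ≤ b) {ω : St a b} (hω : rd ω (y + n + 1) = false) :
    PV E.p (fun _ => (0:ℝ)) s (ones y d) ω ≤ E.p ^ d + Real.exp (kap E.p * n / 2 - gap E * s) := by
  have hp0 := E.hp0.le
  have hp1 := E.hp1.le
  have hpd0 : 0 ≤ E.p ^ d := pow_nonneg hp0 d
  have hpd1 : E.p ^ d ≤ 1 := pow_le_one₀ hp0 hp1
  set g : St a b → ℝ := fun ω => ones y d ω - E.p ^ d with hg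
  have hgi : ∀ x < y + 1, Ind x g := by
    intro x hx ω c
    simp only [hg, ones]
    congr 2
    refine propext (forall₃_congr fun z h1 h2 => ?_)
    rw [rd_upd_ne (by omega)]
  have hg0 : ∀ i ∈ NI a b y d, Av E.p y i.1 g i.2 = 0 := by
    rintro ⟨m, ω⟩ hi
    rw [mem_NI] at hi
    obtain ⟨k, hk⟩ := Nat.exists_eq_add_of_le hi.1
    simp only at hk hi ⊢
    have : Av E.p y d (ones y d : St a b → ℝ) = fun _ => E.p ^ d :=
      funext fun ω => ones_av E hy (by omega) ω
    rw [Av_sub, Av_const, hk, Av_add_index, this, Av_const, sub_self]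
  have hm : ∀ s, 0 ≤ s → ∀ i ∈ NI a b y d, Av E.p y i.1 (PV E.p (fun _ => (0:ℝ)) s g) i.2 = 0 := by
    intro s hs i hi
    have h1 := mlem hp0 hp1 hy hgi (fun i hi => (hg0 i hi).le) s hs i hi
    have h2 := mlem hp0 hp1 hy (g := fun ω => (-1) * g ω) (fun x hx ω c => by simp only [hgi x hx ω c])
      (fun i hi => by rw [Av_smul, hg0 i hi]; simp) s hs i hi
    have h3 : (fun ω => (-1) * g ω) = (-1 : ℝ) • g := rfl
    rw [h3, map_smul] at h2
    have h4 := Av_smul E.p y i.1 (-1) (PV E.p (fun _ => (0:ℝ)) s g) i.2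
    have h5 : Av E.p y i.1 ((-1 : ℝ) • (PV E.p (fun _ => (0:ℝ)) s g)) i.2 =
      (-1) * Av E.p y i.1 (PV E.p (fun _ => (0:ℝ)) s g) i.2 := h4
    rw [h5] at h2
    linarith
  have h1 := nlem hp0 hp1 hy (V := fun _ => (0:ℝ)) (fun ω => le_rfl) (fun _ _ _ _ => rfl)
    (g := g) hgi (n0 := d) (M := 1) hgap.le (fun s hs i hi => by
      have hi' := mem_NI.1 hi
      have := poincare E hgap hy hi'.2.1 (PV E.p (fun _ => (0:ℝ)) s g) i.2 hi'.2.2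
      rw [hm s hs i hi] at this
      simpa [Av_const] using this) (fun i hi => by
      refine Av_le hp0 hp1 fun ω _ => ?_
      have := ones_bd y d ω
      rw [sq_le_one_iff_abs_le_one, abs_le]
      constructor <;> simp only [hg] <;> linarith) s hs (n, ω) (mem_NI.2 ⟨hdn, hn, hω⟩)
  rw [one_mul, mul_assoc] at h1
  have h2 := (le_abs_self _).trans (pt_of_av E.hp0 E.hp1 h1)
  have h3 : g = ones y d - fun _ => E.p ^ d := rfl
  rw [h3, map_sub, Pi.sub_apply, P_const hp0 hp1 _ hs] at h2
  linarith

end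
end EP
end

open MeasureTheory ProbabilityTheory Filter Topology
noncomputable section
namespace EP
set_option linter.unusedVariables false
variable {a b : ℤ}

/-- Front of a finite-volume configuration. -/
def fr (ω : St a b) : ℤ := front (rd ω)

lemma front_spec {η : Config} (hη : η ∈ LO) : η (front η) = false ∧ ∀ x < front η, η x = true := by
  obtain ⟨⟨y, hy⟩, x0, hx0⟩ := hη
  have hb : BddBelow {x : ℤ | η x = false} := ⟨y, fun x hx => by
    by_contra h
    have := hy x (by omega)
    rw [Set.mem_ofPred_eq, this] at hx; exact absurd hx (by simp)⟩
  refine ⟨Int.csInf_mem ⟨x0, hx0⟩ hb, fun x hx => ?_⟩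
  by_contra h
  have : front η ≤ x := csInf_le hb (by simpa using h)
  omega

lemma front_unique {η : Config} {z : ℤ} (h1 : η z = false) (h2 : ∀ x < z, η x = true) :
    front η = z := by
  have hb : z ∈ lowerBounds {x : ℤ | η x = false} := fun x hx => by
    by_contra h
    have := h2 x (by omega)
    rw [Set.mem_ofPred_eq, this] at hx; exact absurd hx (by simp)
  exact le_antisymm (csInf_le ⟨z, hb⟩ h1) (le_csInf ⟨z, h1⟩ hb)

section
variable (hab : a ≤ b + 1)
include hab

lemma rd_LO (ω : St a b) : rd ω ∈ LO :=
  ⟨⟨a, fun x hx => rd_left hx ω⟩, b + 1, rd_right hab (by omega) ω⟩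

lemma fr_false (ω : St a b) : rd ω (fr ω) = false := (front_spec (rd_LO hab ω)).1
lemma fr_true (ω : St a b) {x : ℤ} (hx : x < fr ω) : rd ω x = true :=
  (front_spec (rd_LO hab ω)).2 x hx
lemma fr_ge (ω : St a b) : a ≤ fr ω := by
  by_contra h
  have := fr_false hab ω
  rw [rd_left (by omega)] at this
  exact absurd this (by simp)
lemma fr_le (ω : St a b) : fr ω ≤ b + 1 := by
  by_contra h
  have := fr_true hab ω (x := b + 1) (by omega)
  rw [rd_right hab (by omega)] at this
  exact absurd this (by simp)
omit hab in
lemma fr_unique {ω : St a b} {z : ℤ} (h1 : rd ω z = false) (h2 : ∀ x < z, rd ω x = true) :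
    fr ω = z := front_unique h1 h2

lemma fr_le_of {ω : St a b} {z : ℤ} (h : rd ω z = false) : fr ω ≤ z := by
  by_contra hc
  rw [fr_true hab ω (by omega)] at h
  exact absurd h (by simp)

/-- Effect of a legal update on the front. -/
lemma fr_upd {ω : St a b} {x : ℤ} (hx : x ∈ Finset.Icc a b) (hc : rd ω (x + 1) = false) (e : Bool) :
    (x < fr ω - 1 → False) ∧ (x = fr ω - 1 → fr (upd x e ω) = fr ω ∨ fr (upd x e ω) = fr ω - 1) ∧
    (x = fr ω → fr (upd x e ω) = fr ω ∨ fr (upd x e ω) = fr ω + 1) ∧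
    (fr ω < x → fr (upd x e ω) = fr ω) := by
  have h0 := fr_false hab ω
  have h1 := fun z hz => fr_true hab ω (x := z) hz
  refine ⟨fun h => ?_, fun h => ?_, fun h => ?_, fun h => ?_⟩
  · rw [h1 (x + 1) (by omega)] at hc; exact absurd hc (by simp)
  · cases e with
    | true =>
      left
      refine fr_unique ?_ fun z hz => ?_
      · rw [rd_upd_ne (by omega)]; exact h0
      · rw [rd_upd]; split_ifs
        · rfl
        · exact h1 z hz
    | false =>
      right
      refine fr_unique ?_ fun z hz => ?_
      · rw [← h, rd_upd_same hx]
      · rw [rd_upd_ne (by omega)]; exact h1 z (by omega)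
  · cases e with
    | true =>
      right
      refine fr_unique ?_ fun z hz => ?_
      · rw [rd_upd_ne (by omega), ← h]; exact hc
      · by_cases hzx : z = x
        · rw [hzx, rd_upd_same hx]
        · rw [rd_upd_ne hzx]; exact h1 z (by omega)
    | false =>
      left
      refine fr_unique ?_ fun z hz => ?_
      · rw [← h, rd_upd_same hx]
      · rw [rd_upd_ne (by omega)]; exact h1 z (by omega)
  · refine fr_unique ?_ fun z hz => ?_
    · rw [rd_upd_ne (by omega)]; exact h0
    · rw [rd_upd_ne (by omega)]; exact h1 z (by omega)
end

section
variable {p : ℝ} (hp0 : 0 ≤ p) (hp1 : p ≤ 1)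
include hp0 hp1

lemma lyap {f : St a b → ℝ} (hf : ∀ ω, gen p (fun _ => (0:ℝ)) f ω ≤ 2 * f ω) {t : ℝ} (ht : 0 ≤ t)
    (ω : St a b) : PV p (fun _ => (0:ℝ)) t f ω ≤ Real.exp (2 * t) * f ω := by
  have := comp_le hp0 hp1 (V := fun _ => (0:ℝ))
    (u := fun s ω => (PV p (fun _ => (0:ℝ)) s f - Real.exp (2 * s) • f) ω)
    (F := fun s ω => Real.exp (2 * s) * (gen p (fun _ => (0:ℝ)) f ω - 2 * f ω))
    (B := fun _ => 0) (B' := fun _ => 0) (fun _ => le_rfl) ?_ ?_ (fun s _ => hasDerivAt_const s _)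
    (fun _ _ => le_rfl) ?_ t ht ω
  · simpa using this
  · intro s hs ω
    have h1 : HasDerivAt (fun s : ℝ => Real.exp (2 * s)) (Real.exp (2 * s) * 2) s := by
      have : HasDerivAt (fun s : ℝ => 2 * s) 2 s := by simpa using (hasDerivAt_id s).const_mul 2
      exact this.exp
    have h2 := (sg_hasDerivAt (gen p (fun _ => (0:ℝ))) s f ω).sub (h1.mul_const (f ω))
    refine h2.congr_deriv ?_
    rw [map_sub, map_smul]
    simp only [Pi.sub_apply, Pi.smul_apply, smul_eq_mul]
    ring
  · intro s _ ω
    exact mul_nonpos_of_nonneg_of_nonpos (Real.exp_nonneg _) (by linarith [hf ω])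
  · intro ω; simp [sg_zero]

lemma lyap_front (hab : a ≤ b + 1) (σ : ℝ) (hσ : σ = 1 ∨ σ = -1) (ω : St a b) :
    gen p (fun _ => (0:ℝ)) (fun ω => Real.exp (σ * fr ω)) ω ≤ 2 * Real.exp (σ * fr ω) := by
  set f : St a b → ℝ := fun ω => Real.exp (σ * fr ω) with hf
  have hE : Real.exp 1 ≤ 3 := by linarith [Real.exp_one_lt_d9]
  set x0 := if σ = 1 then fr ω else fr ω - 1 with hx0
  have hterm : ∀ x ∈ Finset.Icc a b, cc x ω * (Ex p x f ω - f ω) ≤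
      if x = x0 then 2 * f ω else 0 := by
    intro x hx
    unfold cc
    by_cases hc : rd ω (x + 1) = false
    swap
    · rw [if_neg hc, zero_mul]; split_ifs
      · positivity
      · exact le_rfl
    rw [if_pos hc, one_mul]
    have h := fun e => fr_upd hab hx hc e
    have hup : ∀ e, f (upd x e ω) ≤ if x = x0 then 3 * f ω else f ω := by
      intro e
      obtain ⟨h1, h2, h3, h4⟩ := h e
      have hlt : ¬ x < fr ω - 1 := h1
      have hstep : Real.exp (σ * fr ω + 1) ≤ 3 * f ω := by
        rw [Real.exp_add, mul_comm]
        exact mul_le_mul_of_nonneg_right hE (Real.exp_nonneg _)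
      have hstep0 : Real.exp (σ * fr ω) ≤ 3 * f ω := by
        have := Real.exp_nonneg (σ * fr ω)
        simp only [hf]; linarith
      rcases hσ with rfl | rfl
      · simp only [if_true] at hx0
        split_ifs with hxx
        · rcases h3 (by omega) with h5 | h5
          · simp only [hf, h5]; exact hstep0
          · simp only [hf, h5]; push_cast
            refine (le_of_eq ?_).trans hstep
            congr 1; ring
        · simp only [hf, one_mul]
          apply Real.exp_le_exp.2
          rcases lt_trichotomy x (fr ω) with h6 | h6 | h6
          · rcases h2 (by omega) with h5 | h5 <;> rw [h5] <;> push_cast <;> linarith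
          · omega
          · rw [h4 h6]
      · rw [if_neg (by norm_num)] at hx0
        split_ifs with hxx
        · rcases h2 (by omega) with h5 | h5
          · simp only [hf, h5]; exact hstep0
          · simp only [hf, h5]; push_cast
            refine (le_of_eq ?_).trans hstep
            congr 1; ring
        · simp only [hf]
          apply Real.exp_le_exp.2
          rcases lt_trichotomy x (fr ω) with h6 | h6 | h6
          · omega
          · rcases h3 (by omega) with h5 | h5 <;> rw [h5] <;> push_cast <;> linarith
          · rw [h4 h6]
    have := Ex_le hp0 hp1 hup
    split_ifs at this ⊢ <;> linarith
  have hsum := Finset.sum_le_sum hterm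
  rw [Finset.sum_ite_eq'] at hsum
  rw [gen_apply]
  have hpos : 0 ≤ f ω := Real.exp_nonneg _
  have h2 : (if x0 ∈ Finset.Icc a b then 2 * f ω else 0) ≤ 2 * f ω := by
    split_ifs
    · exact le_rfl
    · linarith
  simp only [hf] at hsum h2 ⊢
  linarith

lemma front_tail (hab : a ≤ b + 1) (σ : ℝ) (hσ : σ = 1 ∨ σ = -1) {T : ℝ} (hT : 0 ≤ T) (ω : St a b)
    (r : ℝ) :
    PV p (fun _ => (0:ℝ)) T (fun ω' => if r ≤ σ * ((fr ω' : ℝ) - fr ω) then 1 else 0) ω ≤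
      Real.exp (2 * T - r) := by
  have h1 := lyap hp0 hp1 (lyap_front hp0 hp1 hab σ hσ) hT ω
  have h2 := PV_mono hp0 hp1 (V := fun _ => (0:ℝ)) (fun _ => le_rfl)
    (f := fun ω' : St a b => if r ≤ σ * ((fr ω' : ℝ) - fr ω) then 1 else 0)
    (g := Real.exp (-(σ * fr ω) - r) • (fun ω' => Real.exp (σ * fr ω'))) (fun ω' => by
      simp only [Pi.smul_apply, smul_eq_mul, ← Real.exp_add]
      split_ifs with h
      · apply Real.one_le_exp; linarith
      · exact Real.exp_nonneg _) hT ω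
  rw [map_smul, Pi.smul_apply, smul_eq_mul] at h2
  refine h2.trans ((mul_le_mul_of_nonneg_left h1 (Real.exp_nonneg _)).trans (le_of_eq ?_))
  rw [← Real.exp_add, ← Real.exp_add]; congr 1; ring

omit hp0 hp1 in
lemma pow_fact_le {s : ℝ} (hs : 0 ≤ s) (j : ℕ) :
    (2 * s) ^ j / j.factorial ≤ Real.exp (16 * s - 2 * j) := by
  have hE : Real.exp 2 ≤ 8 := by
    have : Real.exp 2 = Real.exp 1 ^ 2 := by rw [← Real.exp_nat_mul]; norm_num
    rw [this]; nlinarith [Real.exp_one_lt_d9, Real.exp_pos 1]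
  have h1 := Real.pow_div_factorial_le_exp (2 * s * Real.exp 2) (by positivity) j
  have h2 : Real.exp (2 * s * Real.exp 2) ≤ Real.exp (16 * s) := Real.exp_le_exp.2 (by nlinarith)
  have h3 := h1.trans h2
  rw [mul_pow, ← Real.exp_nat_mul] at h3
  rw [Real.exp_sub, le_div_iff₀ (Real.exp_pos _)]
  refine (le_of_eq ?_).trans h3
  rw [mul_comm (2:ℝ) (j:ℝ)]; ring

/-- Finite speed, exponential form. -/
lemma finite_speed' {z : ℤ} {f : St a b → ℝ} (hf : ∀ x, z < x → Ind x f) {c : ℝ}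
    (hc : ∀ ω, |f ω| ≤ c) {x : ℤ} (hx : z ≤ x) {s : ℝ} (hs : 0 ≤ s) (ω : St a b) :
    |PV p (fun _ => (0:ℝ)) s f ω - Ex p x (PV p (fun _ => (0:ℝ)) s f) ω| ≤
      2 * c * Real.exp (16 * s - 2 * ((x : ℝ) - z)) := by
  obtain ⟨j, hj⟩ := Int.eq_ofNat_of_zero_le (show 0 ≤ x - z by omega)
  have hx' : x = z + j := by omega
  have hc0 : 0 ≤ c := (abs_nonneg _).trans (hc ω)
  rw [hx']
  refine (finite_speed hp0 hp1 hf hc j s hs ω).trans ?_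
  refine mul_le_mul_of_nonneg_left ?_ (by positivity)
  refine (pow_fact_le hs j).trans (le_of_eq ?_)
  push_cast; congr 1; ring

omit hp0 hp1 in
lemma geom_sum (a b y : ℤ) :
    ∑ x ∈ Finset.Icc a b, (if y ≤ x then Real.exp (-2 * ((x:ℝ) - y)) else 0) ≤ 2 := by
  rw [← Finset.sum_filter]
  have hsub : (Finset.Icc a b).filter (fun x => y ≤ x) ⊆
      (Finset.range ((b - y).toNat + 1)).image (fun k : ℕ => y + (k:ℤ)) := by
    intro x hx
    simp only [Finset.mem_filter, Finset.mem_Icc, Finset.mem_image, Finset.mem_range] at hx ⊢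
    exact ⟨(x - y).toNat, by omega, by omega⟩
  refine (Finset.sum_le_sum_of_subset_of_nonneg hsub fun _ _ _ => Real.exp_nonneg _).trans ?_
  rw [Finset.sum_image (by intro i _ j _ h; simpa using h)]
  have hE : Real.exp (-2) ≤ 1 / 2 := by
    rw [Real.exp_neg, inv_eq_one_div]
    apply one_div_le_one_div_of_le (by norm_num)
    have := Real.add_one_le_exp (2:ℝ); linarith
  calc _ ≤ ∑ k ∈ Finset.range ((b - y).toNat + 1), ((1:ℝ) / 2) ^ k := by
        refine Finset.sum_le_sum fun k _ => ?_
        have : Real.exp (-2 * (((y + (k:ℤ) : ℤ) : ℝ) - y)) = Real.exp (-2) ^ k := by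
          rw [← Real.exp_nat_mul]; congr 1; push_cast; ring
        rw [this]
        exact pow_le_pow_left₀ (Real.exp_nonneg _) hE k
    _ ≤ 2 := by
        refine (Summable.sum_le_tsum _ (fun _ _ => by positivity) summable_geometric_two).trans ?_
        rw [tsum_geometric_two]

lemma product_aux {z y : ℤ} (hzy : z ≤ y) {φ g : St a b → ℝ} (hφ : ∀ x, z < x → Ind x φ)
    (hφ1 : ∀ ω, |φ ω| ≤ 1) (hg : ∀ x < y, Ind x g) {c : ℝ} (hgc : ∀ ω, |g ω| ≤ c)
    {T : ℝ} (hT : 0 ≤ T) (ω : St a b) :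
    PV p (fun _ => (0:ℝ)) T (fun ω => φ ω * g ω) ω -
      PV p (fun _ => (0:ℝ)) T φ ω * PV p (fun _ => (0:ℝ)) T g ω ≤
      c * Real.exp (16 * T - 2 * ((y:ℝ) - z)) := by
  have hc0 : 0 ≤ c := (abs_nonneg _).trans (hgc ω)
  set Pt := fun s => PV p (fun _ : St a b => (0:ℝ)) s with hPt
  refine comp_le hp0 hp1 (V := fun _ => (0:ℝ))
    (u := fun s ω => Pt s (fun ω => φ ω * g ω) ω - Pt s φ ω * Pt s g ω)
    (F := fun s ω => ∑ x ∈ Finset.Icc a b, cc x ω * (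
      Ex p x (fun ω => Pt s φ ω * Pt s g ω) ω - Ex p x (Pt s φ) ω * Pt s g ω
        - Pt s φ ω * Ex p x (Pt s g) ω + Pt s φ ω * Pt s g ω))
    (B := fun s => c * Real.exp (16 * s - 2 * ((y:ℝ) - z)))
    (B' := fun s => c * (Real.exp (16 * s - 2 * ((y:ℝ) - z)) * 16)) (fun _ => le_rfl) ?_ ?_ ?_
    (fun s _ => by positivity) ?_ T hT ω
  · intro s hs ω
    have h1 := (sg_hasDerivAt (gen p (fun _ : St a b => (0:ℝ))) s (fun ω => φ ω * g ω) ω).sub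
      ((sg_hasDerivAt (gen p (fun _ : St a b => (0:ℝ))) s φ ω).mul
        (sg_hasDerivAt (gen p (fun _ : St a b => (0:ℝ))) s g ω))
    refine h1.congr_deriv ?_
    simp only [gen_apply, zero_mul, sub_zero]
    rw [Finset.sum_mul, Finset.mul_sum, ← Finset.sum_add_distrib, ← Finset.sum_sub_distrib,
      ← Finset.sum_add_distrib]
    refine Finset.sum_congr rfl fun x _ => ?_
    simp only [Ex, hPt]; ring
  · intro s hs ω
    have hG := ind_left hp0 hp1 (V := fun _ => (0:ℝ)) (fun _ => le_rfl) (fun _ _ _ _ => rfl) hg hs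
    have hGc := fun ω => PV_abs hp0 hp1 (V := fun _ => (0:ℝ)) (fun _ => le_rfl) hgc hs ω
    have hD := fun x (hx : z ≤ x) ω => finite_speed' hp0 hp1 hφ hφ1 hx hs ω
    change ∀ x < y, Ind x (Pt s g) at hG
    change ∀ ω, |Pt s g ω| ≤ c at hGc
    change ∀ x, z ≤ x → ∀ ω, |Pt s φ ω - Ex p x (Pt s φ) ω| ≤ _ at hD
    set G := Pt s g
    set Φ := Pt s φ
    have hterm : ∀ x ∈ Finset.Icc a b, cc x ω * (
      Ex p x (fun ω => Φ ω * G ω) ω - Ex p x Φ ω * G ω - Φ ω * Ex p x G ω + Φ ω * G ω) ≤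
      (6 * c * Real.exp (16 * s - 2 * ((y:ℝ) - z))) *
        (if y ≤ x then Real.exp (-2 * ((x:ℝ) - y)) else 0) := by
      intro x _
      by_cases hx : y ≤ x
      · rw [if_pos hx]
        set δ := 2 * 1 * Real.exp (16 * s - 2 * ((x:ℝ) - z)) with hδ
        have hDx := hD x (by omega)
        have e1 : Ex p x (fun ω => Φ ω * G ω) ω - Ex p x Φ ω * G ω - Φ ω * Ex p x G ω + Φ ω * G ω =
            Ex p x (fun ω => (Φ ω - Ex p x Φ ω) * G ω) ω + (Φ ω - Ex p x Φ ω) * (G ω - Ex p x G ω) := by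
          simp only [Ex, upd_upd]; ring
        have hδ0 : 0 ≤ δ := by positivity
        have h3 : |Ex p x (fun ω => (Φ ω - Ex p x Φ ω) * G ω) ω| ≤ δ * c := by
          refine Ex_abs_le hp0 hp1 fun e => ?_
          rw [abs_mul]; exact mul_le_mul (hDx _) (hGc _) (abs_nonneg _) hδ0
        have h4 : |(Φ ω - Ex p x Φ ω) * (G ω - Ex p x G ω)| ≤ δ * (2 * c) := by
          rw [abs_mul]
          refine mul_le_mul (hDx _) ?_ (abs_nonneg _) hδ0
          have h5 := Ex_abs_le hp0 hp1 (x := x) (ω := ω) fun e => hGc (upd x e ω)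
          refine (abs_sub _ _).trans ?_
          linarith [hGc ω]
        rw [e1]
        have h6 : Ex p x (fun ω => (Φ ω - Ex p x Φ ω) * G ω) ω +
          (Φ ω - Ex p x Φ ω) * (G ω - Ex p x G ω) ≤ 3 * c * δ := by
          linarith [le_abs_self (Ex p x (fun ω => (Φ ω - Ex p x Φ ω) * G ω) ω),
            le_abs_self ((Φ ω - Ex p x Φ ω) * (G ω - Ex p x G ω))]
        have h7 : 3 * c * δ = (6 * c * Real.exp (16 * s - 2 * ((y:ℝ) - z))) *
            Real.exp (-2 * ((x:ℝ) - y)) := by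
          rw [mul_assoc (6 * c), ← Real.exp_add, hδ]
          rw [show 16 * s - 2 * ((y:ℝ) - z) + -2 * ((x:ℝ) - y) = 16 * s - 2 * ((x:ℝ) - z) by ring]
          ring
        rw [← h7]
        have hcδ : 0 ≤ 3 * c * δ := by positivity
        calc _ ≤ cc x ω * (3 * c * δ) := mul_le_mul_of_nonneg_left h6 (cc_nonneg _ _)
          _ ≤ 1 * (3 * c * δ) := mul_le_mul_of_nonneg_right (cc_le_one _ _) hcδ
          _ = _ := one_mul _
      · rw [if_neg hx]
        have h8 := hG x (by omega)
        have h9 : Ex p x (fun ω => Φ ω * G ω) ω = G ω * Ex p x Φ ω := by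
          rw [← Ex_mul_left h8]; congr 1; funext ω; ring
        rw [h9, h8.ex]; apply le_of_eq; ring
    refine (Finset.sum_le_sum hterm).trans ?_
    rw [← Finset.mul_sum]
    have := mul_le_mul_of_nonneg_left (geom_sum a b y)
      (show 0 ≤ 6 * c * Real.exp (16 * s - 2 * ((y:ℝ) - z)) by positivity)
    refine this.trans ?_
    have : 0 ≤ c * Real.exp (16 * s - 2 * ((y:ℝ) - z)) := by positivity
    linarith
  · intro s _
    have : HasDerivAt (fun s : ℝ => 16 * s - 2 * ((y:ℝ) - z)) 16 s := by
      simpa using ((hasDerivAt_id s).const_mul 16).sub_const (2 * ((y:ℝ) - z))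
    exact this.exp.const_mul c
  · intro ω; simp only [hPt, sg_zero, sub_self]; positivity

lemma product {z y : ℤ} (hzy : z ≤ y) {φ g : St a b → ℝ} (hφ : ∀ x, z < x → Ind x φ)
    (hφ1 : ∀ ω, |φ ω| ≤ 1) (hg : ∀ x < y, Ind x g) {c : ℝ} (hgc : ∀ ω, |g ω| ≤ c)
    {T : ℝ} (hT : 0 ≤ T) (ω : St a b) :
    |PV p (fun _ => (0:ℝ)) T (fun ω => φ ω * g ω) ω -
      PV p (fun _ => (0:ℝ)) T φ ω * PV p (fun _ => (0:ℝ)) T g ω| ≤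
      c * Real.exp (16 * T - 2 * ((y:ℝ) - z)) := by
  have h1 := product_aux hp0 hp1 hzy hφ hφ1 hg hgc hT ω
  have h2 := product_aux hp0 hp1 hzy (φ := fun ω => (-1) * φ ω) (g := g)
    (fun x hx ω c => by simp only [hφ x hx ω c])
    (fun ω => by simpa using hφ1 ω) hg hgc hT ω
  have e1 : (fun ω => (-1) * φ ω) = (-1 : ℝ) • φ := rfl
  have e2 : (fun ω => (-1) * φ ω * g ω) = (-1 : ℝ) • (fun ω => φ ω * g ω) := by
    funext ω; simp
  rw [e1] at h2
  simp only [e2, map_smul, Pi.smul_apply, smul_eq_mul] at h2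
  rw [abs_le]; constructor <;> linarith

/-- mean zero at `y` is preserved -/
lemma mean_zero {y : ℤ} {g : St a b → ℝ} (hg : ∀ x < y, Ind x g) (h0 : Ex p y g = fun _ => 0)
    {T : ℝ} (hT : 0 ≤ T) (ω : St a b) : Ex p y (PV p (fun _ => (0:ℝ)) T g) ω = 0 := by
  have key : ∀ g : St a b → ℝ, (∀ x < y, Ind x g) → Ex p y g = (fun _ => 0) →
      Ex p y (PV p (fun _ => (0:ℝ)) T g) ω ≤ 0 := by
    intro g hg h0
    refine comp_le hp0 hp1 (V := fun _ => (0:ℝ))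
      (u := fun s => Ex p y (PV p (fun _ => (0:ℝ)) s g)) (F := fun _ _ => 0)
      (B := fun _ => 0) (B' := fun _ => 0) (fun _ => le_rfl) ?_ (fun _ _ _ => le_rfl)
      (fun s _ => hasDerivAt_const s _) (fun _ _ => le_rfl) ?_ T hT ω
    · intro s hs ω
      have hG := ind_left hp0 hp1 (V := fun _ => (0:ℝ)) (fun _ => le_rfl) (fun _ _ _ _ => rfl) hg hs
      have h := fun ω => sg_hasDerivAt (gen p (fun _ : St a b => (0:ℝ))) s g ω
      refine (((h (upd y true ω)).const_mul p).add
        ((h (upd y false ω)).const_mul (1 - p))).congr_deriv ?_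
      change ∀ x < y, Ind x (sg (gen p (fun _ : St a b => (0:ℝ))) s g) at hG
      set G := sg (gen p (fun _ : St a b => (0:ℝ))) s g
      have e : Ex p y (gen p (fun _ => (0:ℝ)) G) ω =
          ∑ x ∈ Finset.Icc a b, Ex p y (fun ω => cc x ω * (Ex p x G ω - G ω)) ω := by
        simp only [Ex, gen_apply, Finset.mul_sum, ← Finset.sum_add_distrib, zero_mul, sub_zero]
      change Ex p y (gen p (fun _ => (0:ℝ)) G) ω = gen p (fun _ => (0:ℝ)) (Ex p y G) ω + 0
      rw [e, gen_apply]
      simp only [zero_mul, sub_zero, add_zero]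
      refine Finset.sum_congr rfl fun x _ => ?_
      rcases lt_trichotomy x y with hx | hx | hx
      · rw [(hG x hx).ex, ((hG x hx).exn y).ex]; simp [Ex_const]
      · subst hx
        rw [Ex_mul_left (cc_ind (by omega)), Ex_sub]
      · rw [Ex_mul_left (cc_ind (by omega)), Ex_sub, Ex_comm]
    · intro ω; simp only [sg_zero, h0]; exact le_rfl
  have h1 := key g hg h0
  have h2 := key (-g) (fun x hx ω c => by simp only [Pi.neg_apply, hg x hx ω c])
    (by
      funext ω
      have := congrFun h0 ω
      simp only [Ex, Pi.neg_apply] at this ⊢; linarith)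
  rw [map_neg] at h2
  have h3 : Ex p y (-(PV p (fun _ => (0:ℝ)) T g)) ω = - Ex p y (PV p (fun _ => (0:ℝ)) T g) ω := by
    simp only [Ex, Pi.neg_apply]; ring
  rw [h3] at h2
  linarith

lemma relax_aux {y : ℤ} {g : St a b → ℝ} (hg : ∀ x < y, Ind x g) (h0 : Ex p y g = fun _ => 0)
    {c : ℝ} (hc0 : 0 ≤ c) (hgc : ∀ ω, g ω ≤ c)
    {T : ℝ} (hT : 0 ≤ T) (ω : St a b) :
    PV p (fun _ => (0:ℝ)) T g ω ≤ c * RR p a b y T ω := by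
  have hR : ∀ s, 0 ≤ s → ∀ x < y + 1, Ind x (RR p a b y s) := fun s hs =>
    ind_left hp0 hp1 (fun ω => cc_nonneg _ _) (fun x hx => cc_ind (by omega))
      (fun _ _ _ _ => rfl) hs
  have hRn : ∀ s, 0 ≤ s → ∀ ω, 0 ≤ RR p a b y s ω := fun s hs ω =>
    PV_nonneg hp0 hp1 (fun ω => cc_nonneg _ _) (fun _ => zero_le_one) hs ω
  by_cases hy : y ∈ Finset.Icc a b
  swap
  · rw [(ind_out hy g).ex] at h0
    rw [h0, P_const hp0 hp1 _ hT]
    exact mul_nonneg hc0 (hRn T hT ω)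
  have := maxP Finset.univ
    (fun s ω => PV p (fun _ => (0:ℝ)) s g ω - c * RR p a b y s ω)
    (fun s ω => gen p (fun _ => (0:ℝ)) (PV p (fun _ => (0:ℝ)) s g) ω -
      c * gen p (cc y) (RR p a b y s) ω) (fun _ => 0) (fun _ => 0) ?_
    (fun s _ => hasDerivAt_const s _) ?_ ?_ T hT ω (Finset.mem_univ _)
  · linarith
  · intro s _ ω _
    exact (sg_hasDerivAt _ s g ω).sub ((sg_hasDerivAt (gen p (cc y)) s (fun _ => 1) ω).const_mul c)
  · intro ω _; simp only [RR, sg_zero]; linarith [hgc ω]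
  intro s hs ω _ hmax hpos
  have hG := ind_left hp0 hp1 (V := fun _ => (0:ℝ)) (fun _ => le_rfl) (fun _ _ _ _ => rfl) hg hs
  have hz := mean_zero hp0 hp1 hg h0 hs
  have hRi := hR s hs
  set G := PV p (fun _ : St a b => (0:ℝ)) s g
  set R := RR p a b y s
  have hterm : ∀ x ∈ Finset.Icc a b, cc x ω * (Ex p x G ω - G ω) - c * (cc x ω * (Ex p x R ω - R ω))
      ≤ if x = y then - (cc y ω * G ω) else 0 := by
    intro x _
    by_cases hx : x = y
    · subst hx
      rw [if_pos rfl, hz ω, (hRi x (by omega)).ex]; apply le_of_eq; ring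
    · rw [if_neg hx]
      have h4 : Ex p x (fun ω => G ω - c * R ω) ω ≤ G ω - c * R ω :=
        Ex_le hp0 hp1 fun e => hmax _ (Finset.mem_univ _)
      rw [Ex_sub, Ex_smul] at h4
      nlinarith [cc_nonneg x ω]
  have hsum := Finset.sum_le_sum hterm
  rw [Finset.sum_ite_eq', if_pos hy, Finset.sum_sub_distrib, ← Finset.mul_sum] at hsum
  rw [gen_apply, gen_apply]
  have := mul_nonneg (cc_nonneg y ω) hpos
  nlinarith

lemma relax {y : ℤ} {g : St a b → ℝ} (hg : ∀ x < y, Ind x g) (h0 : Ex p y g = fun _ => 0)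
    {c : ℝ} (hgc : ∀ ω, |g ω| ≤ c) {T : ℝ} (hT : 0 ≤ T) (ω : St a b) :
    |PV p (fun _ => (0:ℝ)) T g ω| ≤ c * RR p a b y T ω := by
  have hc0 : 0 ≤ c := (abs_nonneg _).trans (hgc ω)
  have h1 := relax_aux hp0 hp1 hg h0 hc0 (fun ω => (abs_le.1 (hgc ω)).2) hT ω
  have h2 := relax_aux hp0 hp1 (g := -g) (fun x hx ω c => by simp only [Pi.neg_apply, hg x hx ω c])
    (by
      funext ω
      have := congrFun h0 ω
      simp only [Ex, Pi.neg_apply] at this ⊢; linarith) hc0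
    (fun ω => by have := (abs_le.1 (hgc ω)).1; simp only [Pi.neg_apply]; linarith) hT ω
  rw [map_neg, Pi.neg_apply] at h2
  rw [abs_le]; constructor <;> linarith
end

end EP
end

open MeasureTheory ProbabilityTheory Filter Topology
noncomputable section
namespace EP
set_option linter.unusedVariables false
variable {a b : ℤ}

abbrev PP (p : ℝ) (t : ℝ) : (St a b → ℝ) →L[ℝ] (St a b → ℝ) := PV p (fun _ => (0:ℝ)) t

lemma PP_add (p t : ℝ) (f g : St a b → ℝ) (ω : St a b) :
    PP p t (fun ω => f ω + g ω) ω = PP p t f ω + PP p t g ω := by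
  have := map_add (PP p t) f g
  exact congrFun this ω

lemma PP_sub (p t : ℝ) (f g : St a b → ℝ) (ω : St a b) :
    PP p t (fun ω => f ω - g ω) ω = PP p t f ω - PP p t g ω := by
  have := map_sub (PP p t) f g
  exact congrFun this ω

lemma PP_smul (p t : ℝ) (c : ℝ) (f : St a b → ℝ) (ω : St a b) :
    PP p t (fun ω => c * f ω) ω = c * PP p t f ω := by
  have := map_smul (PP p t) c f
  exact congrFun this ω

lemma PP_sum {ι : Type*} (I : Finset ι) (p t : ℝ) (f : ι → St a b → ℝ) (ω : St a b) :
    PP p t (fun ω => ∑ i ∈ I, f i ω) ω = ∑ i ∈ I, PP p t (f i) ω := by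
  have := map_sum (PP p t) f I
  have h2 := congrFun this ω
  rw [Finset.sum_apply] at h2
  have e : (fun ω => ∑ i ∈ I, f i ω) = ∑ i ∈ I, f i := by funext ω; rw [Finset.sum_apply]
  rw [e, h2]

lemma PP_add_time (p s t : ℝ) (f : St a b → ℝ) (ω : St a b) :
    PP p (s + t) f ω = PP p s (PP p t f) ω := congrFun (sg_add _ s t f) ω

/-- relaxation indicator behind the front, restricted to sites left of `x` -/
def QQ (p T : ℝ) (k : ℕ) (x : ℤ) (ω : St a b) : ℝ :=
  if fr ω + k < x then RR p a b (fr ω + k) T ω else 0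

def HH (p T : ℝ) (k : ℕ) (ω : St a b) : ℝ := RR p a b (fr ω + k) T ω

section
variable (E : EastProcess)

lemma QQ_nonneg {T : ℝ} (hT : 0 ≤ T) (k : ℕ) (x : ℤ) (ω : St a b) : 0 ≤ QQ E.p T k x ω := by
  unfold QQ; split_ifs
  · exact RR_nonneg E hT ω
  · exact le_rfl

lemma QQ_le_one {T : ℝ} (hT : 0 ≤ T) (k : ℕ) (x : ℤ) (ω : St a b) : QQ E.p T k x ω ≤ 1 := by
  unfold QQ; split_ifs
  · exact RR_le_one E hT ω
  · norm_num

lemma QQ_mono {T : ℝ} (hT : 0 ≤ T) (k : ℕ) {x x' : ℤ} (h : x ≤ x') (ω : St a b) :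
    QQ E.p T k x ω ≤ QQ E.p T k x' ω := by
  unfold QQ
  by_cases h1 : fr ω + k < x
  · rw [if_pos h1, if_pos (by omega)]
  · rw [if_neg h1]; exact QQ_nonneg E hT k x' ω

lemma QQ_split (hab : a ≤ b + 1) {T : ℝ} (hT : 0 ≤ T) (k : ℕ) (x x' : ℤ) (ω : St a b) :
    QQ E.p T k x ω ≤ QQ E.p T k x' ω +
      ∑ y ∈ Finset.Ico (max a x') x, RR E.p a b y T ω := by
  have hs : 0 ≤ ∑ y ∈ Finset.Ico (max a x') x, RR E.p a b y T ω :=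
    Finset.sum_nonneg fun y _ => RR_nonneg E hT ω
  by_cases h1 : fr ω + k < x
  · by_cases h2 : fr ω + k < x'
    · unfold QQ; rw [if_pos h1, if_pos h2]; linarith
    · have h0 := QQ_nonneg E hT k x' ω
      have hm : fr ω + k ∈ Finset.Ico (max a x') x := by
        have := fr_ge hab ω
        simp only [Finset.mem_Ico, max_le_iff]; omega
      have := Finset.single_le_sum (f := fun y => RR E.p a b y T ω)
        (fun y _ => RR_nonneg E hT ω) hm
      unfold QQ at h0 ⊢; rw [if_pos h1]
      linarith
  · have h0 := QQ_nonneg E hT k x' ω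
    unfold QQ at h0 ⊢; rw [if_neg h1]; linarith

variable (hgap : 0 < gap E)
include hgap

lemma grid (hab : a ≤ b + 1) {T : ℝ} (hT : 0 ≤ T) (k Δ : ℕ) {δ : ℝ} (hδ : 0 ≤ δ) (j : ℕ) :
    ∀ ω : St a b, PP E.p (j * δ) (QQ E.p T k (fr ω)) ω ≤
      j * (Δ * Real.exp (kap E.p * Δ / 2 - lam0 E * T) + Real.exp (2 * δ - Δ)) := by
  have hp0 := E.hp0.le
  have hp1 := E.hp1.le
  set c := Δ * Real.exp (kap E.p * Δ / 2 - lam0 E * T) + Real.exp (2 * δ - Δ) with hc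
  have hc0 : 0 ≤ c := by positivity
  induction j with
  | zero =>
    intro ω
    simp only [Nat.cast_zero, zero_mul]
    rw [PP, PV, sg_zero]
    unfold QQ; rw [if_neg (by omega)]
  | succ j ih =>
    intro ω
    set x0 := fr ω with hx0
    have hjδ : 0 ≤ (j:ℝ) * δ := by positivity
    have key : ∀ ω' : St a b, PP E.p (j * δ) (QQ E.p T k x0) ω' ≤
        (j * c + (if (Δ:ℝ) ≤ (-1) * ((fr ω' : ℝ) - x0) then 1 else 0)) +
        ∑ y ∈ Finset.Ico (max a (x0 - Δ)) x0, PP E.p (j * δ) (RR E.p a b y T) ω' := by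
      intro ω'
      have hsum : 0 ≤ ∑ y ∈ Finset.Ico (max a (x0 - Δ)) x0, PP E.p (j * δ) (RR E.p a b y T) ω' :=
        Finset.sum_nonneg fun y _ => PV_nonneg hp0 hp1 (fun _ => le_rfl)
          (fun ω => RR_nonneg E hT ω) hjδ ω'
      have hjc : 0 ≤ j * c := by positivity
      by_cases h : fr ω' ≤ x0 - Δ
      · have h1 : PP E.p (j * δ) (QQ E.p T k x0) ω' ≤ 1 :=
          PV_le hp0 hp1 (fun _ => le_rfl) zero_le_one (fun ω => QQ_le_one E hT k x0 ω) hjδ ω'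
        have h2 : (Δ:ℝ) ≤ (-1) * ((fr ω' : ℝ) - x0) := by
          have : (fr ω' : ℝ) ≤ x0 - Δ := by exact_mod_cast h
          linarith
        rw [if_pos h2]; linarith
      · have h1 : PP E.p (j * δ) (QQ E.p T k x0) ω' ≤ PP E.p (j * δ) (fun ω =>
            QQ E.p T k (fr ω') ω + ∑ y ∈ Finset.Ico (max a (x0 - Δ)) x0, RR E.p a b y T ω) ω' := by
          refine PV_mono hp0 hp1 (fun _ => le_rfl) (fun ω => ?_) hjδ ω'
          have h3 := QQ_split E hab hT k x0 (fr ω') ω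
          have h4 : ∑ y ∈ Finset.Ico (max a (fr ω')) x0, RR E.p a b y T ω ≤
              ∑ y ∈ Finset.Ico (max a (x0 - Δ)) x0, RR E.p a b y T ω := by
            refine Finset.sum_le_sum_of_subset_of_nonneg ?_ fun y _ _ => RR_nonneg E hT ω
            intro y hy; simp only [Finset.mem_Ico, max_le_iff] at hy ⊢; omega
          linarith
        rw [PP_add, PP_sum] at h1
        have h5 := ih ω'
        have h6 : (0:ℝ) ≤ if (Δ:ℝ) ≤ (-1) * ((fr ω' : ℝ) - x0) then 1 else 0 := by
          split_ifs <;> norm_num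
        linarith
    have ht : ((j + 1 : ℕ) : ℝ) * δ = δ + j * δ := by push_cast; ring
    rw [ht, PP_add_time]
    have h1 := PV_mono hp0 hp1 (V := fun _ => (0:ℝ)) (fun _ => le_rfl) key hδ ω
    refine h1.trans ?_
    rw [PP_add, PP_add, PP_sum, PP, P_const hp0 hp1 _ hδ]
    have h2 := front_tail hp0 hp1 hab (-1) (Or.inr rfl) hδ ω Δ
    have h3 : ∑ y ∈ Finset.Ico (max a (x0 - Δ)) x0,
        PV E.p (fun _ => (0:ℝ)) δ (PP E.p (j * δ) (RR E.p a b y T)) ω ≤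
        ∑ y ∈ Finset.Ico (max a (x0 - Δ)) x0, Real.exp (kap E.p * Δ / 2 - lam0 E * T) := by
      refine Finset.sum_le_sum fun y hy => ?_
      simp only [Finset.mem_Ico, max_le_iff] at hy
      have h4 := PP_add_time E.p δ (j * δ) (RR E.p a b y T) ω
      rw [← h4]
      obtain ⟨n, hn⟩ := Int.eq_ofNat_of_zero_le (a := x0 - 1 - y) (by omega)
      have hnn : y + n + 1 = x0 := by omega
      have hb := fr_le hab ω
      refine (RR_pt E hgap (by omega) hT (by positivity) (n := n) (by omega)
        (by rw [hnn]; exact fr_false hab ω)).trans ?_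
      have hk := kap_nonneg E.hp0 E.hp1
      have hnΔ : (n:ℝ) ≤ Δ := by exact_mod_cast (by omega : n ≤ Δ)
      gcongr
    rw [Finset.sum_const, nsmul_eq_mul] at h3
    have hcard : ((Finset.Ico (max a (x0 - Δ)) x0).card : ℝ) ≤ Δ := by
      have : (Finset.Ico (max a (x0 - Δ)) x0).card ≤ Δ := by
        rw [Int.card_Ico]; omega
      exact_mod_cast this
    have h5 : ((Finset.Ico (max a (x0 - Δ)) x0).card : ℝ) * Real.exp (kap E.p * Δ / 2 - lam0 E * T)
      ≤ Δ * Real.exp (kap E.p * Δ / 2 - lam0 E * T) := by gcongr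
    push_cast
    have : ((j:ℝ) + 1) * c = j * c + c := by ring
    rw [this]
    simp only [hc] at h2 h3 h5 ⊢
    linarith

end
end EP
end

open MeasureTheory ProbabilityTheory Filter Topology
noncomputable section
namespace EP
set_option linter.unusedVariables false
variable {a b : ℤ}

/-- configuration with a single zero at the origin in `[a,b]`. -/
def om0 : St a b := fun i => decide (i.1 ≠ 0)

lemma rd_om0 (ha : a ≤ 0) (hb : 0 ≤ b) {x : ℤ} (hx : x ≤ b) : rd (om0 : St a b) x = decide (x ≠ 0) := by
  unfold rd om0
  by_cases h : x ∈ Finset.Icc a b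
  · simp [h]
  · rw [dif_neg h]
    have : x < a := by simp only [Finset.mem_Icc] at h; omega
    have h0 : x ≠ 0 := by omega
    simp [this, h0]

lemma fr_zero (ha : a ≤ 0) {n : ℕ} (hb : (n:ℤ) = b) {ω : St a b}
    (hω : ∀ x, (x ≤ 0 ∨ 0 + (n:ℤ) < x) → rd ω x = rd (om0 : St a b) x) : fr ω = 0 := by
  apply fr_unique
  · rw [hω 0 (Or.inl le_rfl), rd_om0 ha (by omega) (by omega)]; rfl
  · intro x hx
    rw [hω x (Or.inl hx.le), rd_om0 ha (by omega) (by omega)]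
    simp; omega

section
variable (E : EastProcess)

lemma HH_nonneg {T : ℝ} (hT : 0 ≤ T) (k : ℕ) (ω : St a b) : 0 ≤ HH E.p T k ω := RR_nonneg E hT ω

lemma HH_le_one {T : ℝ} (hT : 0 ≤ T) (k : ℕ) (ω : St a b) : HH E.p T k ω ≤ 1 := RR_le_one E hT ω

variable (hgap : 0 < gap E)
include hgap

/-- late times -/
lemma late_pt (hab : a ≤ b + 1) {T : ℝ} (hT : 0 ≤ T) (k Δ d : ℕ) {δ : ℝ} (hδ : 0 ≤ δ) (J : ℕ)
    (ω : St a b) : PP E.p (J * δ) (HH E.p T k) ω ≤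
      J * (Δ * Real.exp (kap E.p * Δ / 2 - lam0 E * T) + Real.exp (2 * δ - Δ)) +
      (E.p ^ d + Real.exp (kap E.p * (k + d : ℕ) / 2 - gap E * (J * δ))) +
      (if fr ω < a + k + d then 1 else 0) := by
  have hp0 := E.hp0.le
  have hp1 := E.hp1.le
  have hJ : 0 ≤ (J:ℝ) * δ := by positivity
  by_cases h : fr ω < a + k + d
  · rw [if_pos h]
    have h1 : PP E.p (J * δ) (HH E.p T k) ω ≤ 1 :=
      PV_le hp0 hp1 (fun _ => le_rfl) zero_le_one (fun ω => HH_le_one E hT k ω) hJ ω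
    have : 0 ≤ E.p ^ d := by positivity
    have : 0 ≤ (J:ℝ) * (Δ * Real.exp (kap E.p * Δ / 2 - lam0 E * T) + Real.exp (2 * δ - Δ)) := by
      positivity
    have := Real.exp_pos (kap E.p * (k + d : ℕ) / 2 - gap E * (J * δ))
    linarith
  · rw [if_neg h, add_zero]
    have hb := fr_le hab ω
    have h1 : PP E.p (J * δ) (HH E.p T k) ω ≤ PP E.p (J * δ) (fun ω' => QQ E.p T k (fr ω) ω' +
        ones (fr ω - k - d - 1) d ω') ω := by
      refine PV_mono hp0 hp1 (fun _ => le_rfl) (fun ω' => ?_) hJ ω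
      by_cases h2 : fr ω' + k < fr ω
      · have := (ones_bd (fr ω - k - d - 1) d ω').1
        unfold QQ HH; rw [if_pos h2]; linarith
      · have h3 : ones (fr ω - k - d - 1) d ω' = 1 := by
          unfold ones
          rw [if_pos]
          intro x hx hx2
          exact fr_true hab ω' (by omega)
        have := QQ_nonneg E hT k (fr ω) ω'
        have := HH_le_one E hT k ω'
        rw [h3]; linarith
    rw [PP_add] at h1
    have h4 := grid E hgap hab hT k Δ hδ J ω
    have h5 := speed E hgap (a := a) (b := b) (y := fr ω - k - d - 1) (by omega) hJ (d := d)
      (n := k + d) (by omega) (by push_cast; omega) (ω := ω)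
      (by
        have : fr ω - k - d - 1 + ((k + d : ℕ) : ℤ) + 1 = fr ω := by push_cast; ring
        rw [this]; exact fr_false hab ω)
    linarith

lemma late (hab : a ≤ b + 1) (ha : a ≤ 0) {n : ℕ} (hb : (n:ℤ) = b)
    {T : ℝ} (hT : 0 ≤ T) (k Δ d : ℕ) {δ : ℝ} (hδ : 0 ≤ δ) (J : ℕ)
    {s : ℝ} (hs : 0 ≤ s) : Av E.p 0 n (PP E.p (s + J * δ) (HH E.p T k)) (om0 : St a b) ≤
      J * (Δ * Real.exp (kap E.p * Δ / 2 - lam0 E * T) + Real.exp (2 * δ - Δ)) +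
      (E.p ^ d + Real.exp (kap E.p * (k + d : ℕ) / 2 - gap E * (J * δ))) +
      Real.exp (2 * s + a + k + d) := by
  have hp0 := E.hp0.le
  have hp1 := E.hp1.le
  refine Av_le hp0 hp1 fun ω hω => ?_
  have hf := fr_zero ha hb hω
  rw [PP_add_time]
  refine (PV_mono hp0 hp1 (V := fun _ => (0:ℝ)) (fun _ => le_rfl)
    (late_pt E hgap hab hT k Δ d hδ J) hs ω).trans ?_
  rw [PP_add, PP, P_const hp0 hp1 _ hs]
  have h2 := front_tail hp0 hp1 hab (-1) (Or.inr rfl) hs ω (-(a + k + d : ℤ))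
  have h3 : PV E.p (fun _ => (0:ℝ)) s (fun ω => if fr ω < a + k + d then (1:ℝ) else 0) ω ≤
    PV E.p (fun _ => (0:ℝ)) s (fun ω' => if (-(a + k + d : ℤ):ℝ) ≤ (-1) * ((fr ω' : ℝ) - fr ω)
      then (1:ℝ) else 0) ω := by
    refine PV_mono hp0 hp1 (fun _ => le_rfl) (fun ω' => ?_) hs ω
    by_cases h : fr ω' < a + k + d
    · rw [if_pos h, if_pos]
      have : (fr ω' : ℝ) ≤ (a + k + d : ℤ) := by exact_mod_cast h.le
      rw [hf]; push_cast at this ⊢; linarith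
    · rw [if_neg h]; split_ifs <;> norm_num
  have h4 : Real.exp (2 * s - (-(a + k + d : ℤ):ℝ)) = Real.exp (2 * s + a + k + d) := by
    congr 1; push_cast; ring
  rw [h4] at h2
  linarith

/-- early times -/
lemma early (hab : a ≤ b + 1) (ha : a ≤ 0) {n : ℕ} (hb : (n:ℤ) = b)
    {T : ℝ} (hT : 0 ≤ T) (k Δ r : ℕ) {δ : ℝ} (hδ : 0 ≤ δ) (J : ℕ) (hr : r + k ≤ n) :
    Av E.p 0 n (PP E.p (J * δ) (HH E.p T k)) (om0 : St a b) ≤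
      J * (Δ * Real.exp (kap E.p * Δ / 2 - lam0 E * T) + Real.exp (2 * δ - Δ)) +
      Real.exp (2 * (J * δ) - r) + (r + k + 1) * Real.exp (-(lam0 E * T)) := by
  have hp0 := E.hp0.le
  have hp1 := E.hp1.le
  have hJ : 0 ≤ (J:ℝ) * δ := by positivity
  have hpt : ∀ ω', (∀ x, (x ≤ 0 ∨ 0 + (n:ℤ) < x) → rd ω' x = rd (om0 : St a b) x) →
      PP E.p (J * δ) (HH E.p T k) ω' ≤
      (J * (Δ * Real.exp (kap E.p * Δ / 2 - lam0 E * T) + Real.exp (2 * δ - Δ)) +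
        Real.exp (2 * (J * δ) - r)) +
      ∑ y ∈ Finset.range (r + k + 1), PP E.p (J * δ) (RR E.p a b (y:ℤ) T) ω' := by
    intro ω hω
    have hf := fr_zero ha hb hω
    have h1 : PP E.p (J * δ) (HH E.p T k) ω ≤ PP E.p (J * δ) (fun ω' => (QQ E.p T k (fr ω) ω' +
        (if (r:ℝ) ≤ 1 * ((fr ω' : ℝ) - fr ω) then 1 else 0)) +
        ∑ y ∈ Finset.range (r + k + 1), RR E.p a b (y:ℤ) T ω') ω := by
      refine PV_mono hp0 hp1 (fun _ => le_rfl) (fun ω' => ?_) hJ ω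
      have hs : 0 ≤ ∑ y ∈ Finset.range (r + k + 1), RR E.p a b (y:ℤ) T ω' :=
        Finset.sum_nonneg fun y _ => RR_nonneg E hT ω'
      have hi : (0:ℝ) ≤ (if (r:ℝ) ≤ 1 * ((fr ω' : ℝ) - fr ω) then 1 else 0) := by
        split_ifs <;> norm_num
      have hq := QQ_nonneg E hT k (fr ω) ω'
      by_cases h2 : fr ω' + k < fr ω
      · have : HH E.p T k ω' = QQ E.p T k (fr ω) ω' := by unfold HH QQ; rw [if_pos h2]
        linarith
      by_cases h3 : (r:ℤ) ≤ fr ω'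
      · have h4 : (r:ℝ) ≤ 1 * ((fr ω' : ℝ) - fr ω) := by
          rw [hf]; have : (r:ℝ) ≤ fr ω' := by exact_mod_cast h3
          push_cast; linarith
        rw [if_pos h4]
        have := HH_le_one E hT k ω'
        linarith
      · obtain ⟨m, hm⟩ := Int.eq_ofNat_of_zero_le (a := fr ω' + k) (by omega)
        have h5 := Finset.single_le_sum (f := fun y : ℕ => RR E.p a b (y:ℤ) T ω')
          (s := Finset.range (r + k + 1)) (fun y _ => RR_nonneg E hT ω')
          (show m ∈ _ by simp only [Finset.mem_range]; omega)
        have : HH E.p T k ω' = RR E.p a b (m:ℤ) T ω' := by unfold HH; rw [hm]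
        linarith
    rw [PP_add, PP_add, PP_sum] at h1
    have h4 := grid E hgap hab hT k Δ hδ J ω
    have h2 := front_tail hp0 hp1 hab 1 (Or.inl rfl) hJ ω r
    linarith
  refine (Av_mono_at hp0 hp1 hpt).trans ?_
  rw [Av_add, Av_sum, Av_const]
  have h3 : ∑ y ∈ Finset.range (r + k + 1),
      Av E.p 0 n (fun ω => PP E.p (J * δ) (RR E.p a b (y:ℤ) T) ω) (om0 : St a b) ≤
      ∑ y ∈ Finset.range (r + k + 1), Real.exp (-(lam0 E * T)) := by
    refine Finset.sum_le_sum fun y hy => ?_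
    simp only [Finset.mem_range] at hy
    obtain ⟨m, hm⟩ := Nat.exists_eq_add_of_le (show y ≤ n by omega)
    subst hm
    show Av E.p 0 (y + m) (PP E.p (J * δ) (RR E.p a b (y:ℤ) T)) (om0 : St a b) ≤ _
    rw [Av_add_index, Av_of_ind (y := 0) (n := y), zero_add]
    · exact RR_int E hgap hab (by omega) hT hJ (by push_cast at hb; omega) _
    · intro x _ hx
      exact ind_left hp0 hp1 (V := fun _ => (0:ℝ)) (fun _ => le_rfl) (fun _ _ _ _ => rfl)
        (RR_ind E hT) hJ x (by omega)
  rw [Finset.sum_const, Finset.card_range, nsmul_eq_mul] at h3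
  push_cast at h3
  linarith

end
end EP
end

open MeasureTheory ProbabilityTheory Filter Topology
noncomputable section
namespace EP
set_option linter.unusedVariables false
variable {a b : ℤ}

lemma gridc {κ l : ℝ} (hκ : 0 ≤ κ) (hl : 0 < l) {M : ℕ} (hM0 : 1 ≤ M) (hM : 16 * κ ≤ l * M) (d : ℕ)
    {δ : ℝ} (hδ : δ ≤ d / (4 * M)) :
    ((d / M : ℕ) : ℝ) * Real.exp (κ * (d / M : ℕ) / 2 - l * (d / 16)) +
      Real.exp (2 * δ - (d / M : ℕ)) ≤
    d * Real.exp (0 - l / 32 * d) + Real.exp (1 - 1 / (2 * M) * d) := by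
  have hM' : (1:ℝ) ≤ M := by exact_mod_cast hM0
  have hd : (0:ℝ) ≤ d := Nat.cast_nonneg d
  have h1 : ((d / M : ℕ) : ℝ) ≤ d / M := Nat.cast_div_le
  have h1' : (d:ℝ) / M ≤ d := div_le_self hd hM'
  have h2 : (d:ℝ) / M - 1 ≤ ((d / M : ℕ) : ℝ) := by
    have : d < M * (d / M + 1) := Nat.lt_mul_div_succ d hM0
    have h3 : (d:ℝ) < M * (((d / M : ℕ) : ℝ) + 1) := by exact_mod_cast this
    rw [sub_le_iff_le_add, div_le_iff₀ (by positivity)]; linarith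
  have h4 : κ * ((d / M : ℕ) : ℝ) ≤ l * d / 16 := by
    have : κ ≤ l * M / 16 := by linarith
    calc κ * ((d / M : ℕ) : ℝ) ≤ (l * M / 16) * (d / M) := by gcongr
      _ = l * d / 16 := by field_simp
  have h5 : (d:ℝ) / (4 * M) = (d / M) / 4 := by field_simp
  have h6 : 1 / (2 * (M:ℝ)) * d = (d / M) / 2 := by field_simp
  refine add_le_add (mul_le_mul (by linarith) (Real.exp_le_exp.2 (by linarith))
    (Real.exp_pos _).le hd) (Real.exp_le_exp.2 ?_)
  · rw [h6]; rw [h5] at hδ; linarith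

section
variable (E : EastProcess) (hgap : 0 < gap E)
include hgap

set_option maxHeartbeats 1000000 in
lemma behind : ∃ B : ℕ → ℝ, ExpSmall B ∧ (∀ d, 0 ≤ B d) ∧ ∃ C : ℝ, ∀ (a b : ℤ) (n d k : ℕ) (s : ℝ), a ≤ 0 → (n:ℤ) = b → k ≤ 2 * d →
    0 ≤ s → C * (s + d / 16) ≤ -a → C * (s + d / 16) ≤ n →
    Av E.p 0 n (PP E.p s (HH E.p (d / 16) k)) (om0 : St a b) ≤ B d := by
  have hp0 := E.hp0.le
  have hp1 := E.hp1.le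
  have hκ := kap_nonneg E.hp0 E.hp1
  have hl := lam0_pos E hgap
  set κ := kap E.p
  set l := lam0 E
  set γ := gap E
  obtain ⟨N, hN⟩ := exists_nat_ge (max 1 ((1 + 2 * κ) / γ))
  obtain ⟨M, hM⟩ := exists_nat_ge (max 1 (16 * κ / l))
  have hN1 : (1:ℝ) ≤ N := (le_max_left _ _).trans hN
  have hM1 : (1:ℝ) ≤ M := (le_max_left _ _).trans hM
  have hN2 : 1 + 2 * κ ≤ γ * N := by
    have := (le_max_right _ _).trans hN
    rw [div_le_iff₀ hgap] at this; linarith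
  have hM2 : 16 * κ ≤ l * M := by
    have := (le_max_right _ _).trans hM
    rw [div_le_iff₀ hl] at this; linarith
  have hM0 : 1 ≤ M := by exact_mod_cast hM1
  have hpexp : ExpSmall (fun d => E.p ^ d) := by
    refine (ExpSmall.exp (c := 0) (ε := -Real.log E.p) ?_).mono fun d => ?_
    · have := Real.log_neg E.hp0 E.hp1; linarith
    · rw [show 0 - -Real.log E.p * (d:ℝ) = (d:ℝ) * Real.log E.p by ring, mul_comm,
        ← Real.rpow_def_of_pos E.hp0, Real.rpow_natCast]
  refine ⟨fun d => (4 * N * M : ℕ) * (d * Real.exp (0 - l / 32 * d) + Real.exp (1 - 1 / (2 * M) * d)) +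
    (E.p ^ d + 2 * Real.exp (0 - 1 * d)) +
    ((2 * N + 3) * (d * Real.exp (0 - l / 16 * d)) + Real.exp (0 - l / 16 * d)), ?_, ?_,
    max 66 ((2 * N + 3) * 16), ?_⟩
  · refine ((ExpSmall.const_mul _ (by positivity) ?_).add ?_).add ?_
    · exact (ExpSmall.exp (by positivity)).nat_mul.add (ExpSmall.exp (by positivity))
    · exact hpexp.add (ExpSmall.const_mul _ (by positivity) (ExpSmall.exp (by positivity)))
    · exact (ExpSmall.const_mul _ (by positivity) (ExpSmall.exp (by positivity)).nat_mul).add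
        (ExpSmall.exp (by positivity))
  · intro d
    have := E.hp0
    positivity
  intro a b n d k s ha hb hk hs hCa hCn
  have hab : a ≤ b + 1 := by omega
  have hd : (0:ℝ) ≤ d := Nat.cast_nonneg d
  have hT : (0:ℝ) ≤ d / 16 := by positivity
  have hkr : (k:ℝ) ≤ 2 * d := by exact_mod_cast hk
  have hst : 0 ≤ s + (d:ℝ) / 16 := by positivity
  have hC1 : 66 * (s + (d:ℝ) / 16) ≤ -a :=
    (mul_le_mul_of_nonneg_right (le_max_left _ _) hst).trans hCa
  have hC2 : ((2 * N + 3) * 16) * (s + (d:ℝ) / 16) ≤ n :=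
    (mul_le_mul_of_nonneg_right (le_max_right _ _) hst).trans hCn
  by_cases hcase : (N:ℝ) * d ≤ s
  · have hδ : (0:ℝ) ≤ d / (4 * M) := by positivity
    have hJδ : ((4 * N * M : ℕ) : ℝ) * ((d:ℝ) / (4 * M)) = N * d := by push_cast; field_simp
    have h1 := late E hgap hab ha hb hT k (d / M) d hδ (4 * N * M) (s := s - N * d) (by linarith)
    rw [hJδ, sub_add_cancel] at h1
    refine h1.trans ?_
    have h2 := gridc hκ hl hM0 hM2 d (le_refl ((d:ℝ) / (4 * M)))
    have h3 : Real.exp (κ * (k + d : ℕ) / 2 - γ * (N * d)) ≤ Real.exp (0 - 1 * d) := by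
      apply Real.exp_le_exp.2
      push_cast
      have : κ * (k + d) ≤ κ * (3 * d) := by gcongr; linarith
      nlinarith
    have h4 : Real.exp (2 * (s - N * d) + a + k + d) ≤ Real.exp (0 - 1 * d) := by
      apply Real.exp_le_exp.2
      have : 0 ≤ (N:ℝ) * d := by positivity
      nlinarith
    have h5 := mul_le_mul_of_nonneg_left h2 (Nat.cast_nonneg (α := ℝ) (4 * N * M))
    have h6 : 0 ≤ ((2 * N + 3) * (d * Real.exp (0 - l / 16 * d)) + Real.exp (0 - l / 16 * d)) := by
      positivity
    simp only [κ, l, γ] at *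
    linarith
  · have hJ0 : (0:ℝ) < ((4 * N * M : ℕ) : ℝ) := by push_cast; positivity
    have hδ : (0:ℝ) ≤ s / ((4 * N * M : ℕ) : ℝ) := by positivity
    have hJδ : ((4 * N * M : ℕ) : ℝ) * (s / ((4 * N * M : ℕ) : ℝ)) = s := by field_simp
    have hrn : (2 * N + 1) * d + k ≤ n := by
      have : (((2 * N + 1) * d + k : ℕ) : ℝ) ≤ n := by
        push_cast
        have : 0 ≤ ((2 * (N:ℝ) + 3) * 16) * s := by positivity
        nlinarith
      exact_mod_cast this
    have h1 := early E hgap hab ha hb hT k (d / M) ((2 * N + 1) * d) hδ (4 * N * M) hrn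
    rw [hJδ] at h1
    refine h1.trans ?_
    have h2 := gridc hκ hl hM0 hM2 d (δ := s / ((4 * N * M : ℕ) : ℝ)) (by
      rw [div_le_div_iff₀ hJ0 (by positivity)]; push_cast
      have := mul_le_mul_of_nonneg_right (not_le.1 hcase).le (show (0:ℝ) ≤ 4 * M by positivity)
      linarith)
    have h3 : Real.exp (2 * s - ((2 * N + 1) * d : ℕ)) ≤ Real.exp (0 - 1 * d) := by
      apply Real.exp_le_exp.2
      push_cast
      nlinarith
    have h4 : ((((2 * N + 1) * d : ℕ) : ℝ) + k + 1) * Real.exp (-(l * (d / 16))) ≤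
        ((2 * N + 3) * (d * Real.exp (0 - l / 16 * d)) + Real.exp (0 - l / 16 * d)) := by
      rw [show -(l * ((d:ℝ) / 16)) = 0 - l / 16 * d by ring]
      push_cast
      have h8 := mul_le_mul_of_nonneg_right hkr (Real.exp_pos (0 - l / 16 * d)).le
      linarith
    have h5 := mul_le_mul_of_nonneg_left h2 (Nat.cast_nonneg (α := ℝ) (4 * N * M))
    have h6 : 0 ≤ E.p ^ d := by positivity
    have h7 := Real.exp_pos (0 - 1 * (d:ℝ))
    simp only [κ, l, γ] at *
    linarith
end
end EP
end

open MeasureTheory ProbabilityTheory Filter Topology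
noncomputable section
namespace EP
set_option linter.unusedVariables false
variable {a b : ℤ}

def fi (z : ℤ) (ω : St a b) : ℝ := if fr ω = z then 1 else 0

lemma fi_ind (hab : a ≤ b + 1) (z : ℤ) : ∀ x, z < x → Ind x (fi z : St a b → ℝ) := by
  intro x hx ω c
  have key : ∀ ω : St a b, fr ω = z ↔ (rd ω z = false ∧ ∀ y < z, rd ω y = true) := by
    intro ω
    constructor
    · rintro rfl; exact ⟨fr_false hab ω, fun y hy => fr_true hab ω hy⟩
    · rintro ⟨h1, h2⟩; exact fr_unique h1 h2
  unfold fi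
  have : fr (upd x c ω) = z ↔ fr ω = z := by
    rw [key, key, rd_upd_ne (by omega)]
    refine and_congr_right fun _ => forall₂_congr fun y hy => ?_
    rw [rd_upd_ne (by omega)]
  simp only [this]

lemma fi_abs (z : ℤ) (ω : St a b) : |fi z ω| ≤ 1 := by unfold fi; split_ifs <;> simp
lemma fi_nonneg (z : ℤ) (ω : St a b) : 0 ≤ fi z ω := by unfold fi; split_ifs <;> simp

section
variable (E : EastProcess)

lemma step1 (hab : a ≤ b + 1) {d : ℕ} {g : ℤ → St a b → ℝ} (hg : ∀ z x : ℤ, x < z + d → Ind x (g z))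
    (hgc : ∀ z ω, |g z ω| ≤ 2) {t : ℝ} (ht : 0 ≤ t) (htd : t ≤ d / 16) (ω : St a b) :
    |PP E.p t (fun ω => g (fr ω) ω) ω -
      ∑ z ∈ Finset.Icc (fr ω - (d / 2 : ℕ)) (fr ω + (d / 2 : ℕ)), PP E.p t (fi z) ω * PP E.p t (g z) ω| ≤
    4 * Real.exp (0 - 3 / 8 * d) + (d + 1) * (2 * Real.exp (0 - 1 * d)) := by
  have hp0 := E.hp0.le
  have hp1 := E.hp1.le
  set h := d / 2 with hh
  have hhd : (d:ℝ) / 2 ≤ h + 1 := by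
    have : d ≤ 2 * (h + 1) := by omega
    have : (d:ℝ) ≤ 2 * (h + 1) := by exact_mod_cast this
    linarith
  set I := Finset.Icc (fr ω - (h : ℕ)) (fr ω + (h : ℕ)) with hI
  have h1 : |PP E.p t (fun ω => g (fr ω) ω) ω - PP E.p t (fun ω => ∑ z ∈ I, fi z ω * g z ω) ω| ≤
      4 * Real.exp (0 - 3 / 8 * d) := by
    rw [← PP_sub]
    set D : St a b → ℝ := fun ω => g (fr ω) ω - ∑ z ∈ I, fi z ω * g z ω with hD
    set U : St a b → ℝ := fun ω' => 2 * ((if (h + 1 : ℝ) ≤ 1 * ((fr ω' : ℝ) - fr ω) then 1 else 0) +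
      (if (h + 1 : ℝ) ≤ (-1) * ((fr ω' : ℝ) - fr ω) then 1 else 0)) with hU
    have hDU : ∀ ω', |D ω'| ≤ U ω' := by
      intro ω'
      simp only [hD, hU]
      have i1 : (0:ℝ) ≤ (if (h + 1 : ℝ) ≤ 1 * ((fr ω' : ℝ) - fr ω) then 1 else 0) := by
        split_ifs <;> norm_num
      have i2 : (0:ℝ) ≤ (if (h + 1 : ℝ) ≤ (-1) * ((fr ω' : ℝ) - fr ω) then 1 else 0) := by
        split_ifs <;> norm_num
      have hsum : ∑ z ∈ I, fi z ω' * g z ω' = if fr ω' ∈ I then g (fr ω') ω' else 0 := by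
        simp only [fi, ite_mul, one_mul, zero_mul]
        rw [Finset.sum_ite_eq]
      rw [hsum]
      by_cases hm : fr ω' ∈ I
      · rw [if_pos hm, sub_self, abs_zero]; positivity
      · rw [if_neg hm, sub_zero]
        refine (hgc _ _).trans ?_
        rw [hI, Finset.mem_Icc] at hm
        by_cases h3 : fr ω + h < fr ω'
        · have : (fr ω : ℝ) + h + 1 ≤ fr ω' := by exact_mod_cast h3
          rw [if_pos (show (h + 1 : ℝ) ≤ 1 * ((fr ω' : ℝ) - fr ω) by linarith)]; linarith
        · have h4 : fr ω' + h + 1 ≤ fr ω := by omega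
          have : (fr ω' : ℝ) + h + 1 ≤ fr ω := by exact_mod_cast h4
          rw [if_pos (show (h + 1 : ℝ) ≤ (-1) * ((fr ω' : ℝ) - fr ω) by linarith)]; linarith
    have hu := PV_mono hp0 hp1 (V := fun _ => (0:ℝ)) (fun _ => le_rfl)
      (fun ω' => (abs_le.1 (hDU ω')).2) ht ω
    have hl := PV_mono hp0 hp1 (V := fun _ => (0:ℝ)) (f := fun ω => (-1) * U ω) (g := D)
      (fun _ => le_rfl)
      (fun ω' => by have := (abs_le.1 (hDU ω')).1; linarith) ht ω
    rw [PP_smul] at hl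
    have hb : PP E.p t U ω ≤ 4 * Real.exp (0 - 3 / 8 * d) := by
      rw [hU, PP_smul, PP_add]
      have e1 := front_tail hp0 hp1 hab 1 (Or.inl rfl) ht ω (h + 1)
      have e2 := front_tail hp0 hp1 hab (-1) (Or.inr rfl) ht ω (h + 1)
      have e3 : Real.exp (2 * t - (h + 1)) ≤ Real.exp (0 - 3 / 8 * d) :=
        Real.exp_le_exp.2 (by linarith)
      linarith
    rw [abs_le]; constructor <;> linarith
  have h2 : |PP E.p t (fun ω => ∑ z ∈ I, fi z ω * g z ω) ω -
      ∑ z ∈ I, PP E.p t (fi z) ω * PP E.p t (g z) ω| ≤ (d + 1) * (2 * Real.exp (0 - 1 * d)) := by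
    rw [PP_sum, ← Finset.sum_sub_distrib]
    refine (Finset.abs_sum_le_sum_abs _ _).trans ?_
    have : ∀ z ∈ I, |PP E.p t (fun ω => fi z ω * g z ω) ω - PP E.p t (fi z) ω * PP E.p t (g z) ω| ≤
        2 * Real.exp (0 - 1 * d) := by
      intro z _
      refine (product hp0 hp1 (z := z) (y := z + d) (by omega) (fi_ind hab z) (fi_abs z) (hg z)
        (hgc z) ht ω).trans ?_
      have : Real.exp (16 * t - 2 * (((z + d : ℤ):ℝ) - z)) ≤ Real.exp (0 - 1 * d) :=
        Real.exp_le_exp.2 (by push_cast; linarith)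
      linarith
    refine (Finset.sum_le_sum this).trans ?_
    rw [Finset.sum_const, nsmul_eq_mul]
    have hc : (I.card : ℝ) ≤ d + 1 := by
      have : I.card ≤ d + 1 := by rw [hI, Int.card_Icc]; omega
      exact_mod_cast this
    gcongr
  have := abs_sub_le (PP E.p t (fun ω => g (fr ω) ω) ω) (PP E.p t (fun ω => ∑ z ∈ I, fi z ω * g z ω) ω)
    (∑ z ∈ I, PP E.p t (fi z) ω * PP E.p t (g z) ω)
  linarith

lemma short_term (hab : a ≤ b + 1) {n : ℕ} (hb : (n:ℤ) = b) {d : ℕ} {z : ℤ} (hz : 1 ≤ z + d)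
    {g : St a b → ℝ} (hg : ∀ x < z + d, Ind x g)
    (h0 : Ex E.p (z + d) g = fun _ => 0) (hgc : ∀ ω, |g ω| ≤ 2) {t : ℝ} (ht : 0 ≤ t)
    (htd : t ≤ d / 16) (ω : St a b) :
    |Av E.p 0 n (fun ω => PP E.p t (fi z) ω * PP E.p t g ω) ω| ≤ 4 * Real.exp (0 - 1 * d) := by
  have hp0 := E.hp0.le
  have hp1 := E.hp1.le
  have hm := mean_zero hp0 hp1 hg h0 ht
  set v := PP E.p t g
  set u := PP E.p t (fi z : St a b → ℝ)
  by_cases hy : z + d ≤ b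
  · rw [← Av_absorb (p := E.p) (x := z + d) (y := 0) (n := n) (by omega) (by omega)]
    refine Av_abs hp0 hp1 fun ω => ?_
    have e : Ex E.p (z + d) (fun ω => u ω * v ω) ω =
        Ex E.p (z + d) (fun ω => (u ω - Ex E.p (z + d) u ω) * v ω) ω := by
      have : Ex E.p (z + d) (fun ω => Ex E.p (z + d) u ω * v ω) ω = 0 := by
        rw [Ex_mul_left (Ex_ind _ _ _), hm ω, mul_zero]
      rw [← sub_zero (Ex E.p (z + d) (fun ω => u ω * v ω) ω), ← this, ← Ex_sub]
      congr 1; funext ω; ring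
    rw [e]
    refine Ex_abs_le hp0 hp1 fun c => ?_
    rw [abs_mul]
    have h1 := finite_speed' hp0 hp1 (fi_ind hab z) (fi_abs z) (x := z + d) (by omega) ht
      (upd (z + d) c ω)
    have h2 : |v (upd (z + d) c ω)| ≤ 2 := PV_abs hp0 hp1 (fun _ => le_rfl) hgc ht _
    have h3 : Real.exp (16 * t - 2 * (((z + d : ℤ):ℝ) - z)) ≤ Real.exp (0 - 1 * d) :=
        Real.exp_le_exp.2 (by push_cast; linarith)
    have h4 : |u (upd (z + d) c ω) - Ex E.p (z + d) u (upd (z + d) c ω)| ≤ 2 * Real.exp (0 - 1 * d) := by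
      refine h1.trans ?_; linarith
    calc _ ≤ (2 * Real.exp (0 - 1 * d)) * 2 := by gcongr
      _ = _ := by ring
  · have hv : ∀ ω, v ω = 0 := by
      intro ω
      have := hm ω
      unfold Ex at this
      rw [upd_out (by simp; omega), upd_out (by simp; omega)] at this
      linarith
    simp only [hv, mul_zero]
    rw [Av_const, abs_zero]; positivity

variable (hgap : 0 < gap E)
include hgap

lemma key_bound : ∃ B : ℕ → ℝ, ExpSmall B ∧ (∀ d, 0 ≤ B d) ∧ ∃ C : ℝ, ∀ (a b : ℤ) (n d : ℕ) (t : ℝ)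
    (g : ℤ → St a b → ℝ), a ≤ 0 → (n:ℤ) = b → 1 ≤ d → 0 ≤ t → C * t ≤ -a → C * t ≤ n →
    (∀ z x : ℤ, x < z + d → Ind x (g z)) → (∀ z, Ex E.p (z + d) (g z) = fun _ => 0) →
    (∀ z ω, |g z ω| ≤ 2) →
    |Av E.p 0 n (PP E.p t (fun ω => g (fr ω) ω)) (om0 : St a b)| ≤ B d := by
  have hp0 := E.hp0.le
  have hp1 := E.hp1.le
  obtain ⟨B, hB, hB0, C, hC⟩ := behind E hgap
  refine ⟨fun d => (4 * Real.exp (0 - 3 / 8 * d) + (d * (2 * Real.exp (0 - 1 * d)) + 2 * Real.exp (0 - 1 * d))) +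
    (2 * (d * B d + B d) + 4 * (d * Real.exp (0 - 1 * d) + Real.exp (0 - 1 * d))), ?_, ?_, C, ?_⟩
  · have e1 : ExpSmall (fun d => Real.exp (0 - 1 * d)) := ExpSmall.exp (by norm_num)
    have e2 := e1.const_mul 2 (by norm_num)
    exact ((ExpSmall.const_mul _ (by norm_num) (ExpSmall.exp (by norm_num))).add
      (e2.nat_mul.add e2)).add
      ((ExpSmall.const_mul _ (by norm_num) (hB.nat_mul.add hB)).add
        (ExpSmall.const_mul _ (by norm_num) (e1.nat_mul.add e1)))
  · intro d; have := hB0 d; positivity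
  intro a b n d t g ha hb hd1 ht hCa hCn hg h0 hgc
  have hab : a ≤ b + 1 := by omega
  have hBd := hB0 d
  by_cases htd : t ≤ d / 16
  · have hpt : ∀ ω, (∀ x, (x ≤ 0 ∨ 0 + (n:ℤ) < x) → rd ω x = rd (om0 : St a b) x) →
      |PP E.p t (fun ω => g (fr ω) ω) ω -
        ∑ z ∈ Finset.Icc (0 - ((d / 2 : ℕ):ℤ)) (0 + ((d / 2 : ℕ):ℤ)),
        PP E.p t (fi z) ω * PP E.p t (g z) ω| ≤ 4 * Real.exp (0 - 3 / 8 * d) + (d + 1) * (2 * Real.exp (0 - 1 * d)) := by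
      intro ω hω
      have := step1 E hab hg hgc ht htd ω
      rwa [fr_zero ha hb hω] at this
    set I := Finset.Icc (0 - ((d / 2 : ℕ):ℤ)) (0 + ((d / 2 : ℕ):ℤ)) with hI
    have h1 : |Av E.p 0 n (fun ω => PP E.p t (fun ω => g (fr ω) ω) ω -
        ∑ z ∈ I, PP E.p t (fi z) ω * PP E.p t (g z) ω) (om0 : St a b)| ≤
        4 * Real.exp (0 - 3 / 8 * d) + (d + 1) * (2 * Real.exp (0 - 1 * d)) := by
      refine (Av_abs_le hp0 hp1).trans (Av_le hp0 hp1 hpt)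
    rw [Av_sub, Av_sum] at h1
    have h2 : |∑ z ∈ I, Av E.p 0 n (fun ω => PP E.p t (fi z) ω * PP E.p t (g z) ω) (om0 : St a b)| ≤
        (d + 1) * (4 * Real.exp (0 - 1 * d)) := by
      refine (Finset.abs_sum_le_sum_abs _ _).trans ?_
      refine (Finset.sum_le_sum fun z hz => short_term E hab hb (d := d) (z := z) ?_ (hg z) (h0 z) (hgc z)
        ht htd _).trans ?_
      · rw [hI, Finset.mem_Icc] at hz; omega
      rw [Finset.sum_const, nsmul_eq_mul]
      have hc : (I.card : ℝ) ≤ d + 1 := by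
        have : I.card ≤ d + 1 := by rw [hI, Int.card_Icc]; omega
        exact_mod_cast this
      gcongr
    have h3 : (0:ℝ) ≤ d * B d := by positivity
    rw [abs_le] at h1 h2 ⊢
    constructor <;> linarith
  · have hs : 0 ≤ t - d / 16 := by linarith
    have hT : (0:ℝ) ≤ d / 16 := by positivity
    have hpt : ∀ ω : St a b, |PP E.p (d / 16) (fun ω => g (fr ω) ω) ω| ≤
        (4 * Real.exp (0 - 3 / 8 * d) + (d + 1) * (2 * Real.exp (0 - 1 * d))) +
        2 * ∑ k ∈ Finset.Icc (d - d / 2) (d + d / 2), HH E.p (d / 16) k ω := by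
      intro ω
      have h1 := step1 E hab hg hgc hT le_rfl ω
      have h2 : |∑ z ∈ Finset.Icc (fr ω - (d / 2 : ℕ)) (fr ω + (d / 2 : ℕ)),
          PP E.p (d / 16) (fi z) ω * PP E.p (d / 16) (g z) ω| ≤
          2 * ∑ k ∈ Finset.Icc (d - d / 2) (d + d / 2), HH E.p (d / 16) k ω := by
        refine (Finset.abs_sum_le_sum_abs _ _).trans ?_
        have h3 : ∀ z ∈ Finset.Icc (fr ω - (d / 2 : ℕ)) (fr ω + (d / 2 : ℕ)),
            |PP E.p (d / 16) (fi z) ω * PP E.p (d / 16) (g z) ω| ≤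
              2 * RR E.p a b (z + d) (d / 16) ω := by
          intro z _
          rw [abs_mul]
          have h4 : |PP E.p (d / 16) (fi z) ω| ≤ 1 := PV_abs hp0 hp1 (fun _ => le_rfl) (fi_abs z) hT _
          have h5 := relax hp0 hp1 (hg z) (h0 z) (hgc z) hT ω
          calc _ ≤ 1 * (2 * RR E.p a b (z + d) (d / 16) ω) := by gcongr
            _ = _ := one_mul _
        refine (Finset.sum_le_sum h3).trans (le_of_eq ?_)
        rw [← Finset.mul_sum]
        congr 1
        symm
        refine Finset.sum_bij (fun k _ => fr ω + (k:ℤ) - d) ?_ ?_ ?_ ?_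
        · intro k hk; simp only [Finset.mem_Icc] at hk ⊢; omega
        · intro k _ k' _ h
          have h' : fr ω + (k:ℤ) - d = fr ω + k' - d := h
          omega
        · intro z hz
          simp only [Finset.mem_Icc] at hz
          obtain ⟨m, hm⟩ := Int.eq_ofNat_of_zero_le (a := z - fr ω + d) (by omega)
          exact ⟨m, by simp only [Finset.mem_Icc]; omega, by omega⟩
        · intro k _; unfold HH; congr 1; ring
      have := abs_add_le (PP E.p (d / 16) (fun ω => g (fr ω) ω) ω - ∑ z ∈ Finset.Icc (fr ω - (d / 2 : ℕ)) (fr ω + (d / 2 : ℕ)),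
          PP E.p (d / 16) (fi z) ω * PP E.p (d / 16) (g z) ω) (∑ z ∈ Finset.Icc (fr ω - (d / 2 : ℕ)) (fr ω + (d / 2 : ℕ)),
          PP E.p (d / 16) (fi z) ω * PP E.p (d / 16) (g z) ω)
      rw [sub_add_cancel] at this
      linarith
    set F := PP E.p (d / 16) (fun ω : St a b => g (fr ω) ω) with hF
    have hsplit : PP E.p t (fun ω : St a b => g (fr ω) ω) = PP E.p (t - d / 16) F := by
      funext ω
      rw [hF, ← PP_add_time, sub_add_cancel]
    rw [hsplit]
    set U : St a b → ℝ := fun ω => (4 * Real.exp (0 - 3 / 8 * d) + (d + 1) * (2 * Real.exp (0 - 1 * d))) +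
        2 * ∑ k ∈ Finset.Icc (d - d / 2) (d + d / 2), HH E.p (d / 16) k ω with hU
    have hu : ∀ ω, |PP E.p (t - d / 16) F ω| ≤ PP E.p (t - d / 16) U ω := by
      intro ω
      have hu := PV_mono hp0 hp1 (V := fun _ => (0:ℝ)) (fun _ => le_rfl)
        (fun ω' => (abs_le.1 (hpt ω')).2) hs ω
      have hl := PV_mono hp0 hp1 (V := fun _ => (0:ℝ)) (f := fun ω => (-1) * U ω) (g := F)
        (fun _ => le_rfl)
        (fun ω' => by have := (abs_le.1 (hpt ω')).1; simp only [hU]; linarith) hs ω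
      rw [PP_smul] at hl
      rw [abs_le]
      constructor <;> linarith
    refine (Av_abs_le hp0 hp1).trans ((Av_mono hp0 hp1 hu).trans ?_)
    have e : PP E.p (t - d / 16) U = fun ω => (4 * Real.exp (0 - 3 / 8 * d) + (d + 1) * (2 * Real.exp (0 - 1 * d))) +
        2 * ∑ k ∈ Finset.Icc (d - d / 2) (d + d / 2), PP E.p (t - d / 16) (HH E.p (d / 16) k) ω := by
      funext ω
      rw [hU, PP_add, PP_smul, PP_sum, PP, P_const hp0 hp1 _ hs]
    rw [e, Av_add, Av_smul, Av_sum, Av_const]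
    have h2 : ∑ k ∈ Finset.Icc (d - d / 2) (d + d / 2),
        Av E.p 0 n (fun ω => PP E.p (t - d / 16) (HH E.p (d / 16) k) ω) (om0 : St a b) ≤ (d + 1) * B d := by
      refine (Finset.sum_le_sum fun k hk => hC a b n d k (t - d / 16) ha hb ?_ hs
        (by rw [sub_add_cancel]; exact hCa) (by rw [sub_add_cancel]; exact hCn)).trans ?_
      · simp only [Finset.mem_Icc] at hk; omega
      rw [Finset.sum_const, nsmul_eq_mul]
      have hc : (((Finset.Icc (d - d / 2) (d + d / 2)).card : ℕ) : ℝ) ≤ d + 1 := by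
        have : (Finset.Icc (d - d / 2) (d + d / 2)).card ≤ d + 1 := by rw [Nat.card_Icc]; omega
        exact_mod_cast this
      gcongr
    have h3 : (0:ℝ) ≤ d * Real.exp (0 - 1 * d) := by positivity
    have h4 := Real.exp_pos (0 - 1 * (d:ℝ))
    linarith
end
end EP
end

open MeasureTheory ProbabilityTheory Filter Topology
noncomputable section
namespace EP
set_option linter.unusedVariables false
variable {a b : ℤ}

lemma tail_sum {ε : ℝ} (hε : 0 < ε) (L m : ℕ) :
    ∑ i ∈ Finset.range m, Real.exp (-ε * (L + i + 1 : ℕ)) ≤ (1 / (1 - Real.exp (-ε))) * Real.exp (-ε * L) := by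
  have hr : Real.exp (-ε) < 1 := by rw [Real.exp_lt_one_iff]; linarith
  have e : ∀ i : ℕ, Real.exp (-ε * (L + i + 1 : ℕ)) ≤ Real.exp (-ε * L) * Real.exp (-ε) ^ i := by
    intro i
    rw [← Real.exp_nat_mul, ← Real.exp_add]
    apply Real.exp_le_exp.2; push_cast; linarith
  refine (Finset.sum_le_sum fun i _ => e i).trans ?_
  rw [← Finset.mul_sum, mul_comm]
  refine mul_le_mul_of_nonneg_right ?_ (Real.exp_pos _).le
  have h := Summable.sum_le_tsum (f := fun i : ℕ => Real.exp (-ε) ^ i) (Finset.range m)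
    (fun i _ => by positivity) (summable_geometric_of_lt_one (Real.exp_pos _).le hr)
  rw [tsum_geometric_of_lt_one (Real.exp_pos _).le hr] at h
  rw [one_div]; exact h

section
variable (E : EastProcess)  (hgap : 0 < gap E)
include hgap

lemma finite_thm : ∃ ε > 0, ∃ K : ℝ, 0 ≤ K ∧ ∃ C : ℝ, ∀ (a b : ℤ) (n L m : ℕ) (t : ℝ)
    (G : ℤ → St a b → ℝ), a ≤ 0 → (n:ℤ) = b → 0 ≤ t → C * t ≤ -a → C * t ≤ n →
    (∀ z x : ℤ, x ≤ z + L → Ind x (G z)) → (∀ z ω, |G z ω| ≤ 1) →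
    |Av E.p 0 n (PP E.p t (fun ω => G (fr ω) ω - Av E.p (fr ω + L) m (G (fr ω)) ω)) (om0 : St a b)| ≤
      K * Real.exp (-ε * L) := by
  have hp0 := E.hp0.le
  have hp1 := E.hp1.le
  obtain ⟨B, ⟨ε, hε, K, hK, hBK⟩, hB0, C, hC⟩ := key_bound E hgap
  have hr : Real.exp (-ε) < 1 := by rw [Real.exp_lt_one_iff]; linarith
  refine ⟨ε, hε, K * (1 / (1 - Real.exp (-ε))), mul_nonneg hK (by
    apply one_div_nonneg.2; linarith), C, ?_⟩
  intro a b n L m t G ha hb ht hCa hCn hG hG1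
  set g : ℕ → ℤ → St a b → ℝ := fun i z ω => Av E.p (z + L) i (G z) ω - Av E.p (z + L) (i + 1) (G z) ω
    with hg
  have htel : (fun ω : St a b => G (fr ω) ω - Av E.p (fr ω + L) m (G (fr ω)) ω) =
      fun ω => ∑ i ∈ Finset.range m, g i (fr ω) ω := by
    funext ω
    simp only [hg]
    rw [Finset.sum_range_sub' (fun i => Av E.p (fr ω + L) i (G (fr ω)) ω), Av_zero]
  have e : PP E.p t (fun ω : St a b => ∑ i ∈ Finset.range m, g i (fr ω) ω) =
      fun ω => ∑ i ∈ Finset.range m, PP E.p t (fun ω => g i (fr ω) ω) ω := by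
    funext ω; rw [PP_sum]
  rw [htel, e, Av_sum]
  refine (Finset.abs_sum_le_sum_abs _ _).trans ?_
  have hterm : ∀ i ∈ Finset.range m,
      |Av E.p 0 n (fun ω => PP E.p t (fun ω => g i (fr ω) ω) ω) (om0 : St a b)| ≤
      K * Real.exp (-ε * (L + i + 1 : ℕ)) := by
    intro i _
    refine le_trans (hC a b n (L + i + 1) t (g i) ha hb (by omega) ht hCa hCn ?_ ?_ ?_) (hBK _)
    · intro z x hx
      have h1 : Ind x (Av E.p (z + L) i (G z)) := by
        by_cases h : x ≤ z + L
        · exact (hG z x h).av _ _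
        · exact Av_ind (by omega) (by push_cast at hx; omega) _
      intro ω c
      simp only [hg]
      rw [Av_succ, h1 ω c, h1.exn _ ω c]
    · intro z
      funext ω
      have e1 : z + ((L + i + 1 : ℕ) : ℤ) = z + L + i + 1 := by push_cast; ring
      simp only [hg]
      rw [e1, Ex_sub, Av_succ, (Ex_ind E.p (z + L + i + 1) (Av E.p (z + L) i (G z))).ex]
      ring
    · intro z ω
      have h1 := abs_le.1 (Av_abs hp0 hp1 (y := z + L) (n := i) (ω := ω) (hG1 z))
      have h2 := abs_le.1 (Av_abs hp0 hp1 (y := z + L) (n := i + 1) (ω := ω) (hG1 z))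
      simp only [hg]
      rw [abs_le]; constructor <;> linarith
  refine (Finset.sum_le_sum hterm).trans ?_
  rw [← Finset.mul_sum, mul_assoc]
  exact mul_le_mul_of_nonneg_left (tail_sum hε L m) hK

end
end EP
end

open MeasureTheory ProbabilityTheory Filter Topology
noncomputable section
namespace EP
set_option linter.unusedVariables false

section
variable (E : EastProcess)

/-- the semigroup acting on functions -/
def Pt (t : ℝ) (f : Config → ℝ) (ω : Config) : ℝ := ∫ η, f η ∂(E.P t ω)

lemma cont_bdd {f : Config → ℝ} (hf : Continuous f) : ∃ c, 0 ≤ c ∧ ∀ η, |f η| ≤ c := by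
  obtain ⟨c, hc⟩ := (isCompact_univ (X := Config)).exists_bound_of_continuousOn hf.continuousOn
  exact ⟨max c 0, le_max_right _ _, fun η => (hc η trivial).trans (le_max_left _ _)⟩

lemma cont_int {f : Config → ℝ} (hf : Continuous f) (m : Measure Config) [IsFiniteMeasure m] :
    Integrable f m := by
  obtain ⟨c, _, hc⟩ := cont_bdd hf
  exact Integrable.of_bound hf.measurable.aestronglyMeasurable c (ae_of_all _ hc)

lemma Pt_abs {f : Config → ℝ} {c : ℝ} (hc : ∀ η, |f η| ≤ c) (t : ℝ) (ω : Config) : |Pt E t f ω| ≤ c := by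
  have := E.markov t
  have h := norm_integral_le_of_norm_le_const (μ := E.P t ω) (f := f) (C := c) (ae_of_all _ hc)
  unfold Pt
  simpa using h

lemma Pt_meas {f : Config → ℝ} (hf : Continuous f) (t : ℝ) : Measurable (Pt E t f) := by
  have := E.markov t
  exact (StronglyMeasurable.integral_kernel (κ := E.P t) hf.measurable.stronglyMeasurable).measurable

lemma Pt_semigroup {f : Config → ℝ} (hf : Continuous f) {s u : ℝ} (hs : 0 ≤ s) (hu : 0 ≤ u)
    (ω : Config) : Pt E (s + u) f ω = ∫ η, Pt E u f η ∂(E.P s ω) := by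
  have := E.markov s
  have := E.markov u
  have := E.markov (s + u)
  unfold Pt
  rw [E.semigroup u s hu hs, Kernel.integral_comp]
  rw [← E.semigroup u s hu hs]
  exact cont_int hf _

/-- resolvent -/
def Rs (h : Config → ℝ) (ω : Config) : ℝ := ∫ u in Set.Ioi (0:ℝ), Real.exp (-u) * Pt E u h ω

lemma exp_int : IntegrableOn (fun u : ℝ => Real.exp (-u)) (Set.Ioi 0) := integrableOn_exp_neg_Ioi 0

lemma Rs_cont {h : Config → ℝ} (hh : Continuous h) : Continuous (Rs E h) := by
  obtain ⟨c, hc0, hc⟩ := cont_bdd hh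
  unfold Rs
  refine continuous_of_dominated (bound := fun u => Real.exp (-u) * c) ?_ ?_ ?_ ?_
  · intro ω
    have := E.timeCont h hh ω
    exact (Continuous.mul (by fun_prop) this).aestronglyMeasurable
  · intro ω
    refine ae_of_all _ fun u => ?_
    rw [norm_mul, Real.norm_of_nonneg (Real.exp_pos _).le]
    exact mul_le_mul_of_nonneg_left (Pt_abs E hc u ω) (Real.exp_pos _).le
  · exact exp_int.mul_const c
  · refine (ae_restrict_iff' measurableSet_Ioi).2 (ae_of_all _ fun u hu => ?_)
    exact continuous_const.mul (E.feller u (le_of_lt hu) h hh)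

lemma Pt_Rs {h : Config → ℝ} (hh : Continuous h) {s : ℝ} (hs : 0 ≤ s) (ω : Config) :
    Pt E s (Rs E h) ω = Real.exp s * (Rs E h ω - ∫ u in (0:ℝ)..s, Real.exp (-u) * Pt E u h ω) := by
  obtain ⟨c, hc0, hc⟩ := cont_bdd hh
  have := E.markov s
  have hcont : ∀ ω, Continuous fun u : ℝ => Real.exp (-u) * Pt E u h ω := fun ω =>
    Continuous.mul (by fun_prop) (E.timeCont h hh ω)
  have hio : ∀ ω, ∀ s : ℝ, IntegrableOn (fun u : ℝ => Real.exp (-u) * Pt E u h ω) (Set.Ioi s) := by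
    intro ω s
    refine Integrable.mono' ((integrableOn_exp_neg_Ioi s).mul_const c) (hcont ω).aestronglyMeasurable ?_
    refine ae_of_all _ fun u => ?_
    rw [norm_mul, Real.norm_of_nonneg (Real.exp_pos _).le]
    exact mul_le_mul_of_nonneg_left (Pt_abs E hc u ω) (Real.exp_pos _).le
  have h1 : Pt E s (Rs E h) ω = ∫ u in Set.Ioi (0:ℝ), ∫ η, Real.exp (-u) * Pt E u h η ∂(E.P s ω) := by
    show ∫ η, (∫ u in Set.Ioi (0:ℝ), Real.exp (-u) * Pt E u h η) ∂(E.P s ω) = _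
    rw [integral_integral_swap]
    have hm : Measurable (Function.uncurry fun (u : ℝ) (η : Config) => Real.exp (-u) * Pt E u h η) :=
      measurable_uncurry_of_continuous_of_measurable hcont fun u => (Pt_meas E hh u).const_mul _
    have hm2 : Measurable (Function.uncurry fun (η : Config) (u : ℝ) => Real.exp (-u) * Pt E u h η) :=
      hm.comp measurable_swap
    have hd : Integrable (fun x : Config × ℝ => (1:ℝ) * (Real.exp (-x.2) * c))
        ((E.P s ω).prod (volume.restrict (Set.Ioi (0:ℝ)))) :=
      (integrable_const (1:ℝ)).mul_prod (exp_int.mul_const c)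
    refine Integrable.mono' hd hm2.aestronglyMeasurable (ae_of_all _ fun x => ?_)
    rw [one_mul, Function.uncurry, norm_mul, Real.norm_of_nonneg (Real.exp_pos _).le]
    exact mul_le_mul_of_nonneg_left (Pt_abs E hc _ _) (Real.exp_pos _).le
  have h2 : Pt E s (Rs E h) ω = ∫ u in Set.Ioi (0:ℝ), Real.exp s * (Real.exp (-(u + s)) * Pt E (u + s) h ω) := by
    rw [h1]
    refine setIntegral_congr_fun measurableSet_Ioi fun u hu => ?_
    show ∫ η, Real.exp (-u) * Pt E u h η ∂(E.P s ω) = _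
    rw [integral_const_mul, ← Pt_semigroup E hh hs (le_of_lt hu), add_comm s u, ← mul_assoc,
      ← Real.exp_add]
    congr 2; ring
  rw [h2, integral_const_mul]
  congr 1
  have h3 : ∫ u in Set.Ioi (0:ℝ), (Real.exp (-(u + s)) * Pt E (u + s) h ω) = ∫ u in Set.Ioi s, Real.exp (-u) * Pt E u h ω := by
    have := (measurePreserving_add_right volume s).setIntegral_preimage_emb
      (measurableEmbedding_addRight s) (fun u => Real.exp (-u) * Pt E u h ω) (Set.Ioi s)
    rw [← this]
    simp
  rw [h3]
  have h4 := intervalIntegral.integral_interval_add_Ioi (hio ω 0) (hio ω s)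
  unfold Rs; linarith

lemma deriv_k {h : Config → ℝ} (hh : Continuous h) (g0 : ℝ) (ω : Config) (s : ℝ) :
    HasDerivAt (fun s => Real.exp s * (g0 - ∫ u in (0:ℝ)..s, Real.exp (-u) * Pt E u h ω))
      (Real.exp s * (g0 - ∫ u in (0:ℝ)..s, Real.exp (-u) * Pt E u h ω) - Pt E s h ω) s := by
  have hcont : Continuous fun u : ℝ => Real.exp (-u) * Pt E u h ω :=
    Continuous.mul (by fun_prop) (E.timeCont h hh ω)
  have h1 := hcont.integral_hasStrictDerivAt 0 s
  have h2 := (Real.hasDerivAt_exp s).mul ((hasDerivAt_const s g0).sub h1.hasDerivAt)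
  refine h2.congr_deriv ?_
  rw [zero_sub, mul_neg, ← mul_assoc, ← Real.exp_add, add_neg_cancel, Real.exp_zero, one_mul]
  simp only [Pi.sub_apply]; ring

lemma Pt_zero {f : Config → ℝ} (ω : Config) (hf : Continuous f) : Pt E 0 f ω = f ω := by
  unfold Pt; rw [E.P0, Kernel.id_apply, integral_dirac]

lemma max_neg {w : Config → ℝ} (hw : Continuous w)
    (hd : ∀ ω, HasDerivWithinAt (fun s => Pt E s w ω) (w ω) (Set.Ici 0) 0) : ∀ ω, w ω ≤ 0 := by
  obtain ⟨ω, _, hmax⟩ := (isCompact_univ (X := Config)).exists_isMaxOn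
    ⟨fun _ => true, trivial⟩ hw.continuousOn
  have hm : ∀ η, w η ≤ w ω := fun η => hmax trivial
  have hle : ∀ s, Pt E s w ω ≤ w ω := by
    intro s
    have := E.markov s
    have h1 := integral_mono (cont_int hw (E.P s ω)) (integrable_const (w ω)) hm
    unfold Pt
    simpa using h1
  have h2 : w ω ≤ 0 := by
    have h3 := (hasDerivWithinAt_iff_tendsto_slope.1 (hd ω))
    rw [Set.Ici_sdiff_left] at h3
    refine le_of_tendsto h3 ?_
    filter_upwards [self_mem_nhdsWithin] with s hs
    have hs0 : 0 < s := hs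
    rw [slope_def_field, Pt_zero E ω hw, sub_zero]
    exact div_nonpos_of_nonpos_of_nonneg (by linarith [hle s]) hs0.le
  exact fun η => (hm η).trans h2

lemma Pt_deriv {f : Config → ℝ} (hf : Continuous f) (hcyl : IsCylinder f)
    (hL : Continuous (eastGen E.p f)) {t : ℝ} (ht : 0 ≤ t) (ω : Config) :
    HasDerivWithinAt (fun s => Pt E s f ω) (Pt E t (eastGen E.p f) ω) (Set.Ici 0) t := by
  set h : Config → ℝ := fun η => f η - eastGen E.p f η with hh
  have hhc : Continuous h := hf.sub hL
  have hR := Rs_cont E hhc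
  have hdR : ∀ ω, ∀ t, 0 ≤ t → HasDerivWithinAt (fun s => Pt E s (Rs E h) ω)
      (Pt E t (Rs E h) ω - Pt E t h ω) (Set.Ici 0) t := by
    intro ω t ht
    have h1 := (deriv_k E hhc (Rs E h ω) ω t).hasDerivWithinAt (s := Set.Ici 0)
    rw [← Pt_Rs E hhc ht] at h1
    exact h1.congr (fun s hs => Pt_Rs E hhc hs ω) (Pt_Rs E hhc ht ω)
  have hsubP : ∀ f g : Config → ℝ, Continuous f → Continuous g → ∀ s ω,
      Pt E s (fun η => f η - g η) ω = Pt E s f ω - Pt E s g ω := by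
    intro f g hf hg s ω
    have := E.markov s
    exact integral_sub (cont_int hf _) (cont_int hg _)
  have hdf : ∀ ω, HasDerivWithinAt (fun s => Pt E s f ω) (eastGen E.p f ω) (Set.Ici 0) 0 :=
    fun ω => E.generator f hcyl ω
  have hA : ∀ ω, f ω - Rs E h ω ≤ 0 := by
    refine max_neg E (hf.sub hR) fun ω => ?_
    have h1 := (hdf ω).sub (hdR ω 0 le_rfl)
    rw [Pt_zero E ω hR, Pt_zero E ω hhc] at h1
    refine (h1.congr (fun s _ => hsubP _ _ hf hR s ω) (hsubP _ _ hf hR 0 ω)).congr_deriv ?_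
    simp only [hh]; ring
  have hB : ∀ ω, Rs E h ω - f ω ≤ 0 := by
    refine max_neg E (hR.sub hf) fun ω => ?_
    have h1 := (hdR ω 0 le_rfl).sub (hdf ω)
    rw [Pt_zero E ω hR, Pt_zero E ω hhc] at h1
    refine (h1.congr (fun s _ => hsubP _ _ hR hf s ω) (hsubP _ _ hR hf 0 ω)).congr_deriv ?_
    simp only [hh]; ring
  have heq : Rs E h = f := by funext ω; linarith [hA ω, hB ω]
  have h2 := hdR ω t ht
  rw [heq] at h2
  refine h2.congr_deriv ?_
  have h3 := hsubP f (eastGen E.p f) hf hL t ω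
  simp only [hh]; rw [h3]; ring
end
end EP
end

open MeasureTheory ProbabilityTheory Filter Topology
noncomputable section
namespace EP
set_option linter.unusedVariables false
variable {a b : ℤ}

/-- restriction to the window -/
def rs (η : Config) : St a b := fun i => η i.1

lemma rs_cont : Continuous (rs : Config → St a b) :=
  continuous_pi fun i => continuous_apply _

lemma rs_comp_cont (H : St a b → ℝ) : Continuous fun η => H (rs η) :=
  (continuous_of_discreteTopology (f := H)).comp rs_cont

lemma rs_dep (H : St a b → ℝ) : DependsOnF (fun η => H (rs η)) ↑(Finset.Icc a b) := by
  intro ω ω' h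
  have : (rs ω : St a b) = rs ω' := by
    funext i; exact h i.1 (by exact_mod_cast i.2)
  simp only [this]

lemma rd_rs {x : ℤ} (h : x ∈ Finset.Icc a b) (η : Config) : rd (rs η : St a b) x = η x := by
  unfold rd rs; rw [dif_pos h]

lemma rs_update (x : ℤ) (c : Bool) (η : Config) :
    (rs (Function.update η x c) : St a b) = upd x c (rs η) := by
  funext i
  simp only [rs, upd]
  by_cases hi : i.1 = x
  · simp [hi]
  · simp [hi]

/-- infinite volume generator on window functions -/
def Ge (p : ℝ) (H : St a b → ℝ) (η : Config) : ℝ :=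
  ∑ x ∈ Finset.Icc a b, ci x η * (Ex p x H (rs η) - H (rs η))

lemma eastGen_rs (p : ℝ) (H : St a b → ℝ) : eastGen p (fun η => H (rs η)) = Ge p H := by
  funext η
  rw [eastGen_eq (rs_dep H) η]
  refine Finset.sum_congr rfl fun x _ => ?_
  simp only [Ec, Ex, rs_update]

lemma ci_cont (x : ℤ) : Continuous (ci x) := by
  have : Continuous fun c : Bool => if c = false then (1:ℝ) else 0 := continuous_of_discreteTopology
  exact this.comp (continuous_apply (x + 1))

lemma Ge_cont (p : ℝ) (H : St a b → ℝ) : Continuous (Ge p H) := by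
  unfold Ge
  refine continuous_finsetSum _ fun x _ => (ci_cont x).mul ?_
  exact rs_comp_cont (fun σ => Ex p x H σ - H σ)

lemma Pt_deriv_rs (E : EastProcess) (H : St a b → ℝ) {t : ℝ} (ht : 0 ≤ t) (ω : Config) :
    HasDerivWithinAt (fun s => Pt E s (fun η => H (rs η)) ω) (Pt E t (Ge E.p H) ω) (Set.Ici 0) t := by
  have := Pt_deriv E (rs_comp_cont H) ⟨_, rs_dep H⟩ (by rw [eastGen_rs]; exact Ge_cont _ _) ht ω
  rwa [eastGen_rs] at this

lemma Pt_lin (E : EastProcess) {ι : Type*} (I : Finset ι) (c : ι → ℝ) (f : ι → Config → ℝ)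
    (hf : ∀ i, Continuous (f i)) (t : ℝ) (ω : Config) :
    Pt E t (fun η => ∑ i ∈ I, c i * f i η) ω = ∑ i ∈ I, c i * Pt E t (f i) ω := by
  have := E.markov t
  unfold Pt
  rw [integral_finsetSum _ fun i _ => (cont_int (hf i) _).const_mul _]
  simp only [integral_const_mul]

open Classical in
/-- point indicator -/
def pi1 (σ τ : St a b) : ℝ := if τ = σ then 1 else 0

lemma sum_pi1 (H : St a b → ℝ) (τ : St a b) : ∑ σ, H σ * pi1 σ τ = H τ := by
  classical
  simp [pi1]

lemma Ge_sum (p : ℝ) (H : St a b → ℝ) (η : Config) : ∑ σ, H σ * Ge p (pi1 σ) η = Ge p H η := by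
  unfold Ge
  simp only [Finset.mul_sum]
  rw [Finset.sum_comm]
  refine Finset.sum_congr rfl fun x _ => ?_
  have h1 := sum_pi1 H (rs η)
  have h2 := sum_pi1 H (upd x true (rs η))
  have h3 := sum_pi1 H (upd x false (rs η))
  unfold Ex
  rw [← h1, ← h2, ← h3]
  simp only [Finset.mul_sum, ← Finset.sum_add_distrib, ← Finset.sum_sub_distrib]
  refine Finset.sum_congr rfl fun σ _ => ?_
  ring

lemma Ge_gen (p : ℝ) (hab : a ≤ b) (v : St a b → ℝ) (η : Config) :
    Ge p v η - gen p (fun _ => (0:ℝ)) v (rs η) = (ci b η - 1) * (Ex p b v (rs η) - v (rs η)) := by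
  rw [gen_apply]
  unfold Ge
  rw [zero_mul, sub_zero, ← Finset.sum_sub_distrib, Finset.sum_eq_single b]
  · have : cc b (rs η : St a b) = 1 := by
      unfold cc; rw [rd_right (by omega) (by omega)]; simp
    rw [this]; ring
  · intro x hx hxb
    have hx' := Finset.mem_Icc.1 hx
    have : cc x (rs η : St a b) = ci x η := by
      unfold cc ci; rw [rd_rs (Finset.mem_Icc.2 ⟨by omega, by omega⟩)]
    rw [this]; ring
  · intro h; exact absurd (Finset.mem_Icc.2 ⟨hab, le_rfl⟩) h

lemma approx (E : EastProcess) (hab : a ≤ b) {H : St a b → ℝ} {z : ℤ} (hH : ∀ x, z < x → Ind x H)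
    {c : ℝ} (hc : ∀ σ, |H σ| ≤ c) (j : ℕ) (hj : z + j = b) {t : ℝ} (ht : 0 ≤ t) (ω : Config) :
    |Pt E t (fun η => H (rs η)) ω - PP E.p t H (rs ω)| ≤ 2 * c * ((2 * t) ^ j / j.factorial) * t := by
  have hc0 : 0 ≤ c := (abs_nonneg _).trans (hc (rs ω))
  set φ : ℝ → ℝ := fun s => ∑ σ : St a b, PP E.p (t - s) H σ * Pt E s (fun η => pi1 σ (rs η)) ω with hφ
  have hφ' : ∀ s, 0 ≤ s → φ s = Pt E s (fun η => PP E.p (t - s) H (rs η)) ω := by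
    intro s hs
    simp only [hφ]
    rw [← Pt_lin E Finset.univ (fun σ => PP E.p (t - s) H σ) (fun σ η => pi1 σ (rs η))
      (fun σ => rs_comp_cont _)]
    simp only [sum_pi1]
  have hd : ∀ s ∈ Set.Icc 0 t, HasDerivWithinAt φ
      (Pt E s (fun η => (ci b η - 1) * (Ex E.p b (PP E.p (t - s) H) (rs η) - PP E.p (t - s) H (rs η))) ω)
      (Set.Icc 0 t) s := by
    intro s hs
    have h1 : ∀ σ : St a b, HasDerivWithinAt (fun s => PP E.p (t - s) H σ * Pt E s (fun η => pi1 σ (rs η)) ω)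
        ((gen E.p (fun _ => (0:ℝ)) (PP E.p (t - s) H) σ * (-1)) * Pt E s (fun η => pi1 σ (rs η)) ω +
          PP E.p (t - s) H σ * Pt E s (Ge E.p (pi1 σ)) ω) (Set.Icc 0 t) s := by
      intro σ
      have e1 := sg_hasDerivAt (gen E.p (fun _ : St a b => (0:ℝ))) (t - s) H σ
      have e2 : HasDerivAt (fun s : ℝ => t - s) (-1) s := by
        simpa using (hasDerivAt_id s).const_sub t
      have e3 := (e1.comp s e2).hasDerivWithinAt (s := Set.Icc 0 t)
      have e4 := (Pt_deriv_rs E (pi1 σ) hs.1 ω).mono (fun u (hu : u ∈ Set.Icc 0 t) => hu.1)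
      exact e3.mul e4
    have h2 := HasDerivWithinAt.fun_sum (u := Finset.univ) fun σ _ => h1 σ
    refine h2.congr_deriv ?_
    simp only [← Ge_gen E.p hab]
    have := E.markov s
    have h3 : Pt E s (fun η => Ge E.p (PP E.p (t - s) H) η - gen E.p (fun _ => (0:ℝ)) (PP E.p (t - s) H) (rs η)) ω
        = Pt E s (Ge E.p (PP E.p (t - s) H)) ω - Pt E s (fun η => gen E.p (fun _ => (0:ℝ)) (PP E.p (t - s) H) (rs η)) ω :=
      integral_sub (cont_int (Ge_cont _ _) _) (cont_int (rs_comp_cont _) _)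
    rw [h3, Finset.sum_add_distrib]
    have h4 := Pt_lin E Finset.univ (fun σ => PP E.p (t - s) H σ) (fun σ η => Ge E.p (pi1 σ) η)
      (fun σ => Ge_cont _ _) s ω
    simp only [Ge_sum] at h4
    have h5 := Pt_lin E Finset.univ (fun σ => gen E.p (fun _ => (0:ℝ)) (PP E.p (t - s) H) σ) (fun σ η => pi1 σ (rs η))
      (fun σ => rs_comp_cont _) s ω
    simp only [sum_pi1] at h5
    have h6 : Pt E s (Ge E.p (PP E.p (t - s) H)) ω = _ := h4
    rw [h6, h5, ← Finset.sum_add_distrib, ← Finset.sum_sub_distrib]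
    refine Finset.sum_congr rfl fun σ _ => ?_
    ring
  have hbd : ∀ s ∈ Set.Ico 0 t, ‖Pt E s (fun η => (ci b η - 1) * (Ex E.p b (PP E.p (t - s) H) (rs η) - PP E.p (t - s) H (rs η))) ω‖
      ≤ 2 * c * ((2 * t) ^ j / j.factorial) := by
    intro s hs
    refine Pt_abs E (fun η => ?_) s ω
    have h1 := finite_speed E.hp0.le E.hp1.le hH hc j (t - s) (by linarith [hs.2]) (rs η)
    rw [hj] at h1
    rw [abs_mul, abs_sub_comm (Ex _ _ _ _)]
    have h2 : |ci b η - 1| ≤ 1 := by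
      unfold ci; split_ifs <;> norm_num
    have h3 : 2 * c * ((2 * (t - s)) ^ j / j.factorial) ≤ 2 * c * ((2 * t) ^ j / j.factorial) := by
      have : 0 ≤ t - s := by linarith [hs.2]
      have : t - s ≤ t := by linarith [hs.1]
      gcongr
    calc _ ≤ 1 * |PP E.p (t - s) H (rs η) - Ex E.p b (PP E.p (t - s) H) (rs η)| := by gcongr
      _ ≤ _ := by rw [one_mul]; exact h1.trans h3
  have hfin := norm_image_sub_le_of_norm_deriv_le_segment' hd hbd t (Set.right_mem_Icc.2 ht)
  rw [hφ' t ht, hφ' 0 le_rfl, sub_self, sub_zero,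
    Pt_zero E ω (rs_comp_cont _)] at hfin
  have h0 : PP E.p 0 H = H := sg_zero _ _
  rw [h0] at hfin
  exact hfin

end EP
end

open MeasureTheory ProbabilityTheory Filter Topology
noncomputable section
namespace EP
set_option linter.unusedVariables false
variable {a b : ℤ}

/-- view from `z + L` -/
def tp (z L : ℤ) (η : Config) : Config := fun x =>
  if x < 0 then true else if x = 0 then false else η (z + L + x)

lemma tp_meas (z L : ℤ) : Measurable (tp z L) := by
  rw [measurable_pi_iff]
  intro x
  unfold tp
  split_ifs
  · exact measurable_const
  · exact measurable_const
  · exact measurable_pi_apply _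

lemma LO_iff (η : Config) : η ∈ LO ↔ ∃ z, η z = false ∧ ∀ x < z, η x = true := by
  constructor
  · intro h; exact ⟨_, front_spec h⟩
  · rintro ⟨z, h1, h2⟩; exact ⟨⟨z, h2⟩, z, h1⟩

lemma front_set_meas (z : ℤ) : MeasurableSet {η : Config | η z = false ∧ ∀ x < z, η x = true} := by
  have : {η : Config | η z = false ∧ ∀ x < z, η x = true} =
      ((fun η : Config => η z) ⁻¹' {false}) ∩ ⋂ x : ℤ, ⋂ (_ : x < z), (fun η : Config => η x) ⁻¹' {true} := by
    ext η; simp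
  rw [this]
  exact (measurable_pi_apply z (measurableSet_singleton _)).inter
    (MeasurableSet.iInter fun x => MeasurableSet.iInter fun _ =>
      measurable_pi_apply x (measurableSet_singleton _))

lemma LO_meas : MeasurableSet LO := by
  have : LO = ⋃ z, {η : Config | η z = false ∧ ∀ x < z, η x = true} := by
    ext η; rw [LO_iff]; simp
  rw [this]
  exact MeasurableSet.iUnion front_set_meas

lemma front_not {η : Config} (h : η ∉ LO) : front η = 0 := by
  unfold front
  by_cases hb : BddBelow {x : ℤ | η x = false}
  · have : {x : ℤ | η x = false} = ∅ := by
      by_contra hne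
      obtain ⟨x, hx⟩ := Set.nonempty_iff_ne_empty.2 hne
      obtain ⟨y, hy⟩ := hb
      refine h ⟨⟨y, fun x hx => ?_⟩, x, hx⟩
      by_contra hc
      have : y ≤ x := hy (by simpa using hc)
      omega
    rw [this]; exact Int.csInf_empty
  · exact Int.csInf_of_not_bddBelow hb

lemma front_meas : Measurable front := by
  refine measurable_to_countable' fun z => ?_
  have : front ⁻¹' {z} = {η : Config | η z = false ∧ ∀ x < z, η x = true} ∪ {η | η ∉ LO ∧ 0 = z} := by
    ext η
    simp only [Set.mem_preimage, Set.mem_singleton_iff, Set.mem_union, Set.mem_ofPred_eq]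
    by_cases h : η ∈ LO
    · constructor
      · rintro rfl; exact Or.inl (front_spec h)
      · rintro (h1 | h1)
        · exact front_unique h1.1 h1.2
        · exact absurd h h1.1
    · rw [front_not h]
      constructor
      · intro hz; exact Or.inr ⟨h, hz⟩
      · rintro (h1 | h1)
        · exact absurd ((LO_iff η).2 ⟨z, h1⟩) h
        · exact h1.2
  rw [this]
  refine (front_set_meas z).union ?_
  by_cases hz : 0 = z
  · simp only [hz, and_true]; exact LO_meas.compl
  · simp [hz]

lemma θL_meas (L : ℤ) : Measurable (θL L) := by
  have h : Measurable fun q : ℤ × Config => tp q.1 L q.2 :=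
    measurable_from_prod_countable_right fun z => tp_meas z L
  exact h.comp (front_meas.prodMk measurable_id)

section
variable (E : EastProcess) {μt : Measure Config} (hμt : IsMuTilde E.p μt)
include hμt

lemma map_tp (z L : ℤ) : E.μ.map (tp z L) = μt := by
  have := E.μprob
  have := Measure.isProbabilityMeasure_map (μ := E.μ) (tp_meas z L).aemeasurable
  refine cyl_ext fun S σ => ?_
  rw [Measure.map_apply (tp_meas z L) (cyl_meas S σ)]
  show _ = μt {ω : Config | ∀ x ∈ S, ω x = σ x}
  rw [hμt.2 S σ]
  by_cases hbad : ∃ x ∈ S, x ≤ 0 ∧ σ x ≠ decide (x < 0)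
  · obtain ⟨x, hxS, hx0, hx⟩ := hbad
    rw [Finset.prod_eq_zero hxS]
    · have : tp z L ⁻¹' cyl S σ = ∅ := by
        ext η
        simp only [Set.mem_preimage, Set.mem_empty_iff_false, iff_false]
        intro h
        have := h x hxS
        unfold tp at this
        apply hx
        rw [← this]
        by_cases h1 : x < 0
        · simp [h1]
        · have : x = 0 := by omega
          simp [this]
      rw [this]; simp
    · by_cases h1 : x < 0
      · simp [h1] at hx; simp [h1, hx]
      · have : x = 0 := by omega
        subst this
        simp at hx; simp [hx]
  · push Not at hbad
    have hset : tp z L ⁻¹' cyl S σ =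
        {η : Config | ∀ y ∈ (S.filter (0 < ·)).map (addLeftEmbedding (z + L)), η y = σ (y - (z + L))} := by
      ext η
      simp only [Set.mem_preimage, cyl, Set.mem_ofPred_eq, Finset.mem_map, Finset.mem_filter,
        addLeftEmbedding_apply, forall_exists_index, and_imp]
      constructor
      · rintro h y x hx hx0 rfl
        have := h x hx
        unfold tp at this
        rw [if_neg (by omega), if_neg (by omega)] at this
        rw [this]; congr 1; ring
      · intro h x hx
        unfold tp
        by_cases h1 : x < 0
        · rw [if_pos h1, hbad x hx h1.le]; simp [h1]
        · by_cases h2 : x = 0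
          · rw [if_neg h1, if_pos h2, hbad x hx h2.le]; simp [h2]
          · rw [if_neg h1, if_neg h2, h _ x hx (by omega) rfl]; congr 1; ring
    rw [hset, E.μprod, Finset.prod_map, Finset.prod_filter]
    refine Finset.prod_congr rfl fun x hx => ?_
    by_cases h1 : x < 0
    · have := hbad x hx h1.le
      rw [if_neg (by omega), this]; simp [h1]
    · by_cases h2 : x = 0
      · have := hbad x hx h2.le
        subst h2
        rw [this]; simp
      · rw [if_pos (by omega), if_neg h1, if_neg h2]
        simp

lemma mu_ae : ∀ᵐ η ∂μt, ∀ x : ℤ, x ≤ 0 → η x = decide (x ≠ 0) := by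
  have := hμt.1
  rw [ae_all_iff]
  intro x
  by_cases hx : x ≤ 0
  · have h1 := hμt.2 {x} (fun y => decide (y ≠ 0))
    have h2 : μt {ω : Config | ∀ y ∈ ({x} : Finset ℤ), ω y = decide (y ≠ 0)} = 1 := by
      rw [h1, Finset.prod_singleton]
      by_cases h0 : x = 0
      · simp [h0]
      · have : x < 0 := by omega
        simp [this, h0]
    have h3 := (mem_ae_iff_prob_eq_one (cyl_meas {x} (fun y => decide (y ≠ 0)))).2 h2
    filter_upwards [h3] with η hη _
    exact hη x (Finset.mem_singleton_self x)
  · exact ae_of_all _ fun η h => absurd h hx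

lemma mu_LO : ∀ᵐ η ∂μt, η ∈ LO := by
  filter_upwards [mu_ae E hμt] with η hη
  rw [LO_iff]
  refine ⟨0, by simpa using hη 0 le_rfl, fun x hx => ?_⟩
  rw [hη x hx.le]; simp; omega

lemma mu_av (ha : a ≤ 0) {n : ℕ} (hn : (n:ℤ) = b) (H : St a b → ℝ) :
    ∫ η, H (rs η) ∂μt = Av E.p 0 n H om0 := by
  have := hμt.1
  have h1 := int_ov (m := μt) (w := fun x c => if x < 0 then (if c then 1 else 0)
         else if x = 0 then (if c then 0 else 1)
         else (if c then E.p else 1 - E.p)) hμt.2 E.hp0.le E.hp1.le (y := 0)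
    (fun x hx => by simp only [if_neg (not_lt.2 hx.le), if_neg hx.ne']; simp) n H om0
  rw [← h1]
  refine integral_congr_ae ?_
  filter_upwards [mu_ae E hμt] with η hη
  have : (rs η : St a b) = ov 0 n om0 η := by
    funext i
    have := Finset.mem_Icc.1 i.2
    unfold rs ov om0
    split_ifs with h
    · rfl
    · exact hη _ (by omega)
  rw [this]

lemma nu_LO {t : ℝ} (ht : 0 ≤ t) : ∀ᵐ η ∂(μt.bind fun ω => E.P t ω), η ∈ LO := by
  rw [ae_iff]
  have h1 : {η | ¬ η ∈ LO} = LOᶜ := rfl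
  rw [h1, Measure.bind_apply LO_meas.compl (E.P t).measurable.aemeasurable, lintegral_eq_zero_iff
    ((E.P t).measurable_coe LO_meas.compl)]
  filter_upwards [mu_LO E hμt] with ω hω
  have := E.markov t
  exact (prob_compl_eq_zero_iff LO_meas).2 (E.loStable t ht ω hω)

lemma Av_tp {z L : ℤ} {M : ℕ} (h1 : a ≤ z + L + 1) (h2 : z + L + M ≤ b) {g : Config → ℝ}
    (hg : Measurable g) (hdep : DependsOnF g ↑(Finset.Icc (-(M:ℤ)) M)) (ω : St a b) :
    Av E.p (z + L) M (fun ω => g (tp z L (rd ω))) ω = ∫ η, g η ∂μt := by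
  have := E.μprob
  rw [← int_ov (m := E.μ) (w := fun x c => if c then E.p else 1 - E.p) E.μprod E.hp0.le E.hp1.le
    (fun x _ => by simp), ← map_tp E hμt z L, integral_map (tp_meas z L).aemeasurable hg.aestronglyMeasurable]
  refine integral_congr_ae (ae_of_all _ fun η => ?_)
  refine hdep _ _ fun x hx => ?_
  have hx' := Finset.mem_Icc.1 (Finset.mem_coe.1 hx)
  unfold tp
  split_ifs with h3 h4
  · rfl
  · rfl
  · unfold rd ov
    rw [dif_pos (Finset.mem_Icc.2 ⟨by omega, by omega⟩)]
    simp only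
    rw [if_pos ⟨by omega, by omega⟩]
end

end EP
end

open MeasureTheory ProbabilityTheory Filter Topology
noncomputable section
namespace EP
set_option linter.unusedVariables false
variable {a b : ℤ}

/-- truncation of a configuration to a window -/
def trk (k R : ℤ) (η : Config) : Config := fun x =>
  if x < -k then true else if x > R then false else η x

lemma trk_LO (k R : ℤ) (η : Config) : trk k R η ∈ LO := by
  refine ⟨⟨-k, fun x hx => ?_⟩, max (R + 1) (-k), ?_⟩
  · unfold trk; rw [if_pos hx]
  · unfold trk; rw [if_neg (by omega), if_pos (by omega)]

/-- truncated centred observable behind the front -/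
def psi (g : Config → ℝ) (L : ℤ) (α : ℝ) (k : ℤ) (η : Config) : ℝ :=
  if |front η| ≤ k then g (θL L η) - α else 0

lemma front_congr {η η' : Config} {R : ℤ} (h : η ∈ LO) (hR : front η ≤ R)
    (he : ∀ x ≤ R, η x = η' x) : front η' = front η := by
  have := front_spec h
  refine front_unique ?_ fun x hx => ?_
  · rw [← he _ hR]; exact this.1
  · rw [← he _ (by omega)]; exact this.2 x hx

lemma psi_congr {g : Config → ℝ} {M L : ℕ} (hdep : DependsOnF g ↑(Finset.Icc (-(M:ℤ)) M)) (α : ℝ)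
    {k : ℤ} {η η' : Config} (h : η ∈ LO) (h' : η' ∈ LO) (he : ∀ x ≤ k + L + M, η x = η' x) :
    psi g L α k η = psi g L α k η' := by
  by_cases hk : front η ≤ k
  · have hf := front_congr h hk fun x hx => he x (by omega)
    unfold psi
    rw [hf]
    split_ifs
    · congr 1
      refine hdep _ _ fun x hx => ?_
      have hx' := Finset.mem_Icc.1 (Finset.mem_coe.1 hx)
      unfold θL
      rw [hf, he _ (by omega)]
    · rfl
  · have hk' : ¬ front η' ≤ k := fun hk' => hk (by
      rw [front_congr h' hk' fun x hx => (he x (by omega)).symm]; exact hk')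
    unfold psi
    rw [if_neg, if_neg]
    · intro h; exact hk' ((le_abs_self _).trans h)
    · intro h; exact hk ((le_abs_self _).trans h)

lemma psi_bd {g : Config → ℝ} (hg : ∀ η, |g η| ≤ 1) {α : ℝ} (hα : |α| ≤ 1) (L k : ℤ) (η : Config) :
    |psi g L α k η| ≤ 2 := by
  unfold psi
  split_ifs
  · have := abs_sub (g (θL L η)) α
    linarith [hg (θL L η)]
  · norm_num

lemma psi_rs {g : Config → ℝ} {M L : ℕ} (hdep : DependsOnF g ↑(Finset.Icc (-(M:ℤ)) M)) (α : ℝ)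
    {k : ℕ} (hb : (k:ℤ) + L + M ≤ b) (η : Config) :
    psi g L α k (rd (rs η : St (-(k:ℤ)) b)) = psi g L α k (trk k (k + L + M) η) := by
  refine psi_congr hdep α (rd_LO (by omega) _) (trk_LO _ _ _) fun x hx => ?_
  unfold trk
  by_cases h : x < -k
  · rw [if_pos h, rd_left h]
  · rw [if_neg h, if_neg (by omega), rd_rs (Finset.mem_Icc.2 ⟨by omega, by omega⟩)]

lemma integral_bnd (E : EastProcess) (m : Measure Config) [IsProbabilityMeasure m] (t : ℝ)
    {f : Config → ℝ} (hf : Continuous f) :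
    ∫ η, f η ∂(m.bind fun ω => E.P t ω) = ∫ ω, Pt E t f ω ∂m := by
  have := E.markov t
  have h := Kernel.integral_comp (κ := Kernel.const Unit m) (η := E.P t) (a := ()) (f := f)
    (cont_int hf _)
  rw [Kernel.comp_apply, Kernel.const_apply] at h
  exact h

lemma bnd_prob (E : EastProcess) (m : Measure Config) [IsProbabilityMeasure m] (t : ℝ) :
    IsProbabilityMeasure (m.bind fun ω => E.P t ω) := by
  have := E.markov t
  have h : IsProbabilityMeasure ((E.P t ∘ₖ Kernel.const Unit m) ()) := inferInstance
  rw [Kernel.comp_apply, Kernel.const_apply] at h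
  exact h

lemma cyl_bound (E : EastProcess) (hgap : 0 < gap E) {μt : Measure Config} (hμt : IsMuTilde E.p μt) :
    ∃ ε > 0, ∃ K, 0 ≤ K ∧ ∀ t : ℝ, 0 ≤ t → ∀ (L M : ℕ) (g : Config → ℝ), Measurable g →
      DependsOnF g ↑(Finset.Icc (-(M:ℤ)) M) → (∀ η, |g η| ≤ 1) →
      |∫ η, g (θL L η) ∂(μt.bind fun ω => E.P t ω) - ∫ η, g η ∂μt| ≤ K * Real.exp (-ε * L) := by
  obtain ⟨ε, hε, K, hK, C, hfin⟩ := finite_thm E hgap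
  refine ⟨ε, hε, K, hK, fun t ht L M g hg hdep hg1 => ?_⟩
  have := hμt.1
  have hνp := bnd_prob E μt t
  set ν := μt.bind fun ω => E.P t ω with hν
  set α := ∫ η, g η ∂μt with hα
  have hα1 : |α| ≤ 1 := by
    have h := norm_integral_le_of_norm_le_const (μ := μt) (f := g) (C := 1) (ae_of_all _ hg1)
    simpa using h
  have hcont : ∀ k : ℕ, Continuous fun η => psi g L α k (trk k (k + L + M) η) := by
    intro k
    have h1 := rs_comp_cont (a := -(k:ℤ)) (b := k + L + M) fun σ => psi g L α k (rd σ)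
    have h2 : (fun η => psi g L α k (rd (rs η : St (-(k:ℤ)) (k + L + M)))) = fun η => psi g L α k (trk k (k + L + M) η) := by
      funext η; exact psi_rs hdep α le_rfl η
    rw [← h2]; exact h1
  have hk : ∀ k : ℕ, C * t ≤ k → |∫ η, psi g L α k (trk k (k + L + M) η) ∂ν| ≤ K * Real.exp (-ε * L) := by
    intro k hk
    rw [hν, integral_bnd E μt t (hcont k)]
    have hstep : ∀ j : ℕ, |∫ ω, Pt E t (fun η => psi g L α k (trk k (k + L + M) η)) ω ∂μt| ≤
        K * Real.exp (-ε * L) + 2 * 2 * ((2 * t) ^ j / j.factorial) * t := by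
      intro j
      obtain ⟨n, hn⟩ : ∃ n : ℕ, n = k + L + M + j := ⟨_, rfl⟩
      obtain ⟨b, hb⟩ : ∃ b : ℤ, (n : ℤ) = b := ⟨_, rfl⟩
      have hkb : (k:ℤ) + L + M ≤ b := by omega
      set H : St (-(k:ℤ)) b → ℝ := fun σ => psi g L α k (rd σ) with hH
      have hHrs : (fun η => psi g L α k (trk k (k + L + M) η)) = fun η => H (rs η) := by
        funext η; exact (psi_rs hdep α hkb η).symm
      have hHb : ∀ σ, |H σ| ≤ 2 := fun σ => psi_bd hg1 hα1 _ _ _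
      have hind : ∀ x, (k:ℤ) + L + M < x → Ind x H := by
        intro x hx σ c
        refine psi_congr hdep α (rd_LO (by omega) _) (rd_LO (by omega) _) fun y hy => ?_
        rw [rd_upd_ne (by omega)]
      have h1 : ∀ ω, |Pt E t (fun η => H (rs η)) ω - PP E.p t H (rs ω)| ≤ 2 * 2 * ((2 * t) ^ j / j.factorial) * t :=
        fun ω => approx E (by omega) hind hHb j (by omega) ht ω
      have h2 := mu_av E hμt (by omega : -(k:ℤ) ≤ 0) hb (PP E.p t H)
      have h3 := hfin (-(k:ℤ)) b n L M t
        (fun z ω => if |z| ≤ k then g (tp z L (rd ω)) else 0) (by omega) hb ht (by simpa using hk)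
        (hk.trans (by rw [hn]; push_cast; linarith [Nat.cast_nonneg (α := ℝ) L, Nat.cast_nonneg (α := ℝ) M, Nat.cast_nonneg (α := ℝ) j]))
        (by
          intro z x hx σ c
          simp only
          split_ifs
          · refine hdep _ _ fun y hy => ?_
            unfold tp
            split_ifs
            · rfl
            · rfl
            · rw [rd_upd_ne (by omega)]
          · rfl)
        (by
          intro z ω
          split_ifs
          · exact hg1 _
          · norm_num)
      have h4 : (fun ω : St (-(k:ℤ)) b => (if |fr ω| ≤ k then g (tp (fr ω) L (rd ω)) else 0) -
          Av E.p (fr ω + L) M (fun ω' => if |fr ω| ≤ k then g (tp (fr ω) L (rd ω')) else 0) ω) = H := by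
        funext ω
        simp only [hH]
        unfold psi
        by_cases hz : |fr ω| ≤ k
        · simp only [if_pos hz]
          have hz' := abs_le.1 hz
          rw [Av_tp E hμt (by omega) (by omega) hg hdep]
          rw [if_pos (show |front (rd ω)| ≤ k from hz)]
          rfl
        · simp only [if_neg hz]
          rw [Av_const, if_neg (show ¬ |front (rd ω)| ≤ k from hz), sub_zero]
      rw [h4, ← h2] at h3
      rw [hHrs]
      have i1 : Integrable (Pt E t fun η => H (rs η)) μt :=
        cont_int (E.feller t ht _ (rs_comp_cont H)) μt
      have i2 : Integrable (fun ω => PP E.p t H (rs ω)) μt := cont_int (rs_comp_cont _) μt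
      have h5 := norm_integral_le_of_norm_le_const (μ := μt)
        (f := fun ω => Pt E t (fun η => H (rs η)) ω - PP E.p t H (rs ω)) (ae_of_all _ h1)
      rw [integral_sub i1 i2] at h5
      simp only [probReal_univ, mul_one, Real.norm_eq_abs] at h5
      have := abs_sub_abs_le_abs_sub (∫ ω, Pt E t (fun η => H (rs η)) ω ∂μt) (∫ ω, PP E.p t H (rs ω) ∂μt)
      linarith
    have hlim : Tendsto (fun j : ℕ => K * Real.exp (-ε * L) + 2 * 2 * ((2 * t) ^ j / j.factorial) * t) atTop
        (𝓝 (K * Real.exp (-ε * L) + 2 * 2 * 0 * t)) :=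
      (((FloorSemiring.tendsto_pow_div_factorial_atTop (2 * t)).const_mul _).mul_const _).const_add _
    rw [mul_zero, zero_mul, add_zero] at hlim
    exact ge_of_tendsto' hlim hstep
  have hgm : Measurable fun η => g (θL L η) := hg.comp (θL_meas L)
  have hIntg : Integrable (fun η => g (θL L η)) ν :=
    Integrable.of_bound hgm.aestronglyMeasurable 1 (ae_of_all _ fun η => hg1 _)
  have hlim : Tendsto (fun k : ℕ => ∫ η, psi g L α k (trk k (k + L + M) η) ∂ν) atTop
      (𝓝 (∫ η, (g (θL L η) - α) ∂ν)) := by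
    refine tendsto_integral_of_dominated_convergence (fun _ => (2:ℝ))
      (fun k => (hcont k).measurable.aestronglyMeasurable) (integrable_const _)
      (fun k => ae_of_all _ fun η => psi_bd hg1 hα1 _ _ _) ?_
    filter_upwards [nu_LO E hμt ht] with η hη
    refine tendsto_const_nhds.congr' ?_
    obtain ⟨y, hy⟩ := hη.1
    filter_upwards [eventually_ge_atTop ((-y).toNat + (front η).natAbs)] with k hk
    have h1 : psi g L α k (trk k (k + L + M) η) = psi g L α k η := by
      refine psi_congr hdep α (trk_LO _ _ _) hη fun x hx => ?_
      unfold trk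
      by_cases h : x < -k
      · rw [if_pos h, hy x (by omega)]
      · rw [if_neg h, if_neg (by omega)]
    rw [h1]
    unfold psi
    rw [if_pos (abs_le.2 ⟨by omega, by omega⟩)]
  rw [integral_sub hIntg (integrable_const _)] at hlim
  simp only [integral_const, probReal_univ, one_smul] at hlim
  refine le_of_tendsto hlim.abs ?_
  filter_upwards [eventually_ge_atTop ⌈C * t⌉₊] with k hkk
  exact hk k ((Nat.le_ceil _).trans (by exact_mod_cast hkk))

lemma final (E : EastProcess) (hgap : 0 < gap E)
    (μt : Measure Config) (hμt : IsMuTilde E.p μt) :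
    ∃ ε K : ℝ, 0 < ε ∧
      ∀ t : ℝ, 0 < t → ∀ L₀ : ℕ, ∀ A : Set Config, MeasurableSet A →
        |(μt A).toReal -
            ((Measure.map (θL L₀) (μt.bind fun ω => E.P t ω)) A).toReal| ≤
          K * Real.exp (-ε * L₀) := by
  obtain ⟨ε, hε, K, hK, hb⟩ := cyl_bound E hgap hμt
  refine ⟨ε, K, hε, fun t ht L A hA => ?_⟩
  have := hμt.1
  have hνp := bnd_prob E μt t
  set ν := μt.bind fun ω => E.P t ω with hν
  have hm2 := Measure.isProbabilityMeasure_map (μ := ν) (θL_meas L).aemeasurable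
  set m2 := Measure.map (θL L) ν with hm
  -- cylinder sets
  have hcyl : ∀ B ∈ measurableCylinders (fun _ : ℤ => Bool), |μt.real B - m2.real B| ≤ K * Real.exp (-ε * L) := by
    intro B hB
    obtain ⟨S, T, hT, rfl⟩ := (mem_measurableCylinders _).1 hB
    have hBm : MeasurableSet (cylinder S T) := MeasurableSet.of_mem_measurableCylinders (α := fun _ : ℤ => Bool) hB
    obtain ⟨M, hM⟩ : ∃ M : ℕ, ∀ x ∈ S, x ∈ Finset.Icc (-(M:ℤ)) M := by
      refine ⟨S.sup Int.natAbs, fun x hx => ?_⟩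
      have := Finset.le_sup (f := Int.natAbs) hx
      rw [Finset.mem_Icc]; omega
    have h := hb t ht.le L M ((cylinder S T).indicator 1) (measurable_one.indicator hBm) (by
        intro ω ω' hω
        have : ω ∈ cylinder S T ↔ ω' ∈ cylinder S T := by
          rw [mem_cylinder, mem_cylinder]
          have : S.restrict ω = S.restrict ω' := by
            funext i; exact hω i.1 (Finset.mem_coe.2 (hM _ i.2))
          rw [this]
        by_cases hh : ω ∈ cylinder S T
        · rw [Set.indicator_of_mem hh, Set.indicator_of_mem (this.1 hh)]; rfl
        · rw [Set.indicator_of_notMem hh, Set.indicator_of_notMem (fun h => hh (this.2 h))])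
      (by
        intro η
        by_cases hη : η ∈ cylinder S T
        · simp [hη]
        · simp [hη])
    rw [integral_indicator_one hBm] at h
    have h2 : ∫ η, (cylinder S T).indicator (1 : Config → ℝ) (θL L η) ∂ν = m2.real (cylinder S T) := by
      rw [← integral_indicator_one hBm, hm, integral_map (θL_meas L).aemeasurable]
      exact (measurable_one.indicator hBm).aestronglyMeasurable
    rw [h2, abs_sub_comm] at h
    exact h
  have hdense : (μt + m2).MeasureDense (measurableCylinders (fun _ : ℤ => Bool)) :=
    Measure.MeasureDense.of_generateFrom_isSetAlgebra_finite _ isSetAlgebra_measurableCylinders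
      generateFrom_measurableCylinders.symm
  refine le_of_forall_pos_le_add fun δ hδ => ?_
  obtain ⟨B, hB, hAB⟩ := hdense.approx A hA (measure_ne_top _ _) (δ / 2) (by linarith)
  have hBm : MeasurableSet B := MeasurableSet.of_mem_measurableCylinders (α := fun _ : ℤ => Bool) hB
  have hreal : (μt + m2).real (symmDiff A B) < δ / 2 := by
    rw [Measure.real, ← ENNReal.toReal_ofReal (by linarith : 0 ≤ δ / 2)]
    exact (ENNReal.toReal_lt_toReal (measure_ne_top _ _) ENNReal.ofReal_ne_top).2 hAB
  rw [measureReal_add_apply] at hreal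
  have e1 : |μt.real A - μt.real B| ≤ μt.real (symmDiff A B) :=
    abs_measureReal_sub_le_measureReal_symmDiff hA.nullMeasurableSet hBm.nullMeasurableSet
  have e2 : |m2.real A - m2.real B| ≤ m2.real (symmDiff A B) :=
    abs_measureReal_sub_le_measureReal_symmDiff hA.nullMeasurableSet hBm.nullMeasurableSet
  have e3 := hcyl B hB
  show |μt.real A - m2.real A| ≤ _
  rw [abs_le] at *
  constructor <;> linarith [e1.1, e1.2, e2.1, e2.2, e3.1, e3.2]

end EP
end

/-- **Invariance of `μ̃` seen from the front up to exponentially small errors**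
(Theorem 4.6(2) of the paper): there are constants `ε > 0`, `K < ∞` depending only on `p`
such that for every `t > 0` and `L₀ ∈ ℕ`,
`‖μ̃ − ν^{μ̃}_{t,L₀}‖_TV ≤ K e^{-ε L₀}`, where `ν^{μ̃}_{t,L₀}` is the law of
`θ_{L₀} η` when the initial configuration is distributed according to `μ̃` and `η` according
to the time-`t` distribution (TV distance being expressed as a supremum over measurable
events). -/
theorem mutilde_almost_invariant (E : EastProcess) (hgap : 0 < gap E)
    (μt : Measure Config) (hμt : IsMuTilde E.p μt) :
    ∃ ε K : ℝ, 0 < ε ∧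
      ∀ t : ℝ, 0 < t → ∀ L₀ : ℕ, ∀ A : Set Config, MeasurableSet A →
        |(μt A).toReal -
            ((Measure.map (θL L₀) (μt.bind fun ω => E.P t ω)) A).toReal| ≤
          K * Real.exp (-ε * L₀) := by
  exact EP.final E hgap μt hμt

end
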